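/- Let t ∈ ℤ with t ≥ 89. If (x,y) ∈ ℤ × ℤ is a solution of |F_t^{(6)}(x,y)| ≤ 120t + 323 with gcd(x,y) = 1, y > 0 and −y/2 < x ≤ y, then (x,y) is one of (0,1), (1,1), (1,2), (−1,3). Moreover, if (x,y) is any solution of this inequality, then so is every pair in the orbit {(x,y), (−y,x+y), (−x−y,x), (−x,−y), (y,−x−y), (x+y,−x)}. -/

import Mathlib

/-!
Let `ω` be a primitive cube root of unity, `ξ = x - ω y` and `α = t + 3 + 3ω`. Then
`Im (α ξ⁶) = (3√3/2) F_t(x, y)` (`im_al_xi`), so a solution with `X² = x² + xy + y² = |ξ|²` large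
forces the argument of `α ξ⁶` to lie very close to a multiple of `π`. Multiplying `ξ` by a suitable
element of `ℤ[ω]` of norm `1` or `3` gives an Eisenstein integer `η` such that `η e^{iφ/6}`, with
`φ = arg α`, is very close to the real axis: its imaginary part is at most `83 |η| / X⁶`
(`Sol`, `exists_sol`). The reduced pairs with `X² < 13` are the four listed ones (`small_norm`), so
it suffices to show that no `Sol` exists (`no_sol`). The statement about orbits expresses the
invariance of `F_t` under `(x, y) ↦ (x + y, -x)`.

The tool is the hypergeometric method. The Padé polynomials `Q_r` of the binomial function of
exponent `1/6`, evaluated at `(α, ᾱ)`, give numbers `Q_r(α, ᾱ)` for which `Q_r(α, ᾱ) e^{iφ/6}` is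
again very close to the real axis; the remainder is controlled from both sides on the unit circle by
induction on `r`, through a formula for its derivative (`hasDerivAt_Sf`, `Tf_bounds`, `Tf_lower`).
Moreover `4^r Q_r(α, ᾱ)` is an Eisenstein integer divisible by an explicit integer `G r`, the product
over the primes `p ≥ 5` of `p` to the number of `j` with `⌊6r/p^j⌋ ≡ 5 (mod 6)` (`exists_P`). If `P`
denotes the quotient, then `Im (P η̄)` is either `0` or at least `√3/2` in absolute value, while both
`P` and `η` are nearly parallel to one line. This yields a gap principle (`pade_step`): `log X`
cannot lie in a certain interval attached to `r`. Consecutive intervals overlap, so a lower bound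
`lx t r g < log X` propagates from one index to the next one (`step_log`, `step_num`), and as
`lx t r g` is unbounded in `r`, no `Sol` exists.

* For `t ≥ 140` the intervals for `r = 0, 1, 2, …` already overlap with the trivial bound `G r ≥ 1`
  (`no_sol_large`).
* For `89 ≤ t < 140` the size of `G r` is needed. Explicit rational approximations to the largest
  root of the form take `log X` beyond the interval of `r = 145` (`Sol.lx_start`). An explicit
  sequence of indices, with lower bounds `2^e ≤ G r` checked by computation, leads to `r = 104688`
  (`Sol.lx_chain`). Beyond this point one steps from `r` to `r + 1`, using `log (G r) ≥ 0.2055 r`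
  (`log_G_ge`). That estimate is of Chebyshev type: the indicator of `m ≡ 5 (mod 6)` is bounded below
  by a combination of the functions `⌊m/d⌋`, `d ≤ 300`, up to steps that start at large `m`
  (`pointwise`), and the corresponding combination of `log ⌊6r/d⌋!` is evaluated by Stirling's
  formula.
-/

/-- The simplest sextic binary form
`F_t^{(6)}(x,y) = x^6 - 2t x^5 y - (5t+15) x^4 y^2 - 20 x^3 y^3 + 5t x^2 y^4 + (2t+6) x y^5 + y^6`. -/
def F6 {R : Type*} [CommRing R] (t : ℤ) (x y : R) : R :=
  x ^ 6 - 2 * (t : R) * x ^ 5 * y - (5 * (t : R) + 15) * x ^ 4 * y ^ 2 - 20 * x ^ 3 * y ^ 3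
    + 5 * (t : R) * x ^ 2 * y ^ 4 + (2 * (t : R) + 6) * x * y ^ 5 + y ^ 6

/-! ### Padé remainders on the unit circle -/

namespace Sextic

open Finset

/-- The coefficients of the Padé polynomials of order `r` for the exponent `1/6`. -/
noncomputable def cf (r k : ℕ) : ℝ :=
  Ring.choose ((r : ℝ) + 1 / 6) k * Ring.choose ((r : ℝ) - 1 / 6) (r - k)

lemma choose_succ_mul (x : ℝ) (k : ℕ) :
    ((k : ℝ) + 1) * Ring.choose x (k + 1) = (x - k) * Ring.choose x k := by
  have h := Ring.choose_smul_choose x (Nat.le_succ k)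
  have h1 : k.succ - k = 1 := by omega
  rw [h1, Ring.choose_one_right, nsmul_eq_mul] at h
  have h2 : (k.succ).choose k = k + 1 := by simp
  rw [h2] at h
  push_cast at h
  rw [Nat.succ_eq_add_one] at h
  rw [h]; ring

lemma choose_shift (x : ℝ) (k : ℕ) :
    (x + 1 - k) * Ring.choose (x + 1) k = (x + 1) * Ring.choose x k := by
  cases k with
  | zero => simp
  | succ k =>
    have h1 := Ring.choose_succ_succ x k
    have h2 := choose_succ_mul x k
    rw [h1]; push_cast
    linear_combination (-1 : ℝ) * h2

lemma choose_succ_succ_mul (x : ℝ) (k : ℕ) :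
    ((k : ℝ) + 1) * Ring.choose (x + 1) (k + 1) = (x + 1) * Ring.choose x k := by
  have h := choose_succ_mul (x + 1) k
  rw [h]; exact choose_shift x k

/-- Together with `cf_rec_right`, this relates the coefficients of orders `n` and `n + 1`. For
equal coefficients on the left, the two factors there differ by `n + 1` times the frequency
`n + 1 + 1/6 - 2k` occurring in `Sf (n + 1)`. -/
lemma cf_rec_left (n k : ℕ) (hk : k ≤ n) :
    ((n + 1 : ℝ) + 1 / 6 - k) * (n + 1 - k) * cf (n + 1) k
      = ((n + 1 : ℝ) ^ 2 - 1 / 36) * cf n k := by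
  unfold cf
  obtain ⟨m, rfl⟩ := Nat.exists_eq_add_of_le hk
  have e1 : k + m + 1 - k = m + 1 := by omega
  have e2 : k + m - k = m := by omega
  rw [e1, e2]
  have h1 := choose_shift (((k + m : ℕ) : ℝ) + 1 / 6) k
  have h2 := choose_succ_succ_mul (((k + m : ℕ) : ℝ) - 1 / 6) m
  push_cast at h1 h2 ⊢
  have a1 : (k + m + 1 / 6 + 1 : ℝ) = k + m + 1 + 1 / 6 := by ring
  have a2 : (k + m - 1 / 6 + 1 : ℝ) = k + m + 1 - 1 / 6 := by ring
  rw [a1] at h1; rw [a2] at h2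
  linear_combination (k + m + 1 - k : ℝ) * Ring.choose (k + m + 1 - 1 / 6 : ℝ) (m + 1) * h1
    + (k + m + 1 + 1 / 6 : ℝ) * Ring.choose (k + m + 1 / 6 : ℝ) k * h2

lemma cf_rec_right (n j : ℕ) (hj : j ≤ n) :
    ((j : ℝ) + 1) * (j + 1 - 1 / 6) * cf (n + 1) (j + 1)
      = ((n + 1 : ℝ) ^ 2 - 1 / 36) * cf n j := by
  unfold cf
  obtain ⟨m, rfl⟩ := Nat.exists_eq_add_of_le hj
  have e1 : j + m + 1 - (j + 1) = m := by omega
  have e2 : j + m - j = m := by omega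
  rw [e1, e2]
  have h1 := choose_succ_succ_mul (((j + m : ℕ) : ℝ) + 1 / 6) j
  have h2 := choose_shift (((j + m : ℕ) : ℝ) - 1 / 6) m
  push_cast at h1 h2 ⊢
  have a1 : (j + m + 1 / 6 + 1 : ℝ) = j + m + 1 + 1 / 6 := by ring
  have a2 : (j + m - 1 / 6 + 1 : ℝ) = j + m + 1 - 1 / 6 := by ring
  rw [a1] at h1; rw [a2] at h2
  linear_combination (j + 1 - 1 / 6 : ℝ) * Ring.choose (j + m + 1 - 1 / 6 : ℝ) m * h1
    + (j + m + 1 + 1 / 6 : ℝ) * Ring.choose (j + m + 1 / 6 : ℝ) j * h2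

/-- The Padé remainder on the unit circle: the imaginary part of
`e^{iφ/6} Q_r(e^{iφ}, e^{-iφ})`. -/
noncomputable def Sf (r : ℕ) (φ : ℝ) : ℝ :=
  ∑ k ∈ range (r + 1), cf r k * Real.sin (((r : ℝ) + 1 / 6 - 2 * k) * φ)

lemma Sf_zero_arg (r : ℕ) : Sf r 0 = 0 := by simp [Sf]

/-- The derivative of the remainder of order `n + 1` is a multiple of `sin φ` times the remainder of
order `n`; this makes estimates by induction on the order possible. -/
lemma hasDerivAt_Sf (n : ℕ) (φ : ℝ) :
    HasDerivAt (Sf (n + 1))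
      (-(2 * ((n + 1 : ℝ) ^ 2 - 1 / 36) / (n + 1) * Real.sin φ * Sf n φ)) φ := by
  have h1 : HasDerivAt (Sf (n + 1)) (∑ k ∈ range (n + 1 + 1), cf (n + 1) k *
      (Real.cos ((((n + 1 : ℕ) : ℝ) + 1 / 6 - 2 * k) * φ) *
        (((n + 1 : ℕ) : ℝ) + 1 / 6 - 2 * k))) φ := by
    have : Sf (n + 1) = fun x => ∑ k ∈ range (n + 1 + 1), cf (n + 1) k *
      Real.sin ((((n + 1 : ℕ) : ℝ) + 1 / 6 - 2 * k) * x) := rfl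
    rw [this]
    apply HasDerivAt.fun_sum
    intro k _
    apply HasDerivAt.const_mul
    apply HasDerivAt.sin
    simpa using (hasDerivAt_id φ).const_mul (((n + 1 : ℕ) : ℝ) + 1 / 6 - 2 * k)
  convert h1 using 1
  have hn : (n + 1 : ℝ) ≠ 0 := by positivity
  set C : ℕ → ℝ := fun k => Real.cos ((((n + 1 : ℕ) : ℝ) + 1 / 6 - 2 * k) * φ) with hC
  have key : (n + 1 : ℝ) * (∑ k ∈ range (n + 1 + 1), cf (n + 1) k *
      (C k * (((n + 1 : ℕ) : ℝ) + 1 / 6 - 2 * k)))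
      = ∑ k ∈ range (n + 1 + 1), ((n + 1 : ℝ) + 1 / 6 - k) * (n + 1 - k) * cf (n + 1) k * C k
        - ∑ k ∈ range (n + 1 + 1), (k : ℝ) * (k - 1 / 6) * cf (n + 1) k * C k := by
    rw [mul_sum, ← sum_sub_distrib]
    refine sum_congr rfl fun k _ => ?_
    push_cast; ring
  have s1 : ∑ k ∈ range (n + 1 + 1), ((n + 1 : ℝ) + 1 / 6 - k) * (n + 1 - k) * cf (n + 1) k * C k
      = ((n + 1 : ℝ) ^ 2 - 1 / 36) * ∑ k ∈ range (n + 1), cf n k * C k := by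
    rw [sum_range_succ]
    push_cast
    rw [mul_sum, sub_self]
    simp only [mul_zero, zero_mul, add_zero]
    refine sum_congr rfl fun k hk => ?_
    rw [cf_rec_left n k (by simpa [Nat.lt_succ_iff] using hk)]; ring
  have s2 : ∑ k ∈ range (n + 1 + 1), (k : ℝ) * (k - 1 / 6) * cf (n + 1) k * C k
      = ((n + 1 : ℝ) ^ 2 - 1 / 36) * ∑ k ∈ range (n + 1), cf n k * C (k + 1) := by
    rw [sum_range_succ']
    push_cast
    rw [mul_sum]
    simp only [zero_mul, add_zero]
    refine sum_congr rfl fun k hk => ?_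
    rw [cf_rec_right n k (by simpa [Nat.lt_succ_iff] using hk)]; ring
  have s3 : (∑ k ∈ range (n + 1), cf n k * C k) - (∑ k ∈ range (n + 1), cf n k * C (k + 1))
      = -(2 * Real.sin φ * Sf n φ) := by
    unfold Sf
    rw [← sum_sub_distrib, mul_sum, ← sum_neg_distrib]
    refine sum_congr rfl fun k _ => ?_
    have e1 : C k = Real.cos (((n : ℝ) + 1 / 6 - 2 * k) * φ + φ) := by
      simp only [hC]; congr 1; push_cast; ring
    have e2 : C (k + 1) = Real.cos (((n : ℝ) + 1 / 6 - 2 * k) * φ - φ) := by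
      simp only [hC]; congr 1; push_cast; ring
    rw [e1, e2, Real.cos_add, Real.cos_sub]; ring
  rw [s1, s2, ← mul_sub, s3] at key
  rw [eq_comm, ← mul_right_inj' hn, key]
  field_simp

/-- The remainder `Sf r` with its sign `(-1)^r` removed; it is nonnegative on `[0, 1]`. -/
noncomputable def Tf (r : ℕ) (φ : ℝ) : ℝ := (-1) ^ r * Sf r φ

lemma hasDerivAt_Tf (n : ℕ) (φ : ℝ) :
    HasDerivAt (Tf (n + 1))
      (2 * ((n + 1 : ℝ) ^ 2 - 1 / 36) / (n + 1) * Real.sin φ * Tf n φ) φ := by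
  have h := (hasDerivAt_Sf n φ).const_mul ((-1 : ℝ) ^ (n + 1))
  refine h.congr_deriv ?_
  unfold Tf; rw [pow_succ]; ring

lemma Tf_zero (φ : ℝ) : Tf 0 φ = Real.sin (φ / 6) := by
  simp [Tf, Sf, cf]
  congr 1; ring

/-- Comparison of two functions on `[0, a]` through their derivatives. -/
lemma le_of_deriv_le {f g f' g' : ℝ → ℝ} {a : ℝ} (hf : ∀ x, HasDerivAt f (f' x) x)
    (hg : ∀ x, HasDerivAt g (g' x) x) (h0 : f 0 ≤ g 0)
    (h : ∀ x, 0 ≤ x → x ≤ a → f' x ≤ g' x) : ∀ x, 0 ≤ x → x ≤ a → f x ≤ g x := by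
  intro x hx0 hxa
  have hm : MonotoneOn (fun y => g y - f y) (Set.Icc 0 a) := by
    apply monotoneOn_of_hasDerivWithinAt_nonneg (f' := fun y => g' y - f' y) (convex_Icc 0 a)
    · exact fun y _ => ((hg y).sub (hf y)).continuousAt.continuousWithinAt
    · exact fun y _ => ((hg y).sub (hf y)).hasDerivWithinAt
    · intro y hy
      rw [interior_Icc] at hy
      have := h y hy.1.le hy.2.le
      linarith
  have := hm ⟨le_refl 0, hx0.trans hxa⟩ ⟨hx0, hxa⟩ hx0
  simp only at this
  linarith

lemma Tf_zero_arg (r : ℕ) : Tf r 0 = 0 := by simp [Tf, Sf_zero_arg]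

/-- Sign and upper bound of the remainder. -/
lemma Tf_bounds (r : ℕ) {a : ℝ} (ha : a ≤ 1) : ∀ φ, 0 ≤ φ → φ ≤ a →
    0 ≤ Tf r φ ∧ Tf r φ ≤ (2 * (1 - Real.cos φ)) ^ r * Real.sin (φ / 6) := by
  have hpi := Real.pi_gt_three
  induction r with
  | zero =>
    intro φ h0 h1
    rw [Tf_zero]
    refine ⟨Real.sin_nonneg_of_nonneg_of_le_pi (by linarith) (by linarith), by simp⟩
  | succ n ih =>
    have hsin : ∀ x, 0 ≤ x → x ≤ a → 0 ≤ Real.sin x := fun x h0 h1 =>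
      Real.sin_nonneg_of_nonneg_of_le_pi h0 (by linarith)
    have hk : (0 : ℝ) ≤ 2 * ((n + 1 : ℝ) ^ 2 - 1 / 36) / (n + 1) := by
      apply div_nonneg _ (by positivity)
      have : (0 : ℝ) ≤ n := by positivity
      nlinarith
    have hk2 : 2 * ((n + 1 : ℝ) ^ 2 - 1 / 36) / (n + 1) ≤ 2 * (n + 1) := by
      rw [div_le_iff₀ (by positivity)]; nlinarith
    intro φ h0 h1
    constructor
    · have := le_of_deriv_le (f := fun _ => (0 : ℝ)) (g := Tf (n + 1)) (a := a)
        (f' := fun _ => 0) (fun x => hasDerivAt_const x _) (fun x => hasDerivAt_Tf n x)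
        (by rw [Tf_zero_arg]) (fun x hx0 hxa =>
          mul_nonneg (mul_nonneg hk (hsin x hx0 hxa)) (ih x hx0 hxa).1) φ h0 h1
      exact this
    · refine le_of_deriv_le (f := Tf (n + 1))
        (g := fun φ => (2 * (1 - Real.cos φ)) ^ (n + 1) * Real.sin (φ / 6))
        (a := a) (fun x => hasDerivAt_Tf n x)
        (g' := fun x => ((n + 1 : ℕ) * (2 * (1 - Real.cos x)) ^ n * (2 * Real.sin x)) *
          Real.sin (x / 6) + (2 * (1 - Real.cos x)) ^ (n + 1) * (Real.cos (x / 6) * (1 / 6)))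
        (fun x => ?_) (by rw [Tf_zero_arg]; simp) (fun x hx0 hxa => ?_) φ h0 h1
      · apply HasDerivAt.mul
        · have h := (((Real.hasDerivAt_cos x).const_sub 1).const_mul 2).fun_pow (n + 1)
          refine h.congr_deriv ?_
          simp
        · exact ((hasDerivAt_id x).div_const 6).sin
      · have i := ih x hx0 hxa
        have hs := hsin x hx0 hxa
        have hc : 0 ≤ Real.cos (x / 6) := Real.cos_nonneg_of_neg_pi_div_two_le_of_le
          (by linarith) (by linarith)
        have hc2 : 0 ≤ 2 * (1 - Real.cos x) := by linarith [Real.cos_le_one x]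
        have step : 2 * ((n + 1 : ℝ) ^ 2 - 1 / 36) / (n + 1) * Real.sin x * Tf n x
            ≤ 2 * (n + 1) * Real.sin x * ((2 * (1 - Real.cos x)) ^ n * Real.sin (x / 6)) :=
          mul_le_mul (mul_le_mul_of_nonneg_right hk2 hs) i.2 i.1 (by positivity)
        have : 0 ≤ (2 * (1 - Real.cos x)) ^ (n + 1) * (Real.cos (x / 6) * (1 / 6)) := by
          positivity
        push_cast
        linarith

/-- Lower bound of the remainder, by induction from `hasDerivAt_Tf`. It replaces the proof that
consecutive approximants are not proportional. -/
lemma Tf_lower (r : ℕ) {a : ℝ} (ha0 : 0 < a) (ha : a ≤ 1) : ∀ φ, 0 ≤ φ → φ ≤ a →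
    (1 / (5 * a)) * ((1 / 2 + 1 / (2 * (r + 1))) / (r + 1)) * (2 ^ r * (1 - Real.cos φ) ^ (r + 1))
      ≤ Tf r φ := by
  have hpi := Real.pi_gt_three
  have hpi4 := Real.pi_lt_four
  induction r with
  | zero =>
    intro φ h0 h1
    rw [Tf_zero]
    have h2 : 2 / Real.pi * (φ / 6) ≤ Real.sin (φ / 6) :=
      Real.mul_le_sin (by linarith) (by linarith)
    have hpi' := Real.pi_lt_d2
    have h3 : φ / 10 ≤ 2 / Real.pi * (φ / 6) := by
      have : (3 : ℝ) / 5 ≤ 2 / Real.pi := by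
        rw [le_div_iff₀ Real.pi_pos]; linarith
      nlinarith
    have h4 := Real.one_sub_sq_div_two_le_cos (x := φ)
    have h5 : (1 / (5 * a)) * (1 - Real.cos φ) ≤ φ / 10 := by
      rw [div_mul_eq_mul_div, div_le_iff₀ (by positivity)]
      nlinarith
    norm_num
    norm_num at h5
    linarith
  | succ n ih =>
    have hsin : ∀ x, 0 ≤ x → x ≤ a → 0 ≤ Real.sin x := fun x h0 h1 =>
      Real.sin_nonneg_of_nonneg_of_le_pi h0 (by linarith)
    intro φ h0 h1
    set B : ℝ := (1 / (5 * a)) * ((1 / 2 + 1 / (2 * ((n + 1 : ℕ) + 1))) / ((n + 1 : ℕ) + 1)) with hB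
    refine le_of_deriv_le
        (f := fun φ => B * (2 ^ (n + 1) * (1 - Real.cos φ) ^ (n + 1 + 1))) (g := Tf (n + 1))
        (f' := fun x => B * (2 ^ (n + 1) * ((n + 1 + 1 : ℕ) * (1 - Real.cos x) ^ (n + 1) * Real.sin x)))
        (a := a) (fun x => ?_) (fun x => hasDerivAt_Tf n x)
        (by rw [Tf_zero_arg]; simp) (fun x hx0 hxa => ?_) φ h0 h1
    · apply HasDerivAt.const_mul
      apply HasDerivAt.const_mul
      have h := (((Real.hasDerivAt_cos x).const_sub 1)).fun_pow (n + 1 + 1)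
      refine h.congr_deriv ?_
      simp
    · have i := ih x hx0 hxa
      have hs := hsin x hx0 hxa
      have hc2 : 0 ≤ 1 - Real.cos x := by linarith [Real.cos_le_one x]
      have hk : (0 : ℝ) ≤ 2 * ((n + 1 : ℝ) ^ 2 - 1 / 36) / (n + 1) := by
        apply div_nonneg _ (by positivity)
        have : (0 : ℝ) ≤ n := by positivity
        nlinarith
      have hcoef : B * (2 * (n + 1 + 1)) ≤ 2 * ((n + 1 : ℝ) ^ 2 - 1 / 36) / (n + 1) *
          ((1 / (5 * a)) * ((1 / 2 + 1 / (2 * (n + 1))) / (n + 1))) := by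
        rw [hB]
        have hn : (0 : ℝ) ≤ n := by positivity
        have : (((1 / 2 + 1 / (2 * ((n + 1 : ℕ) + 1 : ℝ))) / ((n + 1 : ℕ) + 1)) * (2 * (n + 1 + 1)))
          ≤ 2 * ((n + 1 : ℝ) ^ 2 - 1 / 36) / (n + 1) * ((1 / 2 + 1 / (2 * (n + 1))) / (n + 1)) := by
          push_cast
          rw [← sub_nonneg]
          have : 2 * ((n + 1 : ℝ) ^ 2 - 1 / 36) / (n + 1) * ((1 / 2 + 1 / (2 * (n + 1))) / (n + 1))
            - (((1 / 2 + 1 / (2 * ((n + 1 : ℝ) + 1))) / ((n + 1 : ℝ) + 1)) * (2 * (n + 1 + 1)))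
            = (36 * (n + 1) ^ 2 - (n + 2) ^ 2) / (36 * (n + 1) ^ 3 * (n + 2)) := by
            field_simp; ring
          rw [this]
          apply div_nonneg _ (by positivity)
          nlinarith
        have h5 : 0 < 1 / (5 * a) := by positivity
        calc _ = (1 / (5 * a)) * (((1 / 2 + 1 / (2 * ((n + 1 : ℕ) + 1 : ℝ))) / ((n + 1 : ℕ) + 1)) * (2 * (n + 1 + 1))) := by ring
          _ ≤ _ := mul_le_mul_of_nonneg_left this h5.le
          _ = _ := by ring
      calc B * (2 ^ (n + 1) * ((n + 1 + 1 : ℕ) * (1 - Real.cos x) ^ (n + 1) * Real.sin x))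
          = B * (2 * (n + 1 + 1)) * (2 ^ n * (1 - Real.cos x) ^ (n + 1) * Real.sin x) := by
            push_cast; ring
        _ ≤ _ := mul_le_mul_of_nonneg_right hcoef (by positivity)
        _ = 2 * ((n + 1 : ℝ) ^ 2 - 1 / 36) / (n + 1) * Real.sin x * ((1 / (5 * a)) *
          ((1 / 2 + 1 / (2 * (n + 1))) / (n + 1)) * (2 ^ n * (1 - Real.cos x) ^ (n + 1))) := by ring
        _ ≤ _ := mul_le_mul_of_nonneg_left i (mul_nonneg hk hs)

end Sextic

/-! ### The integer `G r` and divisibility of the numerators -/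

namespace Sextic

/-- The exponent of `p` in `G r`. For `p ≥ 2` the indices `j > 6 r` would not contribute. -/
def gexp (r p : ℕ) : ℕ := ((Finset.Icc 1 (6 * r)).filter (fun j => (6 * r / p ^ j) % 6 = 5)).card

/-- A divisor, prime to `6`, common to the coefficients of the Padé polynomial of order `r` after
their denominators (which are composed of `2` and `3`) have been cleared. -/
noncomputable def G (r : ℕ) : ℕ :=
  ∏ p ∈ (Finset.range (6 * r + 1)).filter (fun p => p.Prime ∧ 5 ≤ p), p ^ gexp r p

/-- The numerator of `cf r k` over the denominator `6 ^ r * k! * (r - k)!`. -/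
def num (r k : ℕ) : ℤ :=
  (∏ i ∈ Finset.range k, (6 * (r : ℤ) + 1 - 6 * i)) *
    ∏ i ∈ Finset.range (r - k), (6 * (r : ℤ) - 1 - 6 * i)

lemma prod_modEq {M : ℤ} (a : ℤ) (n k : ℕ) (h : 6 * (n : ℤ) ≡ a [ZMOD M]) :
    (∏ i ∈ Finset.range k, (a - 6 * i)) ≡ 6 ^ k * (n.descFactorial k : ℤ) [ZMOD M] := by
  have h1 : (∏ i ∈ Finset.range k, (a - 6 * i)) ≡ ∏ i ∈ Finset.range k, (6 * ((n : ℤ) - i)) [ZMOD M] := by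
    apply Int.ModEq.prod
    intro i _
    have := h.symm.sub_right (6 * (i : ℤ))
    rwa [← mul_sub] at this
  refine h1.trans ?_
  rw [Finset.prod_mul_distrib, Finset.prod_const, Finset.card_range]
  have : (∏ i ∈ Finset.range k, ((n : ℤ) - i)) = (n.descFactorial k : ℤ) := by
    by_cases hk : k ≤ n
    · rw [Nat.descFactorial_eq_prod_range, Nat.cast_prod]
      apply Finset.prod_congr rfl
      intro i hi
      rw [Finset.mem_range] at hi
      rw [Nat.cast_sub (by omega)]
    · rw [Nat.descFactorial_of_lt (by omega)]
      exact Finset.prod_eq_zero (Finset.mem_range.2 (show n < k by omega)) (by simp)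
  rw [this]

lemma coprime_six_pow {p : ℕ} (hp : p.Prime) (h5 : 5 ≤ p) (E : ℕ) : Nat.Coprime 6 (p ^ E) := by
  apply Nat.Coprime.pow_right
  rw [Nat.coprime_comm, Nat.Prime.coprime_iff_not_dvd hp]
  intro h
  have : p ∣ 2 * 3 := h
  rcases (Nat.Prime.dvd_mul hp).1 this with h | h
  · have := Nat.le_of_dvd (by norm_num) h; omega
  · have := Nat.le_of_dvd (by norm_num) h; omega

/-- Solutions of `6 n ≡ a` modulo `p ^ E`, as large as wanted. -/
lemma exists_nat_six {p : ℕ} (hp : p.Prime) (h5 : 5 ≤ p) (E : ℕ) (a : ℤ) (B : ℕ) :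
    ∃ n : ℕ, B ≤ n ∧ 6 * (n : ℤ) ≡ a [ZMOD ((p ^ E : ℕ) : ℤ)] := by
  have hc : IsCoprime (6 : ℤ) ((p ^ E : ℕ) : ℤ) := by
    rw [Int.isCoprime_iff_gcd_eq_one]
    have := coprime_six_pow hp h5 E
    simpa [Int.gcd] using this
  obtain ⟨u, v, huv⟩ := hc
  have hP : (0 : ℤ) < ((p ^ E : ℕ) : ℤ) := by exact_mod_cast pow_pos hp.pos E
  set P : ℤ := ((p ^ E : ℕ) : ℤ)
  have hmod : 6 * ((a * u) % P + B * P) ≡ a [ZMOD P] := by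
    have h1 : (a * u) % P ≡ a * u [ZMOD P] := Int.mod_modEq _ _
    have h2 : 6 * ((a * u) % P + B * P) ≡ 6 * (a * u + 0) [ZMOD P] := by
      apply Int.ModEq.mul_left
      apply Int.ModEq.add h1
      exact Int.modEq_zero_iff_dvd.2 ⟨B, by ring⟩
    refine h2.trans ?_
    apply Int.modEq_iff_dvd.2
    exact ⟨a * v, by linear_combination (-a) * huv⟩
  have hnn : 0 ≤ (a * u) % P := Int.emod_nonneg _ hP.ne'
  refine ⟨((a * u) % P + B * P).toNat, ?_, ?_⟩
  · have : (B : ℤ) ≤ (a * u) % P + B * P := by nlinarith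
    omega
  · rw [Int.toNat_of_nonneg (by positivity)]
    exact hmod

/-- A small residue of `n` forces a carry at `P` in the addition `k + (n - k)`. -/
lemma carry_of_lt {P n k : ℕ} (hk : k ≤ n) (h : n % P < k % P) :
    P ≤ k % P + (n - k) % P := by
  by_contra hlt
  push Not at hlt
  have : n % P = (k % P + (n - k) % P) % P := by
    rw [← Nat.add_mod, Nat.add_sub_cancel' hk]
  rw [Nat.mod_eq_of_lt hlt] at this
  omega

/-- If `⌊6r/P⌋ ≡ 5 (mod 6)`, the residues of `r + 1/6` and `r - 1/6` modulo `P` add up to less than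
the residue of `r`. -/
lemma residue_sum {P r n m : ℕ} (hP : 0 < P) (hc : Nat.Coprime 6 P)
    (hn : 6 * (n : ℤ) ≡ 6 * r + 1 [ZMOD (P : ℤ)]) (hm : 6 * (m : ℤ) ≡ 6 * r - 1 [ZMOD (P : ℤ)])
    (hr : (6 * r / P) % 6 = 5) : n % P + m % P < r % P := by
  have hρ : 5 * P ≤ 6 * (r % P) := by
    have h1 : 6 * r = 6 * (r % P) + P * (6 * (r / P)) := by
      have := Nat.mod_add_div r P
      calc 6 * r = 6 * (r % P + P * (r / P)) := by rw [this]
        _ = _ := by ring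
    rw [h1, Nat.add_mul_div_left _ _ hP, Nat.add_mul_mod_self_left] at hr
    have h2 : 6 * (r % P) / P < 6 := by
      rw [Nat.div_lt_iff_lt_mul hP]
      have := Nat.mod_lt r hP
      omega
    rw [Nat.mod_eq_of_lt h2] at hr
    have h3 : 5 ≤ 6 * (r % P) / P := hr.ge
    exact (Nat.le_div_iff_mul_le hP).1 h3
  have hρ2 := Nat.mod_lt r hP
  have hx := Nat.mod_lt n hP
  have hy := Nat.mod_lt m hP
  have hn' : 6 * ((n % P : ℕ) : ℤ) ≡ 6 * ((r % P : ℕ) : ℤ) + 1 [ZMOD (P : ℤ)] := by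
    push_cast
    have h1 : (n : ℤ) % P ≡ n [ZMOD P] := Int.mod_modEq _ _
    have h2 : (r : ℤ) % P ≡ r [ZMOD P] := Int.mod_modEq _ _
    exact ((h1.mul_left 6).trans hn).trans ((h2.mul_left 6).add_right 1).symm
  have hm' : 6 * ((m % P : ℕ) : ℤ) ≡ 6 * ((r % P : ℕ) : ℤ) - 1 [ZMOD (P : ℤ)] := by
    push_cast
    have h1 : (m : ℤ) % P ≡ m [ZMOD P] := Int.mod_modEq _ _
    have h2 : (r : ℤ) % P ≡ r [ZMOD P] := Int.mod_modEq _ _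
    exact ((h1.mul_left 6).trans hm).trans ((h2.mul_left 6).sub_right 1).symm
  set x := n % P
  set y := m % P
  set ρ := r % P
  obtain ⟨c, hc1⟩ := (Int.modEq_iff_dvd.1 hn')
  obtain ⟨d, hd1⟩ := (Int.modEq_iff_dvd.1 hm')
  -- `6 x = 6 ρ + 1 - c P`, `6 y = 6 ρ - 1 - d P`
  zify at *
  have hc0 : 0 ≤ c := by
    by_contra h; push Not at h
    nlinarith
  have hd0 : 0 ≤ d := by
    by_contra h; push Not at h
    nlinarith
  have hc2 : c ≠ 0 := by
    rintro rfl
    omega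
  have hdvd : (6 : ℤ) ∣ c + d := by
    have h6 : (6 : ℤ) ∣ (P : ℤ) * (c + d) := ⟨2 * ρ - x - y, by linarith⟩
    have : IsCoprime (6 : ℤ) (P : ℤ) := by
      rw [Int.isCoprime_iff_gcd_eq_one]; simpa [Int.gcd] using hc
    exact this.dvd_of_dvd_mul_left h6
  have h6 : 6 ≤ c + d := Int.le_of_dvd (by omega) hdvd
  nlinarith

/-- By Kummer's theorem the right side counts carries. Each `j` counted by `gexp` produces one: by
`residue_sum`, `r = k + (r - k)` has too large a residue modulo `p ^ j` for both `n mod p ^ j` and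
`m mod p ^ j` to exceed the residues of `k` and `r - k`. -/
lemma gexp_le (r k p : ℕ) (hp : p.Prime) (h5 : 5 ≤ p) (hk : k ≤ r) (n m E : ℕ) (hE : 6 * r ≤ E)
    (hkn : k ≤ n) (hkm : r - k ≤ m)
    (hn : 6 * (n : ℤ) ≡ 6 * r + 1 [ZMOD ((p ^ E : ℕ) : ℤ)])
    (hm : 6 * (m : ℤ) ≡ 6 * r - 1 [ZMOD ((p ^ E : ℕ) : ℤ)]) :
    gexp r p ≤ (n.choose k).factorization p + (m.choose (r - k)).factorization p := by
  set b := n + m + 6 * r + 1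
  have hb1 : Nat.log p n < b := lt_of_le_of_lt (Nat.log_le_self _ _) (by omega)
  have hb2 : Nat.log p m < b := lt_of_le_of_lt (Nat.log_le_self _ _) (by omega)
  rw [Nat.factorization_choose hp hkn hb1, Nat.factorization_choose hp hkm hb2]
  refine le_trans ?_ (Finset.card_union_le _ _)
  apply Finset.card_le_card
  intro j hj
  rw [Finset.mem_filter, Finset.mem_Icc] at hj
  obtain ⟨⟨hj1, hj2⟩, hj3⟩ := hj
  have hP : 0 < p ^ j := pow_pos hp.pos j
  have hdvd : ((p ^ j : ℕ) : ℤ) ∣ ((p ^ E : ℕ) : ℤ) := by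
    exact_mod_cast pow_dvd_pow p (hj2.trans hE)
  have hlt := residue_sum hP (coprime_six_pow hp h5 j) (hn.of_dvd hdvd) (hm.of_dvd hdvd) hj3
  have hor : n % p ^ j < k % p ^ j ∨ m % p ^ j < (r - k) % p ^ j := by
    by_contra hcon
    push Not at hcon
    have h1 : r % p ^ j = (k % p ^ j + (r - k) % p ^ j) % p ^ j := by
      rw [← Nat.add_mod, Nat.add_sub_cancel' hk]
    have := Nat.mod_le (k % p ^ j + (r - k) % p ^ j) (p ^ j)
    omega
  rw [Finset.mem_union, Finset.mem_filter, Finset.mem_filter, Finset.mem_Ico]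
  rcases hor with h | h
  · exact Or.inl ⟨⟨hj1, by omega⟩, carry_of_lt hkn h⟩
  · exact Or.inr ⟨⟨hj1, by omega⟩, carry_of_lt hkm h⟩

/-- The power of a prime `p ≥ 5` in `G r * k! * (r - k)!` divides `num r k`: modulo a high power of `p`
the two products are descending factorials of natural numbers `n` and `m`, up to powers of `6`. -/
lemma pow_dvd_num (r k p : ℕ) (hp : p.Prime) (h5 : 5 ≤ p) (hk : k ≤ r) :
    ((p ^ (gexp r p + (k.factorial * (r - k).factorial).factorization p) : ℕ) : ℤ) ∣ num r k := by
  set e := gexp r p + (k.factorial * (r - k).factorial).factorization p with he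
  set E := e + 6 * r
  obtain ⟨n, hkn, hn⟩ := exists_nat_six hp h5 E (6 * r + 1) k
  obtain ⟨m, hkm, hm⟩ := exists_nat_six hp h5 E (6 * r - 1) (r - k)
  have h1 := (prod_modEq _ n k hn).mul (prod_modEq _ m (r - k) hm)
  have h2 : ((p ^ e : ℕ) : ℤ) ∣ ((p ^ E : ℕ) : ℤ) := by
    exact_mod_cast pow_dvd_pow p (show e ≤ E by omega)
  have h3 := h1.of_dvd h2
  refine h3.dvd_iff.2 ?_
  have h4 : p ^ e ∣ n.descFactorial k * m.descFactorial (r - k) := by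
    rw [Nat.descFactorial_eq_factorial_mul_choose, Nat.descFactorial_eq_factorial_mul_choose]
    have hc1 : n.choose k ≠ 0 := (Nat.choose_pos hkn).ne'
    have hc2 : m.choose (r - k) ≠ 0 := (Nat.choose_pos hkm).ne'
    have hf : k.factorial * (r - k).factorial ≠ 0 := by positivity
    have : k.factorial * n.choose k * ((r - k).factorial * m.choose (r - k)) =
      (k.factorial * (r - k).factorial) * (n.choose k * m.choose (r - k)) := by ring
    rw [this, hp.pow_dvd_iff_le_factorization (by positivity),
      Nat.factorization_mul hf (by positivity), Nat.factorization_mul hc1 hc2]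
    have := gexp_le r k p hp h5 hk n m E (by omega) hkn hkm hn hm
    simp only [Finsupp.add_apply]
    omega
  have h5 : ((p ^ e : ℕ) : ℤ) ∣ ((n.descFactorial k * m.descFactorial (r - k) : ℕ) : ℤ) := by
    exact_mod_cast h4
  refine h5.trans ⟨6 ^ k * 6 ^ (r - k), by push_cast; ring⟩

lemma factorization_G_le (r p : ℕ) : (G r).factorization p ≤ if 5 ≤ p then gexp r p else 0 := by
  unfold G
  rw [Nat.factorization_prod_apply (fun q hq => by
    rw [Finset.mem_filter] at hq
    exact (pow_pos hq.2.1.pos _).ne')]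
  have h : ∀ q ∈ (Finset.range (6 * r + 1)).filter (fun p => p.Prime ∧ 5 ≤ p),
      (q ^ gexp r q).factorization p = if q = p then gexp r q else 0 := by
    intro q hq
    rw [Finset.mem_filter] at hq
    rw [hq.2.1.factorization_pow, Finsupp.single_apply]
  rw [Finset.sum_congr rfl h, Finset.sum_ite_eq']
  split_ifs with h1 h2 h2
  · exact le_rfl
  · rw [Finset.mem_filter] at h1; omega
  · exact Nat.zero_le _
  · exact le_rfl

lemma G_pos (r : ℕ) : 0 < G r := by
  apply Finset.prod_pos
  intro q hq
  rw [Finset.mem_filter] at hq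
  exact pow_pos hq.2.1.pos _

lemma G_coprime (r : ℕ) : Nat.Coprime 3 (G r) := by
  rw [Nat.Prime.coprime_iff_not_dvd Nat.prime_three, Nat.prime_three.dvd_iff_one_le_factorization (G_pos r).ne']
  have := factorization_G_le r 3
  simp at this
  omega

/-- The primes `2` and `3`, which divide only the factorials here, are absorbed by `6 ^ r`. -/
lemma G_mul_dvd (r k : ℕ) (hk : k ≤ r) :
    (G r * (k.factorial * (r - k).factorial) : ℤ) ∣ 6 ^ r * num r k := by
  have key : G r * (k.factorial * (r - k).factorial) ∣ (6 ^ r * num r k).natAbs := by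
    rw [Nat.dvd_iff_prime_pow_dvd_dvd]
    intro p j hp hj
    have hf : k.factorial * (r - k).factorial ≠ 0 := by positivity
    rw [hp.pow_dvd_iff_le_factorization (mul_ne_zero (G_pos r).ne' hf),
      Nat.factorization_mul (G_pos r).ne' hf, Finsupp.add_apply] at hj
    have hG := factorization_G_le r p
    rw [← Int.natCast_dvd]
    by_cases h5 : 5 ≤ p
    · rw [if_pos h5] at hG
      refine Dvd.dvd.mul_left ?_ _
      refine dvd_trans ?_ (pow_dvd_num r k p hp h5 hk)
      exact_mod_cast pow_dvd_pow p (by omega)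
    · rw [if_neg h5] at hG
      refine Dvd.dvd.mul_right ?_ _
      have hjr : j ≤ r := by
        rw [Nat.factorization_mul (by positivity) (by positivity), Finsupp.add_apply] at hj
        have h1 := Nat.factorization_factorial_le_div_pred hp k
        have h2 := Nat.factorization_factorial_le_div_pred hp (r - k)
        have h3 := Nat.div_le_self k (p - 1)
        have h4 := Nat.div_le_self (r - k) (p - 1)
        omega
      have hp6 : p ∣ 6 := by
        have := hp.two_le
        have h4 : p ≠ 4 := by rintro rfl; revert hp; norm_num
        interval_cases p <;> omega
      have : p ^ j ∣ 6 ^ r := (pow_dvd_pow_of_dvd hp6 j).trans (pow_dvd_pow 6 hjr)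
      exact_mod_cast this
  have := Int.natCast_dvd.2 key
  exact_mod_cast this

/-- Denominators of the binomial coefficients with upper entry `a/6`: the `3`-part of `j!` is at most
`3 ^ (j / 2)` and its `2`-part at most `2 ^ j`. -/
lemma factorial_dvd (a : ℤ) (j : ℕ) :
    (j.factorial : ℤ) ∣ 2 ^ j * 3 ^ (j / 2) * ∏ i ∈ Finset.range j, (a - 6 * i) := by
  rw [Int.natCast_dvd, Nat.dvd_iff_prime_pow_dvd_dvd]
  intro p e hp he
  rw [← Int.natCast_dvd]
  by_cases h5 : 5 ≤ p
  · refine Dvd.dvd.mul_left ?_ _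
    obtain ⟨n, -, hn⟩ := exists_nat_six hp h5 e a 0
    refine (prod_modEq _ n j hn).dvd_iff.2 ?_
    refine Dvd.dvd.mul_left ?_ _
    exact_mod_cast he.trans (Nat.factorial_dvd_descFactorial n j)
  · refine Dvd.dvd.mul_right ?_ _
    rw [hp.pow_dvd_iff_le_factorization (by positivity)] at he
    have h1 := he.trans (Nat.factorization_factorial_le_div_pred hp j)
    have := hp.two_le
    have h4 : p ≠ 4 := by rintro rfl; revert hp; norm_num
    have h23 : p = 2 ∨ p = 3 := by omega
    rcases h23 with rfl | rfl
    · refine Dvd.dvd.mul_right ?_ _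
      have : 2 ^ e ∣ 2 ^ j := pow_dvd_pow 2 (by simpa using h1)
      exact_mod_cast this
    · refine Dvd.dvd.mul_left ?_ _
      have : 3 ^ e ∣ 3 ^ (j / 2) := pow_dvd_pow 3 (by simpa using h1)
      exact_mod_cast this

end Sextic

/-! ### Padé polynomials over the Eisenstein integers -/

namespace Sextic

open Finset

lemma choose_mul_factorial (x : ℝ) (k : ℕ) :
    Ring.choose x k * (k.factorial : ℝ) = ∏ i ∈ range k, (x - i) := by
  induction k with
  | zero => simp
  | succ k ih =>
    rw [prod_range_succ, ← ih, Nat.factorial_succ]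
    have := choose_succ_mul x k
    push_cast
    linear_combination (k.factorial : ℝ) * this

lemma cf_eq_num (r k : ℕ) (hk : k ≤ r) :
    cf r k * (6 ^ r * (k.factorial * (r - k).factorial : ℕ)) = (num r k : ℝ) := by
  have h1 := choose_mul_factorial ((r : ℝ) + 1 / 6) k
  have h2 := choose_mul_factorial ((r : ℝ) - 1 / 6) (r - k)
  have h3 : (∏ i ∈ range k, (6 * (r : ℝ) + 1 - 6 * i)) = 6 ^ k * ∏ i ∈ range k, ((r : ℝ) + 1 / 6 - i) := by
    rw [← Finset.card_range k, ← Finset.prod_const, Finset.card_range, ← prod_mul_distrib]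
    exact prod_congr rfl (fun i _ => by ring)
  have h4 : (∏ i ∈ range (r - k), (6 * (r : ℝ) - 1 - 6 * i)) =
      6 ^ (r - k) * ∏ i ∈ range (r - k), ((r : ℝ) - 1 / 6 - i) := by
    conv_rhs => rw [← Finset.card_range (r - k), ← Finset.prod_const, Finset.card_range, ← prod_mul_distrib]
    exact prod_congr rfl (fun i _ => by ring)
  have h5 : (6 : ℝ) ^ r = 6 ^ k * 6 ^ (r - k) := by rw [← pow_add, Nat.add_sub_cancel' hk]
  unfold num cf
  push_cast
  rw [h3, h4, ← h1, ← h2, h5]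
  ring

/-- An instance of the Vandermonde identity. -/
lemma cf_sum_choose (r j : ℕ) (hj : j ≤ r) :
    ∑ k ∈ range (r + 1), cf r k * (k.choose j : ℝ) =
      Ring.choose ((r : ℝ) + 1 / 6) j * ((2 * r - j).choose (r - j) : ℝ) := by
  have h0 : r + 1 = j + (r - j + 1) := by omega
  rw [h0, sum_range_add]
  have hz : ∑ k ∈ range j, cf r k * (k.choose j : ℝ) = 0 := by
    apply sum_eq_zero
    intro k hk
    rw [mem_range] at hk
    simp [Nat.choose_eq_zero_of_lt hk]
  rw [hz, zero_add]
  have h1 : ∀ i ∈ range (r - j + 1), cf r (j + i) * ((j + i).choose j : ℝ) =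
      Ring.choose ((r : ℝ) + 1 / 6) j *
        (Ring.choose ((r : ℝ) + 1 / 6 - j) i * Ring.choose ((r : ℝ) - 1 / 6) (r - j - i)) := by
    intro i _
    have h := Ring.choose_smul_choose ((r : ℝ) + 1 / 6) (Nat.le_add_right j i)
    rw [nsmul_eq_mul, Nat.add_sub_cancel_left] at h
    unfold cf
    rw [Nat.sub_sub]
    linear_combination Ring.choose ((r : ℝ) - 1 / 6) (r - (j + i)) * h
  rw [sum_congr rfl h1, ← mul_sum]
  congr 1
  have h2 := Ring.add_choose_eq (r := (r : ℝ) + 1 / 6 - j) (s := (r : ℝ) - 1 / 6) (r - j)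
    (Commute.all _ _)
  rw [Finset.Nat.sum_antidiagonal_eq_sum_range_succ_mk] at h2
  rw [← h2, ← Ring.choose_natCast (R := ℝ)]
  congr 1
  rw [Nat.cast_sub (by omega)]
  push_cast
  ring

lemma cf_sum (r : ℕ) : ∑ k ∈ range (r + 1), cf r k = ((2 * r).choose r : ℝ) := by
  have := cf_sum_choose r 0 (Nat.zero_le r)
  simpa [Ring.choose_zero_right] using this

lemma cf_nonneg (r k : ℕ) (hk : k ≤ r) : 0 ≤ cf r k := by
  have h := cf_eq_num r k hk
  have h1 : 0 ≤ (num r k : ℝ) := by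
    have : 0 ≤ num r k := by
      apply mul_nonneg
      · apply prod_nonneg
        intro i hi
        rw [mem_range] at hi
        omega
      · apply prod_nonneg
        intro i hi
        rw [mem_range] at hi
        omega
    exact_mod_cast this
  have h2 : (0 : ℝ) < 6 ^ r * (k.factorial * (r - k).factorial : ℕ) := by
    have : 0 < k.factorial * (r - k).factorial := by positivity
    positivity
  rw [← h] at h1
  exact nonneg_of_mul_nonneg_left h1 h2

/-- The homogeneous Padé polynomial of order `r` for the exponent `1/6`. -/
noncomputable def Q (r : ℕ) (a b : ℂ) : ℂ := ∑ k ∈ range (r + 1), (cf r k : ℂ) * a ^ (r - k) * b ^ k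

/-- Expansion of the Padé polynomial in powers of `b - a`. -/
lemma Q_alt (r : ℕ) (a b : ℂ) : Q r a b = ∑ j ∈ range (r + 1),
    ((Ring.choose ((r : ℝ) + 1 / 6) j : ℝ) : ℂ) * ((2 * r - j).choose (r - j) : ℂ) * (b - a) ^ j
      * a ^ (r - j) := by
  have h1 : ∀ k ∈ range (r + 1), (cf r k : ℂ) * a ^ (r - k) * b ^ k =
      ∑ j ∈ range (r + 1), (cf r k : ℂ) * (k.choose j : ℂ) * ((b - a) ^ j * a ^ (r - j)) := by
    intro k hk
    rw [mem_range] at hk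
    have hb : b ^ k = ∑ j ∈ range (k + 1), (b - a) ^ j * a ^ (k - j) * (k.choose j : ℂ) := by
      rw [← add_pow]; congr 1; ring
    rw [hb, mul_sum]
    have hsub : range (k + 1) ⊆ range (r + 1) := range_mono (by omega)
    rw [← sum_subset hsub (f := fun j => (cf r k : ℂ) * (k.choose j : ℂ) * ((b - a) ^ j * a ^ (r - j)))]
    · apply sum_congr rfl
      intro j hj
      rw [mem_range] at hj
      have : a ^ (r - j) = a ^ (r - k) * a ^ (k - j) := by rw [← pow_add]; congr 1; omega
      rw [this]; ring
    · intro j _ hj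
      rw [mem_range] at hj
      simp [Nat.choose_eq_zero_of_lt (show k < j by omega)]
  unfold Q
  rw [sum_congr rfl h1, sum_comm]
  apply sum_congr rfl
  intro j hj
  rw [mem_range] at hj
  rw [← sum_mul]
  have := cf_sum_choose r j (by omega)
  have h2 : ∑ k ∈ range (r + 1), (cf r k : ℂ) * (k.choose j : ℂ) =
    ((Ring.choose ((r : ℝ) + 1 / 6) j : ℝ) : ℂ) * ((2 * r - j).choose (r - j) : ℂ) := by
    exact_mod_cast congrArg (fun x : ℝ => (x : ℂ)) this
  rw [h2]; ring

/-- A primitive cube root of unity. -/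
noncomputable def om : ℂ := ⟨-1 / 2, √3 / 2⟩

lemma om_sq : om ^ 2 = -1 - om := by
  have h3 : √3 * √3 = 3 := Real.mul_self_sqrt (by norm_num)
  apply Complex.ext
  · simp [om, pow_two]; nlinarith
  · simp [om, pow_two]; ring

/-- The ring of Eisenstein integers, as a subring of `ℂ`. -/
def Eis : Subring ℂ where
  carrier := {z | ∃ a b : ℤ, z = a + b * om}
  zero_mem' := ⟨0, 0, by simp⟩
  one_mem' := ⟨1, 0, by simp⟩
  add_mem' := by
    rintro _ _ ⟨a, b, rfl⟩ ⟨c, d, rfl⟩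
    exact ⟨a + c, b + d, by push_cast; ring⟩
  neg_mem' := by
    rintro _ ⟨a, b, rfl⟩
    exact ⟨-a, -b, by push_cast; ring⟩
  mul_mem' := by
    rintro _ _ ⟨a, b, rfl⟩ ⟨c, d, rfl⟩
    exact ⟨a * c - b * d, a * d + b * c - b * d, by
      push_cast; linear_combination (b : ℂ) * d * om_sq⟩

lemma mem_Eis {z : ℂ} : z ∈ Eis ↔ ∃ a b : ℤ, z = a + b * om := Iff.rfl

lemma om_mem : om ∈ Eis := ⟨0, 1, by simp⟩

lemma conj_om : (starRingEnd ℂ) om = -1 - om := by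
  apply Complex.ext <;> simp [om]
  norm_num

lemma conj_mem {z : ℂ} (h : z ∈ Eis) : (starRingEnd ℂ) z ∈ Eis := by
  obtain ⟨a, b, rfl⟩ := h
  refine ⟨a - b, -b, ?_⟩
  simp only [map_add, map_mul, map_intCast, conj_om]
  push_cast; ring

/-- The point of `ℤ[ω]` whose argument governs the roots of the form. -/
noncomputable def al (t : ℤ) : ℂ := t + 3 + 3 * om

lemma al_mem (t : ℤ) : al t ∈ Eis := ⟨t + 3, 3, by simp [al]⟩

lemma conj_al_sub (t : ℤ) : (starRingEnd ℂ) (al t) - al t = -3 * (1 + 2 * om) := by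
  simp only [al, map_add, map_mul, map_intCast, conj_om, map_ofNat]
  ring

lemma sqrtneg_sq : (1 + 2 * om) ^ 2 = -3 := by linear_combination 4 * om_sq

lemma sqrtneg_pow (j : ℕ) : ∃ z ∈ Eis, (-3 * (1 + 2 * om)) ^ j = 3 ^ j * 3 ^ (j / 2) * z := by
  have hmem : (1 + 2 * om) ∈ Eis := ⟨1, 2, by simp⟩
  refine ⟨(-1) ^ j * (-1) ^ (j / 2) * (1 + 2 * om) ^ (j % 2), ?_, ?_⟩
  · exact Eis.mul_mem (Eis.mul_mem (Eis.pow_mem (Eis.neg_mem Eis.one_mem) _)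
      (Eis.pow_mem (Eis.neg_mem Eis.one_mem) _)) (Eis.pow_mem hmem _)
  · have h1 : (1 + 2 * om) ^ j = (-3) ^ (j / 2) * (1 + 2 * om) ^ (j % 2) := by
      rw [← sqrtneg_sq, ← pow_mul, ← pow_add, Nat.div_add_mod]
    have h2 : (-3 : ℂ) ^ (j / 2) = (-1) ^ (j / 2) * 3 ^ (j / 2) := by rw [← mul_pow]; norm_num
    have h3 : (-3 : ℂ) ^ j = (-1) ^ j * 3 ^ j := by rw [← mul_pow]; norm_num
    rw [mul_pow, h1, h2, h3]; ring

lemma intCast_mem (n : ℤ) : (n : ℂ) ∈ Eis := ⟨n, 0, by simp⟩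

/-- By `Q_alt`, only the powers of `ᾱ - α = -3√-3` occur next to binomial coefficients, and these
powers cancel all factors `3` of the denominators; `4 ^ r` cancels the factors `2`. -/
lemma four_pow_Q_mem (r : ℕ) (t : ℤ) : 4 ^ r * Q r (al t) ((starRingEnd ℂ) (al t)) ∈ Eis := by
  rw [Q_alt, mul_sum]
  apply Eis.sum_mem
  intro j hj
  rw [mem_range] at hj
  rw [conj_al_sub]
  obtain ⟨z, hz, hzj⟩ := sqrtneg_pow j
  obtain ⟨q, hq⟩ := factorial_dvd (6 * r + 1) j
  have hc := choose_mul_factorial ((r : ℝ) + 1 / 6) j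
  have hp : (∏ i ∈ range j, (6 * (r : ℝ) + 1 - 6 * i)) = 6 ^ j * ∏ i ∈ range j, ((r : ℝ) + 1 / 6 - i) := by
    rw [← Finset.card_range j, ← Finset.prod_const, Finset.card_range, ← prod_mul_distrib]
    exact prod_congr rfl (fun i _ => by ring)
  have hq' : (2 : ℝ) ^ j * 3 ^ (j / 2) * ∏ i ∈ range j, (6 * (r : ℝ) + 1 - 6 * i) = j.factorial * q := by
    exact_mod_cast congrArg (fun x : ℤ => (x : ℝ)) hq
  rw [hp, ← hc] at hq'
  have hf : (j.factorial : ℝ) ≠ 0 := by positivity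
  have hq2 : (4 : ℝ) ^ j * (3 ^ j * 3 ^ (j / 2)) * Ring.choose ((r : ℝ) + 1 / 6) j = q := by
    apply mul_left_cancel₀ hf
    rw [← hq']
    have h6 : (6 : ℝ) ^ j = 2 ^ j * 3 ^ j := by rw [← mul_pow]; norm_num
    have h4 : (4 : ℝ) ^ j = 2 ^ j * 2 ^ j := by rw [← mul_pow]; norm_num
    rw [h6, h4]; ring
  have hq3 : (4 : ℂ) ^ j * (3 ^ j * 3 ^ (j / 2)) * ((Ring.choose ((r : ℝ) + 1 / 6) j : ℝ) : ℂ) = q := by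
    exact_mod_cast congrArg (fun x : ℝ => (x : ℂ)) hq2
  have h4r : (4 : ℂ) ^ r = 4 ^ (r - j) * 4 ^ j := by rw [← pow_add]; congr 1; omega
  have : 4 ^ r * (((Ring.choose ((r : ℝ) + 1 / 6) j : ℝ) : ℂ) * ((2 * r - j).choose (r - j) : ℂ) *
      (-3 * (1 + 2 * om)) ^ j * al t ^ (r - j)) =
      (((4 ^ (r - j) * q * (2 * r - j).choose (r - j) : ℤ)) : ℂ) * (z * al t ^ (r - j)) := by
    rw [hzj, h4r, Int.cast_mul, Int.cast_mul, ← hq3]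
    generalize Ring.choose ((r : ℝ) + 1 / 6) j = c
    push_cast
    ring
  rw [this]
  exact Eis.mul_mem (intCast_mem _) (Eis.mul_mem hz (Eis.pow_mem (al_mem t) _))

/-- Divisibility by `G r`, with a larger power in front than in `four_pow_Q_mem`; this uses `G_mul_dvd`
for each coefficient. -/
lemma thirtysix_pow_Q (r : ℕ) (t : ℤ) :
    ∃ z ∈ Eis, 36 ^ r * Q r (al t) ((starRingEnd ℂ) (al t)) = G r * z := by
  have h : ∀ k : ℕ, ∃ q : ℤ, k ≤ r → (36 : ℝ) ^ r * cf r k = G r * q := by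
    intro k
    by_cases hk : k ≤ r
    · obtain ⟨q, hq⟩ := G_mul_dvd r k hk
      refine ⟨q, fun _ => ?_⟩
      have h1 := cf_eq_num r k hk
      have h2 : (6 : ℝ) ^ r * num r k = G r * (k.factorial * (r - k).factorial) * q := by
        exact_mod_cast congrArg (fun x : ℤ => (x : ℝ)) hq
      rw [← h1] at h2
      have hf : ((k.factorial * (r - k).factorial : ℕ) : ℝ) ≠ 0 := by positivity
      apply mul_right_cancel₀ hf
      have h36 : (36 : ℝ) ^ r = 6 ^ r * 6 ^ r := by rw [← mul_pow]; norm_num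
      rw [h36]
      push_cast at h2 ⊢
      linear_combination h2
    · exact ⟨0, fun h => absurd h hk⟩
  choose q hq using h
  refine ⟨∑ k ∈ range (r + 1), (q k : ℂ) * (al t ^ (r - k) * (starRingEnd ℂ) (al t) ^ k), ?_, ?_⟩
  · apply Eis.sum_mem
    intro k _
    exact Eis.mul_mem (intCast_mem _) (Eis.mul_mem (Eis.pow_mem (al_mem t) _)
      (Eis.pow_mem (conj_mem (al_mem t)) _))
  · unfold Q
    rw [mul_sum, mul_sum]
    apply sum_congr rfl
    intro k hk
    rw [mem_range] at hk
    have : (36 : ℂ) ^ r * (cf r k : ℂ) = G r * q k := by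
      exact_mod_cast congrArg (fun x : ℝ => (x : ℂ)) (hq k (by omega))
    linear_combination (al t ^ (r - k) * (starRingEnd ℂ) (al t) ^ k) * this

/-- Since `G r` is prime to `9 ^ r`, the divisibility in `thirtysix_pow_Q` descends to the Eisenstein
integer `4 ^ r * Q r α ᾱ`. -/
lemma exists_P (r : ℕ) (t : ℤ) :
    ∃ P ∈ Eis, 4 ^ r * Q r (al t) ((starRingEnd ℂ) (al t)) = G r * P := by
  obtain ⟨z, hz, hzQ⟩ := thirtysix_pow_Q r t
  have h4 := four_pow_Q_mem r t
  have hc : IsCoprime ((9 ^ r : ℕ) : ℤ) (G r : ℤ) := by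
    rw [Nat.isCoprime_iff_coprime]
    apply Nat.Coprime.pow_left
    exact Nat.Coprime.pow_left 2 (G_coprime r)
  obtain ⟨u, v, huv⟩ := hc
  set W := 4 ^ r * Q r (al t) ((starRingEnd ℂ) (al t)) with hW
  refine ⟨u * z + v * W, Eis.add_mem (Eis.mul_mem (intCast_mem _) hz)
    (Eis.mul_mem (intCast_mem _) h4), ?_⟩
  have h36 : (9 : ℂ) ^ r * W = G r * z := by
    rw [← hzQ, hW, ← mul_assoc, ← mul_pow]; norm_num
  have huv' : (u : ℂ) * 9 ^ r + v * G r = 1 := by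
    exact_mod_cast congrArg (fun x : ℤ => (x : ℂ)) huv
  linear_combination (-W) * huv' + (u : ℂ) * h36

end Sextic

/-! ### The direction of `α` and nearly real Eisenstein integers -/

namespace Sextic

open Finset
local notation "conj" => starRingEnd ℂ

/-- The real part of `al t`. -/
noncomputable def sh (t : ℤ) : ℝ := t + 3 / 2
/-- The modulus of `al t`. -/
noncomputable def Am (t : ℤ) : ℝ := ‖al t‖
/-- The argument `φ` of `al t`. -/
noncomputable def ph (t : ℤ) : ℝ := Complex.arg (al t)
/-- The number `e^{iφ/6}`, a sixth root of the direction of `al t`. -/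
noncomputable def ex (t : ℤ) : ℂ := Complex.exp ((ph t / 6 : ℝ) * Complex.I)

lemma al_re (t : ℤ) : (al t).re = sh t := by simp [al, om, sh]; ring
lemma al_im (t : ℤ) : (al t).im = 3 * √3 / 2 := by simp [al, om]; ring

lemma sqrt3_sq : √3 * √3 = 3 := Real.mul_self_sqrt (by norm_num)
lemma sqrt3_lt : √3 < 1.73206 := by
  rw [Real.sqrt_lt' (by norm_num)]; norm_num
lemma lt_sqrt3 : 1.73205 < √3 := by
  apply Real.lt_sqrt_of_sq_lt; norm_num

lemma Am_sq (t : ℤ) : Am t ^ 2 = sh t ^ 2 + 27 / 4 := by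
  rw [Am, ← Complex.normSq_eq_norm_sq, Complex.normSq_apply, al_re, al_im]
  nlinarith [sqrt3_sq]

variable {t : ℤ}

lemma sh_ge (ht : 89 ≤ t) : (90.5 : ℝ) ≤ sh t := by
  have : (89 : ℝ) ≤ t := by exact_mod_cast ht
  unfold sh; linarith

lemma Am_nonneg : 0 ≤ Am t := norm_nonneg _

lemma sh_le_Am (ht : 89 ≤ t) : sh t ≤ Am t := by
  have h1 := sh_ge ht
  have h2 := Am_sq t
  exact le_of_abs_le (abs_le_of_sq_le_sq (by linarith) Am_nonneg)

lemma Am_pos (ht : 89 ≤ t) : 0 < Am t := by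
  have h1 := sh_ge ht
  have := sh_le_Am ht
  linarith

lemma cos_ph (ht : 89 ≤ t) : Real.cos (ph t) = sh t / Am t := by
  rw [ph, Complex.cos_arg (by
    intro h; have := al_re t; rw [h] at this; have := sh_ge ht; simp at *; linarith), al_re]
  rfl

lemma sin_ph : Real.sin (ph t) = (3 * √3 / 2) / Am t := by
  rw [ph, Complex.sin_arg, al_im]
  rfl

lemma ph_pos : 0 < ph t := by
  have h0 : 0 ≤ ph t := by
    rw [ph, Complex.arg_nonneg_iff, al_im]; positivity
  rcases h0.eq_or_lt with h | h
  · exfalso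
    have := (Complex.arg_eq_zero_iff (z := al t)).1 (by rw [← ph]; exact h.symm)
    rw [al_im] at this
    have h3 := lt_sqrt3
    linarith [this.2]
  · exact h

lemma ph_le (ht : 89 ≤ t) : ph t ≤ (3 * √3 / 2) / sh t := by
  have h1 := sh_ge ht
  have hlt : ph t < Real.pi / 2 := by
    have : |ph t| < Real.pi / 2 := by
      rw [ph, Complex.abs_arg_lt_pi_div_two_iff]
      left; rw [al_re]; linarith
    exact (abs_lt.1 this).2
  have h2 := (Real.lt_tan ph_pos hlt).le
  refine h2.trans ?_
  rw [Real.tan_eq_sin_div_cos, cos_ph ht, sin_ph]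
  have hA := Am_pos ht
  apply le_of_eq
  field_simp

lemma ph_le' (ht : 89 ≤ t) : ph t ≤ 0.03 := by
  have h1 := sh_ge ht
  refine (ph_le ht).trans ?_
  rw [div_le_iff₀ (by linarith)]
  have := sqrt3_lt
  linarith

lemma norm_ex : ‖ex t‖ = 1 := Complex.norm_exp_ofReal_mul_I _

lemma al_eq : al t = (Am t : ℂ) * Complex.exp (ph t * Complex.I) :=
  (Complex.norm_mul_exp_arg_mul_I (al t)).symm

lemma ex_pow_six : (Am t : ℂ) * ex t ^ 6 = al t := by
  rw [al_eq, ex, ← Complex.exp_nat_mul]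
  congr 2
  push_cast; ring

lemma conj_al_eq : conj (al t) = (Am t : ℂ) * Complex.exp (-(ph t) * Complex.I) := by
  rw [al_eq, map_mul, ← Complex.exp_conj]
  simp

lemma Q_mul_ex (r : ℕ) : Q r (al t) (conj (al t)) * ex t =
    (Am t : ℂ) ^ r * ∑ k ∈ range (r + 1), (cf r k : ℂ) *
      Complex.exp ((((r : ℝ) + 1 / 6 - 2 * k) * ph t : ℝ) * Complex.I) := by
  unfold Q
  rw [sum_mul, mul_sum]
  apply sum_congr rfl
  intro k hk
  rw [mem_range] at hk
  have hr : (Am t : ℂ) ^ r = (Am t : ℂ) ^ (r - k) * (Am t : ℂ) ^ k := by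
    rw [← pow_add]; congr 1; omega
  rw [conj_al_eq, al_eq, mul_pow, mul_pow, hr, ← Complex.exp_nat_mul, ← Complex.exp_nat_mul]
  have he : Complex.exp ((((r : ℝ) + 1 / 6 - 2 * k) * ph t : ℝ) * Complex.I) =
      Complex.exp (((r - k : ℕ) : ℂ) * (ph t * Complex.I)) * Complex.exp ((k : ℂ) * (-(ph t) * Complex.I)) * ex t := by
    rw [ex, ← Complex.exp_add, ← Complex.exp_add]
    congr 1
    rw [Nat.cast_sub (by omega)]
    push_cast; ring
  rw [he]; ring

/-- The imaginary part of `Q_r(α, ᾱ) e^{iφ/6}` is the remainder `Sf`, scaled. -/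
lemma Q_im (r : ℕ) : (Q r (al t) (conj (al t)) * ex t).im = Am t ^ r * Sf r (ph t) := by
  rw [Q_mul_ex, ← Complex.ofReal_pow, Complex.im_ofReal_mul, Complex.im_sum]
  congr 1
  unfold Sf
  apply sum_congr rfl
  intro k _
  rw [Complex.im_ofReal_mul, Complex.exp_ofReal_mul_I_im]

lemma abs_Q_im (ht : 89 ≤ t) (r : ℕ) : |(Q r (al t) (conj (al t)) * ex t).im| = Am t ^ r * Tf r (ph t) := by
  have h0 := (Tf_bounds r (a := ph t) (by linarith [ph_le' ht]) (ph t) ph_pos.le le_rfl).1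
  rw [Q_im, abs_mul, abs_of_nonneg (pow_nonneg Am_nonneg r)]
  congr 1
  rw [← abs_of_nonneg h0, Tf, abs_mul, abs_pow]; simp

lemma Q_norm (r : ℕ) : ‖Q r (al t) (conj (al t))‖ ≤ (4 * Am t) ^ r := by
  have h1 : ‖Q r (al t) (conj (al t))‖ = ‖Q r (al t) (conj (al t)) * ex t‖ := by
    rw [norm_mul, norm_ex, mul_one]
  rw [h1, Q_mul_ex, norm_mul, norm_pow, Complex.norm_real, Real.norm_of_nonneg Am_nonneg, mul_pow, mul_comm (4 ^ r)]
  apply mul_le_mul_of_nonneg_left _ (pow_nonneg Am_nonneg r)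
  refine (norm_sum_le _ _).trans ?_
  have h2 : ∀ k ∈ range (r + 1), ‖(cf r k : ℂ) *
      Complex.exp ((((r : ℝ) + 1 / 6 - 2 * k) * ph t : ℝ) * Complex.I)‖ = cf r k := by
    intro k hk
    rw [mem_range] at hk
    rw [norm_mul, Complex.norm_exp_ofReal_mul_I, mul_one, Complex.norm_real,
      Real.norm_of_nonneg (cf_nonneg r k (by omega))]
  rw [sum_congr rfl h2, cf_sum]
  have := Nat.choose_le_two_pow (2 * r) r
  have h4 : (2 : ℕ) ^ (2 * r) = 4 ^ r := by rw [pow_mul]; norm_num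
  rw [h4] at this
  exact_mod_cast this

/-- Since `1 - cos φ` is about `φ² / 2`, with `φ` about `3√3 / (2 sh t)`, the factor gained by one Padé
step is at most `27 / sh t`. -/
lemma cbound_upper (ht : 89 ≤ t) : 4 * Am t * (2 * (1 - Real.cos (ph t))) ≤ 27 / sh t := by
  have h1 := sh_ge ht
  have hA := Am_pos ht
  have h2 := sh_le_Am ht
  have h3 := Am_sq t
  rw [cos_ph ht]
  have : 4 * Am t * (2 * (1 - sh t / Am t)) = 8 * (Am t - sh t) := by field_simp; ring
  rw [this, le_div_iff₀ (by linarith)]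
  nlinarith [mul_nonneg (sub_nonneg.2 h2) (sub_nonneg.2 h2)]

lemma cbound_lower (ht : 89 ≤ t) : 27 / (4 * Am t ^ 2) ≤ 2 * (1 - Real.cos (ph t)) := by
  have h1 := sh_ge ht
  have hA := Am_pos ht
  have h2 := sh_le_Am ht
  have h3 := Am_sq t
  rw [cos_ph ht, div_le_iff₀ (by positivity)]
  have : 2 * (1 - sh t / Am t) * (4 * Am t ^ 2) = 8 * Am t * (Am t - sh t) := by field_simp; ring
  rw [this]
  nlinarith [mul_nonneg (sub_nonneg.2 h2) (sub_nonneg.2 h2)]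

/-- A nonreal Eisenstein integer `η`, of absolute value between `X` and `√3 X`, for which `η e^{iφ/6}`
is very close to the real axis. For the `η` coming from a pair `(x, y)`, `X` is
`√(x² + x y + y²)`. -/
structure Sol (t : ℤ) (X : ℝ) (η : ℂ) : Prop where
  mem : η ∈ Eis
  Xsq : 13 ≤ X ^ 2
  Xpos : 0 < X
  lower : X ≤ ‖η‖
  upper : ‖η‖ ≤ √3 * X
  im_le : |(η * ex t).im| ≤ ‖η‖ * (83 / X ^ 6)
  im_ne : η.im ≠ 0

lemma im_mul_conj_ex (P η : ℂ) : (P * conj η).im = (P * ex t).im * (η * ex t).re - (P * ex t).re * (η * ex t).im := by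
  have h : P * conj η = (P * ex t) * conj (η * ex t) := by
    rw [map_mul]
    have : ex t * conj (ex t) = 1 := by
      rw [Complex.mul_conj, Complex.normSq_eq_norm_sq, norm_ex]; norm_num
    linear_combination (-P * conj η) * this
  rw [h, Complex.mul_im, Complex.conj_re, Complex.conj_im]; ring

lemma Eis_im {z : ℂ} (h : z ∈ Eis) (h0 : z.im ≠ 0) : √3 / 2 ≤ |z.im| := by
  obtain ⟨a, b, rfl⟩ := h
  have : ((a : ℂ) + b * om).im = b * (√3 / 2) := by simp [om]
  rw [this] at h0 ⊢
  have hb : b ≠ 0 := by rintro rfl; simp at h0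
  have hb1 : (1 : ℝ) ≤ |(b : ℝ)| := by exact_mod_cast Int.one_le_abs hb
  rw [abs_mul, abs_of_nonneg (by positivity : 0 ≤ √3 / 2)]
  nlinarith [Real.sqrt_nonneg 3]

lemma norm_mul_ex (z : ℂ) : ‖z * ex t‖ = ‖z‖ := by rw [norm_mul, norm_ex, mul_one]

/-- The Eisenstein integer `P η̄` has imaginary part at least `√3/2` in absolute value unless it is
real, whereas two numbers close to the same line have a small `Im (P η̄)`. -/
lemma core {P η : ℂ} (hP : P ∈ Eis) (hη : η ∈ Eis) (h0 : (P * conj η).im ≠ 0) :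
    √3 / 2 ≤ |(P * ex t).im| * ‖η‖ + ‖P‖ * |(η * ex t).im| := by
  have h1 := Eis_im (Eis.mul_mem hP (conj_mem hη)) h0
  rw [im_mul_conj_ex (t := t)] at h1
  refine h1.trans ((abs_sub _ _).trans ?_)
  rw [abs_mul, abs_mul]
  have h2 := Complex.abs_re_le_norm (η * ex t)
  have h3 := Complex.abs_re_le_norm (P * ex t)
  rw [norm_mul_ex] at h2 h3
  gcongr

/-- If `P` and `η` are parallel, they make the same angle with the line of `e^{-iφ/6}`. -/
lemma core_parallel {P η : ℂ} (h0 : (P * conj η).im = 0) :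
    |(P * ex t).im| * ‖η‖ = ‖P‖ * |(η * ex t).im| := by
  rw [im_mul_conj_ex (t := t)] at h0
  rw [← norm_mul_ex (t := t) P, ← norm_mul_ex (t := t) η]
  rw [← abs_of_nonneg (norm_nonneg (η * ex t)), ← abs_of_nonneg (norm_nonneg (P * ex t)), ← abs_mul,
    ← abs_mul, ← sq_eq_sq_iff_abs_eq_abs, mul_pow, mul_pow, ← Complex.normSq_eq_norm_sq,
    ← Complex.normSq_eq_norm_sq, Complex.normSq_apply, Complex.normSq_apply]
  linear_combination ((P * ex t).im * (η * ex t).re + (P * ex t).re * (η * ex t).im) * h0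

end Sextic

/-! ### The gap principle -/

namespace Sextic

open Finset
variable {t : ℤ}
local notation "conj" => starRingEnd ℂ

lemma sum_lt_sqrt3 {a b : ℝ} (ha : a ≤ 0.43) (hb : b ≤ 0.43) (h : √3 / 2 ≤ a + b) : False := by
  linarith [lt_sqrt3]

lemma Sol.X_gt {X : ℝ} {η : ℂ} (h : Sol t X η) : 3.6 < X := by
  nlinarith [h.Xsq, h.Xpos]

/-- Bound for the second term on the right of `core`. -/
lemma Sol.second {X : ℝ} {η : ℂ} (h : Sol t X η) {N : ℝ} (hN0 : 0 ≤ N) (hN : 335 * N ≤ X ^ 5) :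
    N * |(η * ex t).im| ≤ 0.43 := by
  have hX := h.Xpos
  have h1 : |(η * ex t).im| ≤ √3 * X * (83 / X ^ 6) :=
    h.im_le.trans (mul_le_mul_of_nonneg_right h.upper (by positivity))
  have h2 : √3 * X * (83 / X ^ 6) = 83 * √3 / X ^ 5 := by field_simp
  rw [h2] at h1
  calc N * |(η * ex t).im| ≤ N * (83 * √3 / X ^ 5) := by gcongr
    _ = (83 * √3 * N) / X ^ 5 := by ring
    _ ≤ 0.43 := by
      rw [div_le_iff₀ (by positivity)]
      have := sqrt3_lt
      nlinarith [mul_nonneg hN0 (Real.sqrt_nonneg 3)]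

/-- The gap principle. If `X` lies between the bounds `hL1`, `hL3` and `hU` attached to the order `r`,
the Eisenstein integer `P` obtained from the Padé polynomial contradicts the closeness of `η`: when
`P η̄` is not real both terms in `core` are too small (`hU`, `hL1`), and when it is real the lower
bound `Tf_lower` shows that `P`, hence `η`, is too far from the line (`hL3`). -/
theorem pade_step (ht : 89 ≤ t) {X : ℝ} {η : ℂ} (h : Sol t X η) (r : ℕ)
    (hU : X * 27 ^ r ≤ 0.57 * sh t * G r * sh t ^ r)
    (hL1 : 335 * (16 * Am t) ^ r ≤ G r * X ^ 5)
    (hL3 : r = 0 ∨ 715 * (r + 1) * sh t * (16 * Am t ^ 2 / 27) ^ r ≤ X ^ 6) : False := by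
  have hs := sh_ge ht
  have hA := Am_pos ht
  have hX := h.Xpos
  have hG : (0 : ℝ) < G r := by exact_mod_cast G_pos r
  obtain ⟨P, hP, hPQ⟩ := exists_P r t
  have hPn : ‖P‖ = 4 ^ r * ‖Q r (al t) (conj (al t))‖ / G r := by
    rw [eq_div_iff hG.ne']
    have := congrArg norm hPQ
    rw [norm_mul, norm_mul, norm_pow] at this
    simp only [Complex.norm_natCast, Complex.norm_ofNat] at this
    linarith
  have hPe : |(P * ex t).im| = (4 * Am t) ^ r * Tf r (ph t) / G r := by
    rw [eq_div_iff hG.ne', mul_pow, mul_assoc, ← abs_Q_im ht]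
    have h1 : (4 ^ r * (Q r (al t) (conj (al t)) * ex t)) = G r * (P * ex t) := by
      linear_combination (ex t) * hPQ
    have h2 : (((4 ^ r : ℝ) : ℂ) * (Q r (al t) (conj (al t)) * ex t)).im = (((G r : ℝ) : ℂ) * (P * ex t)).im := by
      push_cast; rw [h1]
    rw [Complex.im_ofReal_mul, Complex.im_ofReal_mul] at h2
    have h3 := congrArg abs h2
    rw [abs_mul, abs_mul, abs_of_nonneg hG.le, abs_of_nonneg (by positivity : (0 : ℝ) ≤ 4 ^ r)] at h3
    linarith
  have hPn' : ‖P‖ ≤ (16 * Am t) ^ r / G r := by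
    rw [hPn]
    have h1 := Q_norm (t := t) r
    have h2 : (16 * Am t) ^ r = 4 ^ r * (4 * Am t) ^ r := by rw [← mul_pow]; congr 1; ring
    rw [h2]; gcongr
  have hTb := Tf_bounds r (a := ph t) (by linarith [ph_le' ht]) (ph t) ph_pos.le le_rfl
  have hcl : 0 < 2 * (1 - Real.cos (ph t)) := lt_of_lt_of_le (by positivity) (cbound_lower ht)
  -- for `P η̄` real, `r = 0` gives `P = 1`, so `η` is real; otherwise `Tf_lower` applies
  by_cases h0 : (P * conj η).im = 0
  · rcases hL3 with rfl | hL3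
    · have hP1 : P = 1 := by
        have : G 0 = 1 := by simp [G]
        simp [this, Q, cf] at hPQ
        exact hPQ.symm
      rw [hP1, one_mul, Complex.conj_im] at h0
      exact h.im_ne (by linarith)
    · have h1 := core_parallel (t := t) h0
      have hη : 0 < ‖η‖ := lt_of_lt_of_le hX h.lower
      have h2 : |(P * ex t).im| ≤ ‖P‖ * (83 / X ^ 6) := by
        apply le_of_mul_le_mul_right _ hη
        rw [h1]
        calc ‖P‖ * |(η * ex t).im| ≤ ‖P‖ * (‖η‖ * (83 / X ^ 6)) :=
              mul_le_mul_of_nonneg_left h.im_le (norm_nonneg _)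
          _ = _ := by ring
      have h3 : Tf r (ph t) ≤ 4 ^ r * (83 / X ^ 6) := by
        have h4 : (4 * Am t) ^ r * Tf r (ph t) / G r ≤ (16 * Am t) ^ r / G r * (83 / X ^ 6) := by
          rw [← hPe]
          exact h2.trans (mul_le_mul_of_nonneg_right hPn' (by positivity))
        have h5 : (16 * Am t) ^ r / G r * (83 / X ^ 6) = ((4 * Am t) ^ r / G r) * (4 ^ r * (83 / X ^ 6)) := by
          have : (16 * Am t) ^ r = 4 ^ r * (4 * Am t) ^ r := by rw [← mul_pow]; congr 1; ring
          rw [this]; ring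
        rw [h5, mul_div_right_comm] at h4
        exact le_of_mul_le_mul_left h4 (by positivity)
      have hlow := Tf_lower r (ph_pos (t := t)) (by linarith [ph_le' ht]) (ph t) ph_pos.le le_rfl
      have hr0 : (0 : ℝ) < (r : ℝ) + 1 := by positivity
      have h6 : sh t / (30 * √3 * (r + 1)) * (27 / (4 * Am t ^ 2)) ^ (r + 1) ≤ 4 ^ r * (83 / X ^ 6) := by
        refine le_trans ?_ (hlow.trans h3)
        have h7 : 2 ^ r * (1 - Real.cos (ph t)) ^ (r + 1) = (2 * (1 - Real.cos (ph t))) ^ (r + 1) / 2 := by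
          rw [mul_pow]; ring
        rw [h7]
        have h8 : (27 / (4 * Am t ^ 2)) ^ (r + 1) ≤ (2 * (1 - Real.cos (ph t))) ^ (r + 1) :=
          pow_le_pow_left₀ (by positivity) (cbound_lower ht) _
        have h9 : sh t / (30 * √3 * (r + 1)) ≤ 1 / (5 * ph t) * ((1 / 2 + 1 / (2 * ((r : ℝ) + 1))) / (r + 1)) / 2 := by
          have ha : sh t / (30 * √3 * (r + 1)) = 1 / (5 * ((3 * √3 / 2) / sh t)) * ((1 / 2) / (r + 1)) / 2 := by
            field_simp
            norm_num
          rw [ha]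
          have := ph_le ht
          have := ph_pos (t := t)
          have : (0 : ℝ) ≤ 1 / (2 * ((r : ℝ) + 1)) := by positivity
          gcongr
          linarith
        calc sh t / (30 * √3 * (r + 1)) * (27 / (4 * Am t ^ 2)) ^ (r + 1)
            ≤ (1 / (5 * ph t) * ((1 / 2 + 1 / (2 * ((r : ℝ) + 1))) / (r + 1)) / 2) * (2 * (1 - Real.cos (ph t))) ^ (r + 1) := by
              apply mul_le_mul h9 h8 (by positivity)
              have := ph_pos (t := t)
              positivity
          _ = _ := by ring
      have hXp : (0 : ℝ) < X ^ 6 := by positivity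
      have h10 : sh t * (27 / (4 * Am t ^ 2)) ^ (r + 1) * X ^ 6 ≤ 4 ^ r * 83 * (30 * √3 * (r + 1)) := by
        rw [div_mul_eq_mul_div, ← mul_div_assoc, div_le_div_iff₀ (by positivity) hXp] at h6
        exact h6
      have h11 : sh t * (27 / (4 * Am t ^ 2)) ^ (r + 1) * (715 * (r + 1) * sh t * (16 * Am t ^ 2 / 27) ^ r)
          ≤ 4 ^ r * 83 * (30 * √3 * (r + 1)) :=
        (mul_le_mul_of_nonneg_left hL3 (by positivity)).trans h10
      have h12 : sh t * (27 / (4 * Am t ^ 2)) ^ (r + 1) * (715 * (r + 1) * sh t * (16 * Am t ^ 2 / 27) ^ r)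
          = 4 ^ r * (r + 1) * (715 * sh t ^ 2 * (27 / (4 * Am t ^ 2))) := by
        have : (4 : ℝ) ^ r = (27 / (4 * Am t ^ 2)) ^ r * (16 * Am t ^ 2 / 27) ^ r := by
          rw [← mul_pow]; congr 1; field_simp; norm_num
        rw [this]; ring
      have h13 : 715 * sh t ^ 2 * (27 / (4 * Am t ^ 2)) ≤ 2490 * √3 := by
        rw [h12] at h11
        apply le_of_mul_le_mul_left _ (by positivity : (0 : ℝ) < 4 ^ r * (r + 1))
        linarith
      rw [← mul_div_assoc, div_le_iff₀ (by positivity), Am_sq] at h13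
      nlinarith [sqrt3_lt, Real.sqrt_nonneg 3]
  · refine sum_lt_sqrt3 ?_ ?_ (core (t := t) hP h.mem h0)
    · rw [hPe]
      have h1 : (4 * Am t) ^ r * Tf r (ph t) ≤ (27 / sh t) ^ r * ((3 * √3 / 2) / sh t / 6) := by
        have h2 : Real.sin (ph t / 6) ≤ (3 * √3 / 2) / sh t / 6 := by
          have := ph_le ht
          refine (Real.sin_le (by have := ph_pos (t := t); positivity)).trans (by linarith)
        have h3 : 0 ≤ Real.sin (ph t / 6) := by
          apply Real.sin_nonneg_of_nonneg_of_le_pi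
          · have := ph_pos (t := t); positivity
          · have := ph_le' ht
            linarith [Real.pi_gt_three]
        calc (4 * Am t) ^ r * Tf r (ph t)
            ≤ (4 * Am t) ^ r * ((2 * (1 - Real.cos (ph t))) ^ r * Real.sin (ph t / 6)) := by
              gcongr; exact hTb.2
          _ = (4 * Am t * (2 * (1 - Real.cos (ph t)))) ^ r * Real.sin (ph t / 6) := by
              rw [mul_pow (4 * Am t)]; ring
          _ ≤ (27 / sh t) ^ r * ((3 * √3 / 2) / sh t / 6) := by
              apply mul_le_mul _ h2 h3 (by positivity)
              exact pow_le_pow_left₀ (by positivity) (cbound_upper ht) _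
      calc (4 * Am t) ^ r * Tf r (ph t) / G r * ‖η‖
          ≤ ((27 / sh t) ^ r * ((3 * √3 / 2) / sh t / 6)) / G r * (√3 * X) := by
            have := h.upper
            have h0 := hTb.1
            gcongr
        _ = (√3 * √3) * (X * 27 ^ r) / (4 * sh t * G r * sh t ^ r) := by
            rw [div_pow]; field_simp; norm_num
        _ ≤ 0.43 := by
            rw [sqrt3_sq, div_le_iff₀ (by positivity)]
            have : 0 < sh t * G r * sh t ^ r := by positivity
            nlinarith
    · apply h.second (norm_nonneg _)
      have h2 := mul_le_mul_of_nonneg_left hPn' (by norm_num : (0 : ℝ) ≤ 335)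
      refine h2.trans ?_
      rw [← mul_div_assoc, div_le_iff₀ hG]
      linarith
end Sextic

/-! ### From solutions of the inequality to approximations; explicit approximations -/

namespace Sextic

open Finset
variable {t : ℤ}
local notation "conj" => starRingEnd ℂ

/-- The Eisenstein integer attached to `(x, y)`. -/
noncomputable def xi (x y : ℤ) : ℂ := x - om * y

lemma xi_mem (x y : ℤ) : xi x y ∈ Eis := ⟨x, -y, by simp [xi]; ring⟩

lemma xi_re (x y : ℤ) : (xi x y).re = x + y / 2 := by simp [xi, om]; ring
lemma xi_im (x y : ℤ) : (xi x y).im = -(√3 / 2) * y := by simp [xi, om]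

lemma xi_norm_sq (x y : ℤ) : ‖xi x y‖ ^ 2 = ((x ^ 2 + x * y + y ^ 2 : ℤ) : ℝ) := by
  rw [← Complex.normSq_eq_norm_sq, Complex.normSq_apply, xi_re, xi_im]
  push_cast
  linear_combination ((y : ℝ) ^ 2 / 4) * sqrt3_sq

lemma im_pow_six (z : ℂ) : (z ^ 6).im = 2 * z.re * z.im * (3 * z.re ^ 2 - z.im ^ 2) * (z.re ^ 2 - 3 * z.im ^ 2) := by
  have : z ^ 6 = z * z * (z * z) * (z * z) := by ring
  rw [this]
  simp only [Complex.mul_im, Complex.mul_re]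
  ring

lemma re_pow_six (z : ℂ) : (z ^ 6).re = (z.re ^ 2 - z.im ^ 2) ^ 3 - 3 * (z.re ^ 2 - z.im ^ 2) * (2 * z.re * z.im) ^ 2 := by
  have : z ^ 6 = z * z * (z * z) * (z * z) := by ring
  rw [this]
  simp only [Complex.mul_im, Complex.mul_re]
  ring

/-- The link between the sextic form and the powers of Eisenstein integers. -/
lemma im_al_xi (x y : ℤ) : (al t * xi x y ^ 6).im = (3 * √3 / 2) * ((F6 t x y : ℤ) : ℝ) := by
  rw [Complex.mul_im, al_re, al_im, im_pow_six, re_pow_six, xi_re, xi_im]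
  have h3 : √3 ^ 2 = 3 := by rw [pow_two]; exact sqrt3_sq
  have h4 : √3 ^ 4 = 9 := by
    calc √3 ^ 4 = (√3 ^ 2) ^ 2 := by ring
      _ = 9 := by rw [h3]; norm_num
  have h5 : √3 ^ 6 = 27 := by
    calc √3 ^ 6 = (√3 ^ 2) ^ 3 := by ring
      _ = 27 := by rw [h3]; norm_num
  simp only [sh, F6]
  push_cast
  set q := √3
  have e1 : (-(q / 2) * (y : ℝ)) ^ 2 = 3 / 4 * y ^ 2 := by rw [mul_pow, neg_pow, div_pow, h3]; ring
  have e2 : (2 * ((x : ℝ) + y / 2) * (-(q / 2) * y)) ^ 2 = 3 * (x + y / 2) ^ 2 * y ^ 2 := by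
    rw [mul_pow, mul_pow, e1]; ring
  rw [e1, e2]
  ring

lemma Am_im (x y : ℤ) : Am t * |((xi x y * ex t) ^ 6).im| = (3 * √3 / 2) * |((F6 t x y : ℤ) : ℝ)| := by
  have h : al t * xi x y ^ 6 = (Am t : ℂ) * (xi x y * ex t) ^ 6 := by
    rw [mul_pow, ← ex_pow_six]; ring
  have h2 := im_al_xi (t := t) x y
  rw [h, Complex.im_ofReal_mul] at h2
  have h3 := congrArg abs h2
  rwa [abs_mul, abs_mul, abs_of_nonneg Am_nonneg, abs_of_nonneg (by positivity : 0 ≤ 3 * √3 / 2)] at h3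

/-- Multipliers in `ℤ[ω]` of norm `1` or `3` on the line of argument `-kπ/6`. -/
lemma exists_mu (k : ℤ) : ∃ μ ∈ Eis, (‖μ‖ ^ 2 = 1 ∨ ‖μ‖ ^ 2 = 3) ∧
    (μ * Complex.exp ((k * Real.pi / 6 : ℝ) * Complex.I)).im = 0 := by
  have hI : (Complex.exp ((Real.pi / 3 : ℝ) * Complex.I)) = ⟨1 / 2, √3 / 2⟩ := by
    apply Complex.ext
    · rw [Complex.exp_ofReal_mul_I_re]; simp
    · rw [Complex.exp_ofReal_mul_I_im]; simp
  have h6 : (Complex.exp ((Real.pi / 6 : ℝ) * Complex.I)) = ⟨√3 / 2, 1 / 2⟩ := by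
    apply Complex.ext
    · rw [Complex.exp_ofReal_mul_I_re]; simp
    · rw [Complex.exp_ofReal_mul_I_im]; simp
  have hunit : (-om) * Complex.exp ((Real.pi / 3 : ℝ) * Complex.I) = 1 := by
    rw [hI]; apply Complex.ext <;> simp [om]
    · nlinarith [sqrt3_sq]
    · ring
  have hk1 : ((1 - om) * Complex.exp ((Real.pi / 6 : ℝ) * Complex.I)) = (√3 : ℝ) := by
    rw [h6]; apply Complex.ext <;> simp [om]
    · ring
    · nlinarith [sqrt3_sq]
  have hnu : ‖-om‖ = 1 := by
    have := congrArg norm hunit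
    rwa [norm_mul, Complex.norm_exp_ofReal_mul_I, mul_one, norm_one] at this
  have hnk : ‖1 - om‖ = √3 := by
    have := congrArg norm hk1
    rwa [norm_mul, Complex.norm_exp_ofReal_mul_I, mul_one, Complex.norm_real,
      Real.norm_of_nonneg (Real.sqrt_nonneg 3)] at this
  have hpi : ∀ m : ℤ, ∃ c : ℝ, Complex.exp ((m * Real.pi : ℝ) * Complex.I) = c := by
    intro m
    refine ⟨Real.cos (m * Real.pi), ?_⟩
    apply Complex.ext
    · rw [Complex.exp_ofReal_mul_I_re, Complex.ofReal_re]
    · rw [Complex.exp_ofReal_mul_I_im, Complex.ofReal_im, Real.sin_int_mul_pi]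
  -- write `k = 6 m + 2 j + b` with `b ∈ {0, 1}`
  obtain ⟨m, j, b, hb, hk⟩ : ∃ m : ℤ, ∃ j b : ℕ, b < 2 ∧ k = 6 * m + 2 * j + b :=
    ⟨k / 6, (k % 6 / 2).toNat, (k % 2).toNat, by omega, by omega⟩
  obtain ⟨c, hc⟩ := hpi m
  have hom : -om ∈ Eis := Eis.neg_mem om_mem
  have hex : Complex.exp ((k * Real.pi / 6 : ℝ) * Complex.I) = c *
      (Complex.exp ((Real.pi / 3 : ℝ) * Complex.I) ^ j * Complex.exp ((Real.pi / 6 : ℝ) * Complex.I) ^ b) := by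
    rw [← hc, ← Complex.exp_nat_mul, ← Complex.exp_nat_mul, ← Complex.exp_add, ← Complex.exp_add, hk]
    congr 1; push_cast; ring
  refine ⟨(-om) ^ j * (1 - om) ^ b, Eis.mul_mem (Eis.pow_mem hom j)
    (Eis.pow_mem (Eis.sub_mem Eis.one_mem om_mem) b), ?_, ?_⟩
  · rw [norm_mul, norm_pow, norm_pow, hnu, hnk, one_pow, one_mul]
    interval_cases b
    · left; simp
    · right; rw [pow_one, pow_two, sqrt3_sq]
  · have : (-om) ^ j * (1 - om) ^ b * Complex.exp ((k * Real.pi / 6 : ℝ) * Complex.I) =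
        ((c * √3 ^ b : ℝ) : ℂ) := by
      rw [hex]
      calc _ = (c : ℂ) * ((-om) * Complex.exp ((Real.pi / 3 : ℝ) * Complex.I)) ^ j *
            ((1 - om) * Complex.exp ((Real.pi / 6 : ℝ) * Complex.I)) ^ b := by
            rw [mul_pow, mul_pow]; ring
        _ = _ := by rw [hunit, hk1]; push_cast; ring
    rw [this, Complex.ofReal_im]

/-- A primitive solution with `x² + xy + y² ≥ 13` yields a `Sol`. -/
lemma exists_sol (ht : 89 ≤ t) (x y : ℤ) (hF : |F6 t x y| ≤ 120 * t + 323) (hg : Int.gcd x y = 1)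
    (h13 : 13 ≤ x ^ 2 + x * y + y ^ 2) : ∃ X η, Sol t X η := by
  have hs := sh_ge ht
  have hA := Am_pos ht
  have hsA := sh_le_Am ht
  set X := ‖xi x y‖ with hXdef
  have hXsq : (13 : ℝ) ≤ X ^ 2 := by
    rw [xi_norm_sq]; exact_mod_cast h13
  have hX0 : 0 ≤ X := norm_nonneg _
  have hX : 0 < X := by
    rcases hX0.eq_or_lt with h | h
    · rw [← h] at hXsq; norm_num at hXsq
    · exact h
  -- the sine of six times the argument is small
  have hF' : |((F6 t x y : ℤ) : ℝ)| ≤ 120 * sh t + 143 := by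
    have : ((|F6 t x y| : ℤ) : ℝ) ≤ ((120 * t + 323 : ℤ) : ℝ) := by exact_mod_cast hF
    rw [Int.cast_abs] at this
    refine this.trans ?_
    unfold sh; push_cast; linarith
  have him : |((xi x y * ex t) ^ 6).im| ≤ 316 := by
    have h1 := Am_im (t := t) x y
    have h2 : (3 * √3 / 2) * |((F6 t x y : ℤ) : ℝ)| ≤ 316 * sh t := by
      have := sqrt3_lt
      have h0 := Real.sqrt_nonneg 3
      calc (3 * √3 / 2) * |((F6 t x y : ℤ) : ℝ)| ≤ (3 * √3 / 2) * (120 * sh t + 143) := by gcongr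
        _ ≤ (3 * 1.73206 / 2) * (120 * sh t + 143) := by gcongr
        _ ≤ _ := by linarith
    rw [← h1] at h2
    have h3 : Am t * |((xi x y * ex t) ^ 6).im| ≤ Am t * 316 := h2.trans (by linarith)
    exact le_of_mul_le_mul_left h3 hA
  set z := xi x y * ex t with hz
  have hzn : ‖z‖ = X := norm_mul_ex _
  set θ := Complex.arg z
  have hze : z = (X : ℂ) * Complex.exp (θ * Complex.I) := by
    rw [← hzn]; exact (Complex.norm_mul_exp_arg_mul_I z).symm
  have hsin : |Real.sin (6 * θ)| ≤ 316 / X ^ 6 := by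
    have : (z ^ 6).im = X ^ 6 * Real.sin (6 * θ) := by
      rw [hze, mul_pow, ← Complex.exp_nat_mul, ← Complex.ofReal_pow, Complex.im_ofReal_mul]
      have : ((6 : ℕ) : ℂ) * (θ * Complex.I) = ((6 * θ : ℝ) : ℂ) * Complex.I := by push_cast; ring
      rw [this, Complex.exp_ofReal_mul_I_im]
    rw [this, abs_mul, abs_of_nonneg (by positivity : (0 : ℝ) ≤ X ^ 6)] at him
    rw [le_div_iff₀ (by positivity)]; linarith
  -- `k π / 6` is the multiple of `π / 6` nearest to the argument of `z`
  set k := round (6 * θ / Real.pi) with hk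
  set β := θ - k * Real.pi / 6 with hβ
  have hpi := Real.pi_pos
  have hβ1 : |6 * β| ≤ Real.pi / 2 := by
    have h := abs_sub_round (6 * θ / Real.pi)
    have h1 : 6 * β = (6 * θ / Real.pi - k) * Real.pi := by rw [hβ]; field_simp
    rw [h1, abs_mul, abs_of_pos hpi]
    rw [← hk] at h
    nlinarith
  have hsinβ : |Real.sin (6 * β)| = |Real.sin (6 * θ)| := by
    have : 6 * β = 6 * θ - k * Real.pi := by rw [hβ]; ring
    rw [this, Real.sin_sub, Real.sin_int_mul_pi, mul_zero, sub_zero, abs_mul, Real.abs_cos_int_mul_pi,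
      mul_one]
  have hJ : 2 / Real.pi * |6 * β| ≤ |Real.sin (6 * β)| := Real.mul_abs_le_abs_sin hβ1
  have hβ2 : |β| ≤ 83 / X ^ 6 := by
    rw [hsinβ] at hJ
    have h1 := hJ.trans hsin
    rw [abs_mul, abs_of_pos (by norm_num : (0 : ℝ) < 6)] at h1
    have h2 : |β| ≤ (316 * Real.pi / 12) / X ^ 6 := by
      have : |β| = (Real.pi / 12) * (2 / Real.pi * (6 * |β|)) := by field_simp; ring
      rw [this]
      calc _ ≤ (Real.pi / 12) * (316 / X ^ 6) := by gcongr
        _ = _ := by ring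
    -- `316 π / 12 < 83`
    refine h2.trans ?_
    have := Real.pi_lt_d4
    gcongr; linarith
  obtain ⟨μ, hμ, hμn, hμi⟩ := exists_mu k
  have hμ1 : 1 ≤ ‖μ‖ := by
    have := norm_nonneg μ
    rcases hμn with h | h <;> nlinarith
  have hμ3 : ‖μ‖ ≤ √3 := by
    apply Real.le_sqrt_of_sq_le
    rcases hμn with h | h <;> rw [h]
    norm_num
  have hηn : ‖xi x y * μ‖ = X * ‖μ‖ := by rw [norm_mul]
  refine ⟨X, xi x y * μ, Eis.mul_mem (xi_mem x y) hμ, hXsq, hX, ?_, ?_, ?_, ?_⟩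
  · rw [hηn]; nlinarith
  · rw [hηn]; nlinarith
  · have h1 : xi x y * μ * ex t = ((X : ℝ) : ℂ) * ((μ * Complex.exp ((k * Real.pi / 6 : ℝ) * Complex.I)) *
        Complex.exp ((β : ℝ) * Complex.I)) := by
      have : Complex.exp (θ * Complex.I) = Complex.exp ((k * Real.pi / 6 : ℝ) * Complex.I) *
          Complex.exp ((β : ℝ) * Complex.I) := by
        rw [← Complex.exp_add]; congr 1; rw [hβ]; push_cast; ring
      calc xi x y * μ * ex t = μ * z := by rw [hz]; ring
        _ = _ := by rw [hze, this]; ring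
    set w := μ * Complex.exp ((k * Real.pi / 6 : ℝ) * Complex.I) with hw
    have hwn : ‖w‖ = ‖μ‖ := by rw [hw, norm_mul, Complex.norm_exp_ofReal_mul_I, mul_one]
    rw [h1, Complex.im_ofReal_mul, Complex.mul_im, hμi, zero_mul, add_zero, Complex.exp_ofReal_mul_I_im,
      abs_mul, abs_mul, hηn, abs_of_pos hX, mul_assoc]
    have h2 : |w.re| ≤ ‖μ‖ := by rw [← hwn]; exact Complex.abs_re_le_norm w
    have h3 : |Real.sin β| ≤ 83 / X ^ 6 := (Real.abs_sin_le_abs).trans hβ2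
    gcongr
  -- if `ξ μ` were an integer `a`, primitivity would give `a ∣ N(μ)`, so `|a| ≤ 3 < X`
  · intro him0
    obtain ⟨a, b, hab⟩ := Eis.mul_mem (xi_mem x y) hμ
    obtain ⟨c, d, hcd⟩ := conj_mem hμ
    have hb : b = 0 := by
      rw [hab] at him0
      have : ((a : ℂ) + b * om).im = b * (√3 / 2) := by simp [om]
      rw [this] at him0
      have h3 : √3 / 2 ≠ 0 := by have := lt_sqrt3; positivity
      exact_mod_cast (mul_eq_zero.1 him0).resolve_right h3
    rw [hb] at hab
    simp only [Int.cast_zero, zero_mul, add_zero] at hab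
    obtain ⟨N, hN, hN3⟩ : ∃ N : ℤ, (μ * conj μ = N) ∧ (N = 1 ∨ N = 3) := by
      rcases hμn with h | h
      · exact ⟨1, by rw [Complex.mul_conj, Complex.normSq_eq_norm_sq, h]; simp, Or.inl rfl⟩
      · exact ⟨3, by rw [Complex.mul_conj, Complex.normSq_eq_norm_sq, h]; simp, Or.inr rfl⟩
    have hrel : (N : ℂ) * xi x y = a * (c + d * om) := by
      rw [← hcd, ← hab, ← hN]; ring
    have hre := congrArg Complex.im hrel
    have hre2 := congrArg Complex.re hrel
    simp [xi, om] at hre hre2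
    have h3 : √3 ≠ 0 := by have := lt_sqrt3; positivity
    have hy : N * y = -(a * d) := by
      have : (N : ℝ) * y = -(a * d) := by
        apply mul_left_cancel₀ h3; linarith
      exact_mod_cast this
    have hx : N * x = a * c := by
      have hy' : (N : ℝ) * y = -(a * d) := by exact_mod_cast hy
      have : (N : ℝ) * x = a * c := by linarith
      exact_mod_cast this
    have hdvd : a ∣ N := by
      have h1 : a ∣ N * x := ⟨c, hx⟩
      have h2 : a ∣ N * y := ⟨-d, by rw [hy]; ring⟩
      obtain ⟨u, v, huv⟩ := Int.isCoprime_iff_gcd_eq_one.2 hg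
      have : N = u * (N * x) + v * (N * y) := by linear_combination (-N) * huv
      rw [this]
      exact dvd_add (Dvd.dvd.mul_left h1 _) (Dvd.dvd.mul_left h2 _)
    have ha3 : |a| ≤ 3 := by
      have := Int.le_of_dvd (by rcases hN3 with h | h <;> rw [h] <;> norm_num) ((abs_dvd _ _).2 hdvd)
      rcases hN3 with h | h <;> omega
    have hna : X * ‖μ‖ = ((|a| : ℤ) : ℝ) := by
      rw [← hηn, hab, Complex.norm_intCast, Int.cast_abs]
    have : ((|a| : ℤ) : ℝ) ≤ 3 := by exact_mod_cast ha3
    nlinarith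

/-- If `|Im z⁶|` is small and `z` is close to the real axis, then `Im z` is small. -/
lemma im_bound {a b Y σ A Φ : ℝ} (hY0 : 0 < Y) (ha0 : 0 < a) (hb2 : b ^ 2 ≤ 0.01 * a ^ 2)
    (haY : 0.995 * Y ≤ a) (hs : 0 < σ) (hsA : σ ≤ A)
    (h4 : A * |2 * a * b * (3 * a ^ 2 - b ^ 2) * (a ^ 2 - 3 * b ^ 2)| = (3 * √3 / 2) * Φ)
    (hF : Φ ≤ 4 * σ * Y ^ 4) : |b| * Y ≤ 1.98 := by
  have h3a := sqrt3_lt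
  have hA0 : 0 ≤ A := by linarith
  have h5 : |2 * a * b * (3 * a ^ 2 - b ^ 2) * (a ^ 2 - 3 * b ^ 2)| =
      2 * a * |b| * (3 * a ^ 2 - b ^ 2) * (a ^ 2 - 3 * b ^ 2) := by
    rw [abs_mul, abs_mul, abs_mul, abs_mul, abs_of_pos ha0, abs_of_nonneg (by nlinarith : 0 ≤ 3 * a ^ 2 - b ^ 2),
      abs_of_nonneg (by nlinarith : 0 ≤ a ^ 2 - 3 * b ^ 2)]
    simp
  have h6 : 5.8 * a ^ 5 * |b| ≤ 2 * a * |b| * (3 * a ^ 2 - b ^ 2) * (a ^ 2 - 3 * b ^ 2) := by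
    have e1 : 2.99 * a ^ 2 ≤ 3 * a ^ 2 - b ^ 2 := by linarith
    have e2 : 0.97 * a ^ 2 ≤ a ^ 2 - 3 * b ^ 2 := by linarith
    have e3 : (2.99 * a ^ 2) * (0.97 * a ^ 2) ≤ (3 * a ^ 2 - b ^ 2) * (a ^ 2 - 3 * b ^ 2) :=
      mul_le_mul e1 e2 (by positivity) (by nlinarith)
    have e4 := mul_le_mul_of_nonneg_left e3 (by positivity : 0 ≤ 2 * a * |b|)
    have e5 : 0 ≤ a ^ 5 * |b| := by positivity
    calc 5.8 * a ^ 5 * |b| ≤ 2 * a * |b| * ((2.99 * a ^ 2) * (0.97 * a ^ 2)) := by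
          linear_combination 0.0006 * e5
      _ ≤ _ := e4
      _ = _ := by ring
  have h7 : (0.97 : ℝ) * Y ^ 5 ≤ a ^ 5 := by
    have := pow_le_pow_left₀ (by positivity) haY 5
    have hY5 : 0 < Y ^ 5 := by positivity
    rw [mul_pow] at this
    linarith
  have h8 : 5.8 * (0.97 * Y ^ 5) * |b| ≤ 2 * a * |b| * (3 * a ^ 2 - b ^ 2) * (a ^ 2 - 3 * b ^ 2) := by
    refine le_trans ?_ h6
    gcongr
  rw [h5] at h4
  have h9 : σ * (5.8 * (0.97 * Y ^ 5) * |b|) ≤ (3 * √3 / 2) * (4 * σ * Y ^ 4) := by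
    calc σ * (5.8 * (0.97 * Y ^ 5) * |b|) ≤ A * (5.8 * (0.97 * Y ^ 5) * |b|) := by gcongr
      _ ≤ A * (2 * a * |b| * (3 * a ^ 2 - b ^ 2) * (a ^ 2 - 3 * b ^ 2)) := by gcongr
      _ = (3 * √3 / 2) * Φ := h4
      _ ≤ _ := by gcongr
  have h10 : (σ * Y ^ 4) * (5.626 * (|b| * Y)) ≤ (σ * Y ^ 4) * (6 * √3) := by linarith
  have h11 := le_of_mul_le_mul_left h10 (by positivity)
  linarith

/-- An explicit approximation: if `F_t(p, q)` is small compared with `Y ^ 6`, `Y ^ 2 = p² + pq + q²`,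
then `p - ω q` plays the role of `P` in `core`, and `X` cannot satisfy both `335 Y ≤ X ^ 5` and
`8 X ≤ Y`. -/
lemma anchor (ht : 89 ≤ t) {X : ℝ} {η : ℂ} (h : Sol t X η) (p q : ℤ) (hq : 0 < q) (hp : 10 * q ≤ p)
    (hg : Int.gcd p q = 1) {Y : ℝ} (hY0 : 0 < Y) (hY : Y ^ 2 = p ^ 2 + p * q + q ^ 2)
    (hF : |((F6 t p q : ℤ) : ℝ)| ≤ 4 * sh t * Y ^ 4)
    (h1 : 335 * Y ≤ X ^ 5) (h2 : 8 * X ≤ Y) : False := by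
  have hs := sh_ge ht
  have hA := Am_pos ht
  have hsA := sh_le_Am ht
  have hX := h.Xpos
  have hYn : ‖xi p q‖ = Y := by
    have h3 := xi_norm_sq p q
    have : ‖xi p q‖ ^ 2 = Y ^ 2 := by rw [h3, hY]; push_cast; ring
    exact (sq_eq_sq₀ (norm_nonneg _) hY0.le).1 this
  set z := xi p q * ex t with hz
  have hex_re : (ex t).re = Real.cos (ph t / 6) := Complex.exp_ofReal_mul_I_re _
  have hex_im : (ex t).im = Real.sin (ph t / 6) := Complex.exp_ofReal_mul_I_im _
  have hph := ph_le' ht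
  have hph0 := ph_pos (t := t)
  have hsin0 : 0 ≤ Real.sin (ph t / 6) :=
    Real.sin_nonneg_of_nonneg_of_le_pi (by positivity) (by linarith [Real.pi_gt_three])
  have hsin1 : Real.sin (ph t / 6) ≤ 0.005 := (Real.sin_le (by positivity)).trans (by linarith)
  have hcos : 0.99 ≤ Real.cos (ph t / 6) := by
    have := Real.one_sub_sq_div_two_le_cos (x := ph t / 6)
    nlinarith
  have hcos1 := Real.cos_le_one (ph t / 6)
  have hqR : (0 : ℝ) < q := by exact_mod_cast hq
  have hpR : (10 : ℝ) * q ≤ p := by exact_mod_cast hp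
  set R : ℝ := p + q / 2 with hR
  set J : ℝ := √3 / 2 * q with hJ
  have h3a := sqrt3_lt
  have h3b := lt_sqrt3
  have hJ0 : 0 ≤ J := by positivity
  have hJR : J ≤ 0.0826 * R := by
    have := mul_le_mul_of_nonneg_right h3a.le hqR.le
    rw [hJ, hR]; linarith
  have hR0 : 0 < R := by rw [hR]; linarith
  have hzre : z.re = R * Real.cos (ph t / 6) + J * Real.sin (ph t / 6) := by
    rw [hz, Complex.mul_re, xi_re, xi_im, hex_re, hex_im, hR, hJ]; ring
  have hzim : z.im = R * Real.sin (ph t / 6) - J * Real.cos (ph t / 6) := by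
    rw [hz, Complex.mul_im, xi_re, xi_im, hex_re, hex_im, hR, hJ]; ring
  have hzre1 : 0.99 * R ≤ z.re := by
    have h4 := mul_le_mul_of_nonneg_left hcos hR0.le
    have h5 := mul_nonneg hJ0 hsin0
    rw [hzre]; linarith
  have hzim1 : |z.im| ≤ 0.09 * R := by
    have h4 := mul_le_mul_of_nonneg_left hsin1 hR0.le
    have h5 := mul_nonneg hR0.le hsin0
    have h6 := mul_le_mul_of_nonneg_left hcos1 hJ0
    have h7 := mul_nonneg hJ0 (by linarith : 0 ≤ Real.cos (ph t / 6))
    rw [hzim, abs_le]; constructor <;> linarith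
  have hb : |z.im| ≤ 0.1 * z.re := by linarith
  have ha0 : 0 < z.re := by linarith
  have hnz : z.re ^ 2 + z.im ^ 2 = Y ^ 2 := by
    have : ‖z‖ = Y := by rw [hz, norm_mul_ex, hYn]
    rw [← this, ← Complex.normSq_eq_norm_sq, Complex.normSq_apply]; ring
  have hb2 : z.im ^ 2 ≤ 0.01 * z.re ^ 2 := by
    have := pow_le_pow_left₀ (abs_nonneg z.im) hb 2
    rw [sq_abs, mul_pow] at this
    linarith
  have haY : 0.995 * Y ≤ z.re := by
    by_contra hcon
    push Not at hcon
    have h1 := pow_lt_pow_left₀ hcon ha0.le two_ne_zero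
    have hY2 : 0 < Y ^ 2 := by positivity
    rw [mul_pow] at h1
    linarith
  have him : |z.im| * Y ≤ 1.98 :=
    im_bound hY0 ha0 hb2 haY (by linarith) hsA (by rw [← im_pow_six, hz]; exact Am_im p q) hF
  by_cases h0 : (xi p q * conj η).im = 0
  · -- `η` is a multiple of `p - ω q`
    obtain ⟨a, b, hab⟩ := h.mem
    have hrel : p * b + q * a = 0 := by
      rw [hab, Complex.mul_im, Complex.conj_re, Complex.conj_im, xi_re, xi_im] at h0
      simp [om] at h0
      have h3 : √3 ≠ 0 := by positivity
      have : (p : ℝ) * b + q * a = 0 := by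
        apply mul_left_cancel₀ h3; linarith
      exact_mod_cast this
    have hqb : q ∣ b := by
      have h1 : q ∣ p * b := ⟨-a, by linarith⟩
      exact (Int.isCoprime_iff_gcd_eq_one.2 hg).symm.dvd_of_dvd_mul_left h1
    obtain ⟨n, hn⟩ := hqb
    have ha : a = -(p * n) := by
      apply mul_left_cancel₀ hq.ne'
      rw [hn] at hrel; linarith
    have hη : η = -(n : ℂ) * xi p q := by
      rw [hab, hn, ha, xi]; push_cast; ring
    have hn0 : n ≠ 0 := by
      rintro rfl
      apply h.im_ne
      rw [hη]; simp
    have hn1 : (1 : ℝ) ≤ |(n : ℝ)| := by exact_mod_cast Int.one_le_abs hn0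
    have hnorm : ‖η‖ = |(n : ℝ)| * Y := by
      rw [hη, norm_mul, norm_neg, Complex.norm_intCast, hYn]
    have h5 := h.upper
    have h6 := mul_le_mul_of_nonneg_right hn1 hY0.le
    have h7 := mul_le_mul_of_nonneg_right h3a.le hX.le
    linarith
  · refine sum_lt_sqrt3 ?_ ?_ (core (t := t) (xi_mem p q) h.mem h0)
    · have := h.upper
      have h0 := abs_nonneg z.im
      calc |z.im| * ‖η‖ ≤ |z.im| * (√3 * X) := by gcongr
        _ ≤ |z.im| * (1.73206 * (Y / 8)) := by gcongr; linarith
        _ = (|z.im| * Y) * 0.2165075 := by ring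
        _ ≤ 0.43 := by linarith
    · exact h.second (norm_nonneg _) (by rw [hYn]; exact h1)

end Sextic

/-! ### Logarithmic form of the gap principle, and the case `t ≥ 140` -/

namespace Sextic

open Finset
variable {t : ℤ}

/-- Rational upper bounds for `log (a / b) / log 2` from an inequality between integers. -/
lemma log_le_of_pow {a b m n : ℕ} (ha : 0 < a) (hb : 0 < b) (h : a ^ n ≤ 2 ^ m * b ^ n) :
    (n : ℝ) * (Real.log a - Real.log b) ≤ m * Real.log 2 := by
  have h1 : ((a ^ n : ℕ) : ℝ) ≤ ((2 ^ m * b ^ n : ℕ) : ℝ) := by exact_mod_cast h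
  have h2 := Real.log_le_log (by positivity) h1
  push_cast at h2
  rw [Real.log_mul (by positivity) (by positivity), Real.log_pow, Real.log_pow, Real.log_pow] at h2
  linarith

lemma log_ge_of_pow {a b m n : ℕ} (_ : 0 < a) (hb : 0 < b) (h : 2 ^ m * b ^ n ≤ a ^ n) :
    (m : ℝ) * Real.log 2 ≤ (n : ℝ) * (Real.log a - Real.log b) := by
  have h1 : ((2 ^ m * b ^ n : ℕ) : ℝ) ≤ ((a ^ n : ℕ) : ℝ) := by exact_mod_cast h
  have h2 := Real.log_le_log (by positivity) h1
  push_cast at h2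
  rw [Real.log_mul (by positivity) (by positivity), Real.log_pow, Real.log_pow, Real.log_pow] at h2
  linarith

/-- The lower bound for `log X` after the approximant of order `r` has been used, where `g` is a lower
bound for `log (G r)`; compare the hypothesis `hU` of `pade_step`. -/
noncomputable def lx (t : ℤ) (r : ℕ) (g : ℝ) : ℝ :=
  Real.log 0.57 + Real.log (sh t) + g + r * (Real.log (sh t) - Real.log 27)

lemma log_Am (ht : 89 ≤ t) : Real.log (Am t) ≤ Real.log (sh t) + 0.000413 := by
  have hs := sh_ge ht
  have hs0 : 0 < sh t := by linarith
  have hA := Am_pos ht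
  have h1 : 2 * Real.log (Am t) = Real.log (sh t ^ 2 + 27 / 4) := by
    rw [← Am_sq, Real.log_pow]; norm_num
  have h2 : sh t ^ 2 + 27 / 4 = sh t ^ 2 * (1 + 27 / (4 * sh t ^ 2)) := by field_simp
  have h3 : Real.log (1 + 27 / (4 * sh t ^ 2)) ≤ 27 / (4 * sh t ^ 2) := by
    have := Real.log_le_sub_one_of_pos (show 0 < 1 + 27 / (4 * sh t ^ 2) by positivity)
    linarith
  have h4 : 27 / (4 * sh t ^ 2) ≤ 0.000826 := by
    rw [div_le_iff₀ (by positivity)]; nlinarith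
  rw [h2, Real.log_mul (by positivity) (by positivity), Real.log_pow] at h1
  push_cast at h1
  linarith

/-- The approximant of order `0`. -/
lemma Sol.lx_zero (ht : 89 ≤ t) {X : ℝ} {η : ℂ} (h : Sol t X η) : lx t 0 0 < Real.log X := by
  have hs := sh_ge ht
  have hX := h.X_gt
  have h1 : 0.57 * sh t < X := by
    by_contra hc
    push Not at hc
    refine pade_step ht h 0 ?_ ?_ (Or.inl rfl)
    · have : (1 : ℝ) ≤ G 0 := by exact_mod_cast G_pos 0
      simp only [pow_zero, mul_one]
      nlinarith
    · have h2 : (1 : ℝ) ≤ G 0 := by exact_mod_cast G_pos 0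
      have h3 : (3.6 : ℝ) ^ 5 ≤ X ^ 5 := pow_le_pow_left₀ (by norm_num) hX.le 5
      have h4 : 1 * X ^ 5 ≤ (G 0 : ℝ) * X ^ 5 := mul_le_mul_of_nonneg_right h2 (by positivity)
      norm_num at h3 ⊢
      linarith
  have := Real.log_lt_log (by positivity) h1
  rw [Real.log_mul (by norm_num) (by linarith)] at this
  simpa [lx] using this

/-- The gap principle in logarithmic form: the bound for the order `r` implies the one for `r'` when
the intervals of `X` overlap. -/
lemma step_log (ht : 89 ≤ t) {X : ℝ} {η : ℂ} (h : Sol t X η) (r r' : ℕ) {g g' : ℝ}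
    (hX : lx t r g < Real.log X) (hg' : g' ≤ Real.log (G r'))
    (h1 : Real.log 335 + r' * (Real.log 16 + Real.log (sh t) + 0.000413) ≤ g' + 5 * lx t r g)
    (h3 : Real.log 715 + Real.log (r' + 1) + Real.log (sh t)
      + r' * (Real.log 16 - Real.log 27 + 2 * (Real.log (sh t) + 0.000413)) ≤ 6 * lx t r g) :
    lx t r' g' < Real.log X := by
  have hs := sh_ge ht
  have hs0 : 0 < sh t := by linarith
  have hA := Am_pos ht
  have hlA := log_Am ht
  have hX0 : 0 < X := by linarith [h.X_gt]
  have hG : (0 : ℝ) < G r' := by exact_mod_cast G_pos r'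
  by_contra hc
  push Not at hc
  have hr0 : (0 : ℝ) ≤ r' := Nat.cast_nonneg _
  refine pade_step ht h r' ?_ ?_ (Or.inr ?_)
  · rw [← Real.log_le_log_iff (by positivity) (by positivity), Real.log_mul hX0.ne' (by positivity),
      Real.log_mul (by positivity) (by positivity), Real.log_mul (by positivity) (by positivity),
      Real.log_mul (by positivity) (by positivity), Real.log_pow, Real.log_pow]
    unfold lx at hc
    linarith
  · rw [← Real.log_le_log_iff (by positivity) (by positivity), Real.log_mul (by positivity) (by positivity),
      Real.log_mul (by positivity) (by positivity), Real.log_pow, Real.log_pow,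
      Real.log_mul (by positivity) (by positivity)]
    have := mul_le_mul_of_nonneg_left hlA hr0
    push_cast
    linarith
  · rw [← Real.log_le_log_iff (by positivity) (by positivity), Real.log_mul (by positivity) (by positivity),
      Real.log_mul (by positivity) (by positivity), Real.log_mul (by positivity) (by positivity), Real.log_pow,
      Real.log_pow, Real.log_div (by positivity) (by positivity), Real.log_mul (by positivity) (by positivity),
      Real.log_pow]
    have := mul_le_mul_of_nonneg_left hlA hr0
    push_cast
    linarith

lemma log_consts :
    Real.log 27 ≤ 3.2959 ∧ Real.log 16 ≤ 2.7726 ∧ 3.2958 ≤ Real.log 27 ∧ -0.56215 ≤ Real.log 0.57 ∧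
    Real.log 335 ≤ 5.8142 ∧ Real.log 715 ≤ 6.5724 := by
  have hl := Real.log_two_lt_d9
  have hg := Real.log_two_gt_d9
  have e57 : Real.log 0.57 = Real.log (57 : ℕ) - Real.log (100 : ℕ) := by
    rw [← Real.log_div (by norm_num) (by norm_num)]; norm_num
  have l16 : Real.log 16 = 4 * Real.log 2 := by
    rw [show (16 : ℝ) = 2 ^ 4 by norm_num, Real.log_pow]; norm_num
  have a1 := log_le_of_pow (a := 27) (b := 1) (m := 95098) (n := 20000) (by norm_num) (by norm_num) (by decide +kernel)
  have a2 := log_ge_of_pow (a := 27) (b := 1) (m := 95097) (n := 20000) (by norm_num) (by norm_num) (by decide +kernel)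
  have a3 := log_le_of_pow (a := 100) (b := 57) (m := 16220) (n := 20000) (by norm_num) (by norm_num) (by decide +kernel)
  have a4 := log_le_of_pow (a := 335) (b := 1) (m := 83881) (n := 10000) (by norm_num) (by norm_num) (by decide +kernel)
  have a5 := log_le_of_pow (a := 715) (b := 1) (m := 94819) (n := 10000) (by norm_num) (by norm_num) (by decide +kernel)
  push_cast at a1 a2 a3 a4 a5
  rw [Real.log_one] at a1 a2 a4 a5
  refine ⟨?_, ?_, ?_, ?_, ?_, ?_⟩
  · linarith
  · linarith
  · linarith
  · rw [e57]; push_cast; linarith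
  · linarith
  · linarith

lemma log_sh_ge (ht : 89 ≤ t) : 4.5053 ≤ Real.log (sh t) := by
  have hg := Real.log_two_gt_d9
  have a := log_ge_of_pow (a := 181) (b := 2) (m := 129996) (n := 20000) (by norm_num) (by norm_num) (by decide +kernel)
  have h := Real.log_le_log (by norm_num) (sh_ge ht)
  rw [show (90.5 : ℝ) = (181 : ℕ) / (2 : ℕ) by norm_num, Real.log_div (by norm_num) (by norm_num)] at h
  push_cast at a h
  linarith

/-- The version of `step_log` with numerical constants valid for all `t ≥ 89`; the worst case is
`t = 89`, by monotonicity in `log (sh t)`, which needs `r' ≤ 3 r`. -/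
lemma step_num (ht : 89 ≤ t) {X : ℝ} {η : ℂ} (h : Sol t X η) (r r' : ℕ) (hr : r' ≤ 3 * r) {g g' : ℝ}
    (hX : lx t r g < Real.log X) (hg' : g' ≤ Real.log (G r'))
    (h1 : 7.2785 * r' ≤ g' + 5 * (g + 1.2094 * r) + 13.89)
    (h3 : Real.log (r' + 1) + 8.48833 * r' ≤ 6 * (g + 1.2094 * r) + 12.57) :
    lx t r' g' < Real.log X := by
  obtain ⟨c1, c2, c3, c4, c5, c6⟩ := log_consts
  have hL := log_sh_ge ht
  have hr' : (r' : ℝ) ≤ 3 * r := by exact_mod_cast hr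
  have hr'0 : (0 : ℝ) ≤ r' := Nat.cast_nonneg _
  have hr0 : (0 : ℝ) ≤ r := Nat.cast_nonneg _
  have k1 : 0 ≤ (Real.log (sh t) - 4.5053) * (3 * r - r') := mul_nonneg (by linarith) (by linarith)
  have k2 : 0 ≤ (Real.log (sh t) - 4.5053) * r := mul_nonneg (by linarith) hr0
  have k3 := mul_le_mul_of_nonneg_left c1 hr0
  have k4 := mul_le_mul_of_nonneg_left c2 hr'0
  have k5 := mul_le_mul_of_nonneg_left c3 hr'0
  refine step_log ht h r r' hX hg' ?_ ?_
  · unfold lx; nlinarith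
  · unfold lx; nlinarith

/-- For `t ≥ 140` every step from `r` to `r + 1` works with the trivial bound `G r ≥ 1`. -/
theorem no_sol_large (ht : 140 ≤ t) {X : ℝ} {η : ℂ} (h : Sol t X η) : False := by
  have ht' : 89 ≤ t := by linarith
  obtain ⟨c1, c2, c3, c4, c5, c6⟩ := log_consts
  have hL : 4.95 ≤ Real.log (sh t) := by
    have hg := Real.log_two_gt_d9
    have a := log_ge_of_pow (a := 283) (b := 2) (m := 7142) (n := 1000) (by norm_num) (by norm_num) (by decide +kernel)
    have h0 : (141.5 : ℝ) ≤ sh t := by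
      have : (140 : ℝ) ≤ t := by exact_mod_cast ht
      unfold sh; linarith
    have h := Real.log_le_log (by norm_num) h0
    rw [show (141.5 : ℝ) = (283 : ℕ) / (2 : ℕ) by norm_num, Real.log_div (by norm_num) (by norm_num)] at h
    push_cast at a h
    linarith
  have key : ∀ r : ℕ, lx t r 0 < Real.log X := by
    intro r
    induction r with
    | zero => exact h.lx_zero ht'
    | succ r ih =>
      have hr0 : (0 : ℝ) ≤ r := Nat.cast_nonneg _
      have k2 : 0 ≤ (Real.log (sh t) - 4.95) * r := mul_nonneg (by linarith) hr0
      have k3 := mul_le_mul_of_nonneg_left c1 hr0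
      have k4 := mul_le_mul_of_nonneg_left c2 hr0
      have k5 := mul_le_mul_of_nonneg_left c3 hr0
      have hG : (0 : ℝ) ≤ Real.log (G (r + 1)) := Real.log_natCast_nonneg _
      refine step_log ht' h r (r + 1) ih hG ?_ ?_
      · unfold lx; push_cast; nlinarith
      · have hl : Real.log (((r + 1 : ℕ) : ℝ) + 1) ≤ 0.6932 + r / 2 := by
          rw [show ((r + 1 : ℕ) : ℝ) + 1 = 2 * (1 + r / 2) by push_cast; ring, Real.log_mul (by norm_num) (by positivity)]
          have := Real.log_le_sub_one_of_pos (show (0 : ℝ) < 1 + r / 2 by positivity)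
          linarith [Real.log_two_lt_d9]
        unfold lx; push_cast at hl ⊢; nlinarith
  obtain ⟨r, hr⟩ := exists_nat_gt (Real.log X)
  have := key r
  have hr0 : (0 : ℝ) ≤ r := Nat.cast_nonneg _
  have k2 : 0 ≤ (Real.log (sh t) - 4.95) * r := mul_nonneg (by linarith) hr0
  have k3 := mul_le_mul_of_nonneg_left c1 hr0
  unfold lx at this
  nlinarith

end Sextic

/-! ### Explicit approximations for `89 ≤ t < 140` -/

namespace Sextic

open Finset
variable {t : ℤ}

/-- For each `t` with `89 ≤ t < 140`, pairs `(p, q)` for which `p / q` is a good approximation to the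
largest root of the form. -/
def anchorTable : List (ℤ × List (ℤ × ℤ)) :=
  [
    (89, [(211061, 1169),
      (20899740576363484541, 115757040485443764),
      (138116133436079555694481960657904089083294477482638346331412745445245417246412565949683751,
        764981497805513971535804352642487463250529259890825997175839304006897098207584282157065),
      (8104755761085928214606341039992942281792307424797979627068957863316583995551565255693706319311,
        44889673981010695019783254593688488179178433299098712634829611502157392634080960436028828883)]),
    (90, [(70646, 387),
      (1192384517880617, 6531902831644),
      (143883349670093658488215899894074966213288635476017462349957298077058,
        788195456283679875202287293757544589107878238371421828392363387527),
      (41819454615044022314209297363923726689211806513794067402809094087048060063437158597726754641979,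
        229087689349856997165031296758856363445883476807452459198839782324173526719132794941707300102)]),
    (91, [(503445, 2728),
      (375930199544068587551, 2037039963029588597),
      (8452686851497690446585660686203848422679211486599601867833074292216061867640081364100690090823,
        45802281733040452697459892499238624625319469905915223599404905428488965823362270940736412070)]),
    (92, [(626051, 3356),
      (1580126570980307299390, 8470403804625056347),
      (14490387284961355760106503014526924394414023787177686419109491838402666507824284079029875329659,
        77676961987215945325094607187433419835415024643318095476194263886526849291261190410608909258)]),
    (93, [(1317750, 6989),
      (263007824839120741247681, 1394924445225766160232),
      (407455961767951971739509249441347460361678811267170413991710755467224736416472419334717977925003,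
        2161039435882783386755620403322340313366554981660730624913533583148308481639536017992019674731)]),
    (94, [(696826, 3657),
      (13946089783343627871685, 73190223018378708713),
      (32699166377507740256167785864130656841689540201391711390858484129008713395909983201358124994865,
        171607907081110814881560566811070237500853781467984756445464258298093713555910866615509313368)]),
    (95, [(830448, 4313),
      (7088102866117344833782, 36812645294948655909),
      (502295366339506057144328805198485087008706612923343249881171603876805957452922146863228711852617,
        2608712303364364043152504289954536597989171479000718413789506701513622510632923095252474730124)]),
    (96, [(149605, 769),
      (6066744620380320174, 31184296082577485),
      (127974698625275247082430978473504775012318048524750744575245846754577415645194189416476,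
        657815870409759311132112605161918576459992626158715620222645572273203231738474433643),
      (12073629917309863710306544321767187794885873124945830474012814932964085006203857179928055717965,
        62060903118953652870469178212970138116794396660098770999085373725297826614581962247851352261)]),
    (97, [(119499, 608),
      (671935501067627363, 3418746468992949),
      (2502589655808248560009367690383254010304249376416251592576199563788403857110257027,
        12732947634912407573739794971229772767590793673079731530249379439743112250056015),
      (35024971272994507220236033689729727503023029384289901684821174374032129094462702776880278293263,
        178203855393671168337961880137500282433299709800351235926216588342297401086481174241557035965)]),
    (98, [(374851, 1888),
      (104753898433263911537, 527610597793076146),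
      (1053389060971669697417588897792902219470821079119133850804354735202480767406873054143267487529,
        5305570871159729037289298669048208642598664591444363438915543854850343263254709023687565530),
      (40820813775319486373259704619262426905789894786095576923531379915888584221905345320532741755493,
        205600882454194775540282282169247741733061582469719527955149406264026040339522184374852345044)]),
    (99, [(94456, 471),
      (203346632688380848, 1013977554531555),
      (12029037908260429553572755670769311982855921292434434017913053713737320785513625,
        59982180576734104299032774732885787922293526000072625400893409261951830711926),
      (249611261435050265219422918138627759246065079182329360604622001466946243026503249713857364379483,
        1244673752927657726549738768716842317192510442567020433713644266676661169350600976694412314334)]),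
    (100, [(702622, 3469),
      (15324522275101885637711, 75660551160976072400),
      (46469713746857281908012878294979270738855368920476582035740698071946760868989103983620646754186,
        229431240417354721343390838472959530872685179305738424100640328308468067618936247870627356905)]),
    (101, [(515243, 2519),
      (2519119257804647963353, 12315861467960169442),
      (384071625546525361803096539815091298878399948305374935120455508199532992235601660661019751125663,
        1877709012525080159339257514010437049595411192173961757554278497263636241234632933708921828806)]),
    (102, [(1023830, 4957),
      (68323117407864897524384, 330794851652240965427),
      (206810641061755351311990626651546165369346014066855027651694246956584076473075541922509826060109,
        1001299383365857635486013597162477072399703375885585231189431199471977064843330264683417131624)]),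
    (103, [(1128420, 5411),
      (105628085324616266216223, 506507833683678235058),
      (232138105816380840959104354567490000799050183894540523339673975533503310207996098893019077432043,
        1113148730578059248802873904037886059275942406889056236675285377201044453965900866424232989931)]),
    (104, [(1160294, 5511),
      (15794937645816801662470, 75020556310024472871),
      (368132590356014230657671635369571898035980969308834438886211035710488385546673263051691688708231,
        1748504004488607578919512399406937084248127278527388659454815116579055994010230429344186459578)]),
    (105, [(194050, 913),
      (21057372553296015777, 99074368179148964),
      (352473455243893213013727702236866266168001257343626838383191052765574828554462418949194169,
        1658378071139944759943955949887327743151891617139300446642823604560312439981070431593791),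
      (164454575053576531738774690615320640178721958717362577571466302505235929349290110528226693540154,
        773754326489000703933016010855338230444365153210343107247070198713676617153823502684732666743)]),
    (106, [(1191559, 5554),
      (143290168967529708694841, 667892734217343622835),
      (749149686440691058862421102563028915956619306042969943915424100781629541117227976636525427381563,
        3491876909771256167000071918619834408554684532128696423336865426759399143270940506866631235996)]),
    (107, [(287349, 1327),
      (50719832238586258277, 234228124664173551),
      (29959562496526650282299543072365905553950162261471667021035374256412867099426694883714147207,
        138355586554600597130721100070261525214241790680375319781121208657251715679314802048818960),
      (454121614177939858296977817465765623699399934413127344838578314517221591497498789923707495490448,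
        2097168885693677827157256795093324667337729044253187740581252166787418477668399685873826820323)]),
    (108, [(169587, 776),
      (7123797653075012050, 32597233163894121),
      (315570553386725259598260664594627159322755331083395078374028842492304400276569006064779,
        1443994819808768625518350672095352259856786594973538333139029699287401148265380091990),
      (2571822671091864836128333723023707715065889522774283018491453247053977115116273550194985893421851,
        11768203891864212305344756674346323901948512424156735694887655914967124352489904873506371697764)]),
    (109, [(256267, 1162),
      (97677675831486570898, 442903141224546545),
      (752165719232626024197232918138046780179733627838048623206721333563717168003390342190092567413,
        3410570091207711069810413803054748966951742798586250733199714654027998260030520575054163962),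
      (579801926310961241998083736148521109088841849730665875443268285220981160851063354941247563416611,
        2629015199892677244316074535391274051097456338905934618056286880550675364590476929095793554854)]),
    (110, [(133301, 599),
      (2096921338609663791, 9422704120521121),
      (2179278936984248806278409666183053300325045051740858902042597437148753723899145701989,
        9792785375965334835170834162484392121886498658798275442972959450063271051515286543),
      (1226223752215264359118842603995454786171414356553507144264066532220048762106895396402905580357418,
        5510146417957956226109579739021116733872413629361849870239520426205311572271541360063796960077)]),
    (111, [(2497546, 11123),
      (329461123701403998597559, 1467278712335477128167),
      (1449713379683692077944642071435589926085940913710300872490359470890456815092425797302369294627533,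
        6456402373366686786831035444827691001052269095016608431653772797092285698499486410312162439099)]),
    (112, [(2195385, 9691),
      (1518960917803776575598969, 6705088289669390199983),
      (1860938795230742397433615206346278718214377256757756062649847302816496427834237988946591154966703,
        8214667525306944260849783299845808971497560290043940298715230371223665450198805098577024917497)]),
    (113, [(478559, 2094),
      (336000402427750631198, 1470215464901042943),
      (177037005130517351552017903807279872910965154471434947472453111273538586980880495724772627926105,
        774649497208920247977797362244756093401559745311955143067822144234982798157708026124049552961),
      (1569714060031923974334931973645773282256113861722896102342607581827231052601442106664213768773628,
        6868497388266620716264315851421320445324963495622319487751911248072902144392576406441606347681)]),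
    (114, [(1719582, 7459),
      (1016371451128144611546793, 4408696214446071980450),
      (6948286049121768131229868317405042653666339576643486880031492772863136315053490353697411518934187,
        30139455774411932051956135159439056710291136643091919421085334920506520685710677015307457604694)]),
    (115, [(1312907, 5646),
      (200195212194870576769493, 860915638403777688114),
      (6094779739226936527572251675829201085252543502256854154870249759832195466963614421959017112527403,
        26209873515953191682627314871283960878963234823594320326976333759871131155049360975654401877637)]),
    (116, [(2327782, 9925),
      (6067200567092278540452643, 25868816593384197205519),
      (22433675594796875643406258909411254397800203825506477247843496878697102628931644652048225002349993,
        95650808484052707859282223930724494627104806363167767031390876433611554171242754588728951941311)]),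
    (117, [(1329574, 5621),
      (263041482233433140774141, 1112052560953752526255),
      (16016195061035929186779582266552682839125364171159920475680469167922721582271477998509337218108113,
        67711186019526049456004630105492104658653101167704334871503127779400799007885532756315479833240)]),
    (118, [(2779190, 11651),
      (8003096642023241803735927, 33550811199415136970770),
      (23151443558736060694412213069799512049914855312288322503013236870013155843159649961998847248086616,
        97056145461802296663427761319538750392933341366319954845021286438886810657674326648920190729715)]),
    (119, [(3796625, 15784),
      (64985421666102089619819225, 270168872505252063567211),
      (70213619652584473372759305030434152944369486746483459180345199347114103047981024396292700975313747,
        291904460565288699505987391957372191941923259466456933319287103955143087888348424905311568575297)]),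
    (120, [(2004075, 8263),
      (1190513453532799912621733, 4908605050506360597158),
      (23335261853213937960946342713218465919244774882211452713492692955947067092210063871115092353063916,
        96213599138817757247246395887492416186702137012047888454927248784911876843143995508058722526629)]),
    (121, [(4108689, 16802),
      (59595631681735435688784537, 243709320302573438357573),
      (36696752336545931163984043956289640368533040412109262667473574805652113526604972413254478676072733,
        150067048823519590748760323233741068763031381998253591948823896961857276314688461762247274310846)]),
    (122, [(480251, 1948),
      (1389225790886618755882, 5634994701899499177),
      (124954350886363240304936276146730850867683605905665975384954573928647203682434573333244830942353647,
        506841371534408947162573410992718570892764702756188638998428356061461061668126088457893120708254)]),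
    (123, [(983205, 3956),
      (16745139125395790112076, 67375339199464125801),
      (732082196638508720320716657625790421360354435482159005553686332028564991693092843143552759273162384,
        2945588325725092243416753623931694987052645513746506754054068930936406195996870142552278571584709)]),
    (124, [(1074544, 4289),
      (9160085766708033325747, 36562121099373060448),
      (256308752140299480014355201736565525501378265757104990082852075080854045486370269754373544709996305,
        1023046276339687366512534570864966317013969360783221216920563585541545476720333750767324873028932)]),
    (125, [(3939792, 15601),
      (25127193842268863501688090, 99500011962891967532267),
      (449575487604548178721787147147064427995566131239597395354109368078432669914107756932324572747516450,
        1780253166178320126102980885213178883384666503550537539768716344107962909633955048089126664467619)]),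
    (126, [(330131, 1297),
      (73147116585970732609, 287376254303029690),
      (28845025992148458689811106155647485976078922722340056487156807257934922156946916242889274832,
        113324706588462016906494254839649436936412388336967568970272550325620337137796517286308009),
      (253124198029840249478125939726755255125949253338574027993142377050090952089274438767444474787942988,
        994460032033926598727977349759345521502958920648034601212557328748403645070289680436489336574905)]),
    (127, [(3590707, 13997),
      (33298152689459545771931159, 129800132173706591868527),
      (899265604879634521401036114119011869690572278480826727433766623104630900768627788435563072078578428,
        3505443544007585010039713714189172201198184841467333338649149031980272708973572920938618817224299)]),
    (128, [(5824249, 22528),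
      (475680481484259992687171247, 1839916165486911647435191),
      (1158023589017757857649591963881611559431484774745377306799525918670972751326454246819851616259889101,
        4479196444640007606948515218561989027209603951392106189517841956581655614506725676833220636929097)]),
    (129, [(3971573, 15244),
      (57251025387379436601652561, 219745332895275013519398),
      (4297022942207034092968513041097038065824567811664725100768461981871069576517717913872439295674945073,
        16493167249054579467470839874944234215643869209397736537246389370565274497754300899168600007929455)]),
    (130, [(6025401, 22951),
      (120843413084586103739086943, 460297526042252194765448),
      (1485389304244782017331912664164551179293060242938945423899830167313231203881392251140987590656430181,
        5657908896324493502362646997002141653209989332245583746025735726345770119094931509889056748985612)]),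
    (131, [(4827463, 18249),
      (121170887932952468918527237, 458055822260321678056067),
      (4952117803563320090597831718121307549498863170972542041094262498550782145470691954735165509755987896,
        18720225882113859365180623179935502537323597286237913972091675048608638964761208955639558489200745)]),
    (132, [(1289219, 4837),
      (121866580343120583856820, 457229259815058147863),
      (3779717566980910623335906585986368972553145946695391900331698122113867113565826399197437727755573895,
        14181061457495895462368533559984149648539131003535392872885087985059787098946319415097529811984686)]),
    (133, [(4272621, 15911),
      (126050921928678085881339421, 469406534961519065206892),
      (28004375842263058233290148726870374375587255799134088739525905734721260919602692379725578211467804875,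
        104286718627212441593494277867100843145893209448583425721584508078734724037650307213706007747963091)]),
    (134, [(2459409, 9091),
      (1126987218781529559479531, 4165814147152357272860),
      (8005671077077765019302159316879342062252237943656195024913215146374049240362941262766107073899770006,
        29592294637020231189178847893061607252799264175513449101330814600479329904948194436874672143508733)]),
    (135, [(565504, 2075),
      (3388299120501807703137, 12432663030950118733),
      (3022272161827562081967547864977001541315243769429494284962406358283518659640642854837927041353819809,
        11089602788746224278027178312850656213823044426338214580995771956444084282606246967641731140863633),
      (135207480247805846486964036836712936940957627628671509319888762248714809064394166620034484769123957054,
        496115892193089307212736082066098163360936202737784399786108893019347005713380934974307498711748287)]),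
    (136, [(4978909, 18136),
      (109669724585046523083620423, 399479107787532326992145),
      (10144958812128084146278653826921289894323549131778265050043949728003601324508940648241613845117735554,
        36953672585066168160206969630131365854678957997564902490322196286340957246235481392663732528568953)]),
    (137, [(4662046, 16859),
      (180777718322288467332793915, 653732621510131376307767),
      (67762637232439876840941347608525906552362714231206528181109050472660330604050634149522148500033480153,
        245044836772570773542609848789651772880950684673307937609448159033080748523937380374541005559094429)]),
    (138, [(1994006, 7159),
      (2140340810639046836381434, 7684380018636933256843),
      (85608874187937923611560022924202508927142602558733148990097683976376862530801881482773372828477301385,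
        307358117435221479187296632034464421880030050998100782038019600021497573121502226494388003160116142)]),
    (139, [(6996166, 24939),
      (480910939907795025086717359, 1714287215368851848698621),
      (39012962158899365118594864726636809872106199484789761758727794231096109862109067497679323751692170379,
        139068207255781629486736248025795794288629232773277448650660614830612408157393963663845457142369424)])]

/-- The conditions under which the successive fractions `p / q` raise the lower bound
`U / V` for `X ^ 10` to a value at which the approximant of index `145` applies. -/
def anchorOK (t : ℤ) : ℤ → ℤ → List (ℤ × ℤ) → Bool
  | U, V, [] => decide ((335 * (16 * (t + 2)) ^ 145) ^ 2 * V ≤ U ∧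
      (715 * 146 * (t + 2) * (16 * (t ^ 2 + 3 * t + 9)) ^ 145) ^ 5 * V ^ 3 ≤ U ^ 3 * (27 ^ 145) ^ 5)
  | U, V, (p, q) :: l => decide (0 < q ∧ 10 * q ≤ p ∧ Int.gcd p q = 1 ∧
      |F6 t p q| ≤ 2 * (2 * t + 3) * (p ^ 2 + p * q + q ^ 2) ^ 2 ∧
      335 ^ 2 * (p ^ 2 + p * q + q ^ 2) * V ≤ U) &&
      anchorOK t ((p ^ 2 + p * q + q ^ 2) ^ 5) (8 ^ 10) l

lemma Am_le (ht : 89 ≤ t) : Am t ≤ t + 2 := by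
  have h1 : (89 : ℝ) ≤ t := by exact_mod_cast ht
  refine le_of_sq_le_sq ?_ (by linarith) |>.trans le_rfl
  rw [Am_sq, sh]; nlinarith

/-- If the check succeeds, starting from the lower bound `U / V` for `X ^ 10`, the lower bounds on `X`
required by `pade_step` for `r = 145` hold. -/
lemma anchorOK_sound (ht : 89 ≤ t) {X : ℝ} {η : ℂ} (h : Sol t X η) (l : List (ℤ × ℤ)) :
    ∀ U V : ℤ, 0 < V → (U : ℝ) ≤ X ^ 10 * V → anchorOK t U V l = true →
    335 * (16 * ((t : ℝ) + 2)) ^ 145 ≤ X ^ 5 ∧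
      715 * 146 * ((t : ℝ) + 2) * (16 * ((t : ℝ) ^ 2 + 3 * t + 9)) ^ 145 ≤ X ^ 6 * 27 ^ 145 := by
  have h1 : (89 : ℝ) ≤ t := by exact_mod_cast ht
  have hX := h.X_gt
  induction l with
  | nil =>
    intro U V hV hU hok
    simp only [anchorOK, decide_eq_true_eq] at hok
    have hV' : (0 : ℝ) < V := by exact_mod_cast hV
    obtain ⟨a, b⟩ := hok
    have a' : (335 * (16 * ((t : ℝ) + 2)) ^ 145) ^ 2 * V ≤ U := by exact_mod_cast a
    have b' : (715 * 146 * ((t : ℝ) + 2) * (16 * ((t : ℝ) ^ 2 + 3 * t + 9)) ^ 145) ^ 5 * V ^ 3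
      ≤ U ^ 3 * (27 ^ 145) ^ 5 := by exact_mod_cast b
    constructor
    · apply le_of_sq_le_sq _ (by positivity)
      rw [← pow_mul]
      exact le_of_mul_le_mul_right (a'.trans hU) hV'
    · have hU0 : (0 : ℝ) ≤ U := le_trans (by positivity) a'
      refine le_of_pow_le_pow_left₀ (n := 5) (by norm_num) (by positivity) ?_
      refine le_of_mul_le_mul_right ?_ (pow_pos hV' 3)
      refine b'.trans ?_
      have : (U : ℝ) ^ 3 ≤ (X ^ 10 * V) ^ 3 := pow_le_pow_left₀ hU0 hU 3
      calc (U : ℝ) ^ 3 * (27 ^ 145) ^ 5 ≤ (X ^ 10 * V) ^ 3 * (27 ^ 145) ^ 5 := by gcongr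
        _ = (X ^ 6 * 27 ^ 145) ^ 5 * V ^ 3 := by
          generalize (27 : ℝ) ^ 145 = c
          ring
  | cons pq l ih =>
    obtain ⟨p, q⟩ := pq
    intro U V hV hU hok
    simp only [anchorOK, Bool.and_eq_true, decide_eq_true_eq] at hok
    obtain ⟨⟨hq, hp, hg, hF, hN⟩, hok⟩ := hok
    have hV' : (0 : ℝ) < V := by exact_mod_cast hV
    have hq' : (0 : ℝ) < q := by exact_mod_cast hq
    have hp' : (0 : ℝ) < p := by
      have : 0 < p := by linarith
      exact_mod_cast this
    refine ih _ _ (by norm_num) ?_ hok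
    have hN0 : (0 : ℝ) < p ^ 2 + p * q + q ^ 2 := by positivity
    set Y : ℝ := √(p ^ 2 + p * q + q ^ 2) with hY
    have hY0 : 0 < Y := Real.sqrt_pos.2 hN0
    have hYsq : Y ^ 2 = p ^ 2 + p * q + q ^ 2 := Real.sq_sqrt hN0.le
    have hN' : (335 : ℝ) ^ 2 * Y ^ 2 * V ≤ U := by rw [hYsq]; exact_mod_cast hN
    have key : Y < 8 * X := by
      by_contra hc
      push Not at hc
      refine anchor ht h p q hq hp hg hY0 hYsq ?_ ?_ hc
      · have hF' : |((F6 t p q : ℤ) : ℝ)| ≤ 2 * (2 * t + 3) * (p ^ 2 + p * q + q ^ 2) ^ 2 := by exact_mod_cast hF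
        rw [← hYsq] at hF'
        refine hF'.trans (le_of_eq ?_)
        rw [sh]; ring
      · apply le_of_sq_le_sq _ (by positivity)
        rw [← pow_mul, mul_pow]
        exact le_of_mul_le_mul_right (hN'.trans hU) hV'
    push_cast
    rw [← hYsq, ← pow_mul]
    have := pow_le_pow_left₀ hY0.le key.le 10
    norm_num [mul_pow] at this ⊢
    linarith

lemma anchorTable_ok : (anchorTable.all fun a =>
    anchorOK a.1 ((57 * (2 * a.1 + 3)) ^ 10) (200 ^ 10) a.2) = true := by
  decide +kernel

lemma anchorTable_mem (ht : 89 ≤ t) (ht' : t < 140) : ∃ l, (t, l) ∈ anchorTable := by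
  have : ∀ s ∈ Finset.Ico (89 : ℤ) 140, s ∈ anchorTable.map Prod.fst := by decide +kernel
  obtain ⟨⟨a, l⟩, h1, h2⟩ := List.mem_map.1 (this t (Finset.mem_Ico.2 ⟨ht, ht'⟩))
  exact ⟨l, by simpa [← h2] using h1⟩

/-- The starting point of the chain of indices for `89 ≤ t < 140`. -/
lemma Sol.lx_start (ht : 89 ≤ t) (ht' : t < 140) {X : ℝ} {η : ℂ} (h : Sol t X η) :
    lx t 145 (Real.log (G 145)) < Real.log X := by
  have h1 : (89 : ℝ) ≤ t := by exact_mod_cast ht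
  have hs := sh_ge ht
  have hX := h.X_gt
  have hX0 : 0 < X := by linarith
  have hA := Am_le ht
  have hA0 := Am_pos ht
  obtain ⟨l, hl⟩ := anchorTable_mem ht ht'
  have hok := List.all_eq_true.1 anchorTable_ok _ hl
  have h0 : 0.57 * sh t ≤ X := by
    have := h.lx_zero ht
    rw [lx] at this
    simp only [CharP.cast_eq_zero, zero_mul, add_zero] at this
    rw [← Real.log_mul (by norm_num) (by linarith)] at this
    exact ((Real.log_lt_log_iff (by positivity) hX0).1 this).le
  obtain ⟨a, b⟩ := anchorOK_sound ht h l _ _ (by norm_num) (by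
    have h2 : 57 * (2 * (t : ℝ) + 3) ≤ X * 200 := by rw [sh] at h0; linarith
    have := pow_le_pow_left₀ (by positivity) h2 10
    rw [mul_pow X] at this
    push_cast
    norm_num at this ⊢
    exact this) hok
  have hG : (1 : ℝ) ≤ G 145 := by exact_mod_cast G_pos 145
  by_contra hc
  push Not at hc
  refine pade_step ht h 145 ?_ ?_ (Or.inr ?_)
  · rw [← Real.log_le_log_iff (by positivity) (by positivity), Real.log_mul hX0.ne' (by positivity),
      Real.log_mul (by positivity) (by positivity), Real.log_mul (by positivity) (by positivity),
      Real.log_mul (by positivity) (by positivity), Real.log_pow, Real.log_pow]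
    unfold lx at hc
    push_cast at hc ⊢
    linarith
  · calc 335 * (16 * Am t) ^ 145 ≤ 335 * (16 * ((t : ℝ) + 2)) ^ 145 := by gcongr
      _ ≤ X ^ 5 := a
      _ ≤ G 145 * X ^ 5 := le_mul_of_one_le_left (by positivity) hG
  · have hA2 : Am t ^ 2 = (t : ℝ) ^ 2 + 3 * t + 9 := by rw [Am_sq, sh]; ring
    have hsh : sh t ≤ t + 2 := by rw [sh]; linarith
    rw [hA2, div_pow, mul_div_assoc', div_le_iff₀ (by positivity)]
    refine le_trans ?_ b
    push_cast
    have : (145 : ℝ) + 1 = 146 := by norm_num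
    rw [this]
    gcongr

end Sextic

/-! ### Lower bounds for `G r` by computation -/

namespace Sextic

open Finset
variable {t : ℤ}

/-- Product of the primes from `5` to `353`, used to recognise primes below `359 ^ 2`. -/
def primorial5 : ℕ :=
  15387664515282100527874459819407074641482844931313359374770912615575525104959959627791672168527340749924010544114372566999935824571642667603435

/-- Returns `k` if `k`, supposed prime to `6`, passes a sufficient test for being a prime dividing
`G r`, and `1` otherwise. The constant `85085` is `5 * 7 * 11 * 13 * 17`. -/
def hk (r k : ℕ) : ℕ :=
  bif (Nat.beq (6 * r / k % 6) 5) &&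
    (bif Nat.ble k 360 then Nat.beq (Nat.gcd k 85085) 1 else Nat.beq (Nat.gcd k primorial5) 1)
  then k else 1

/-- Balanced product of `hk r (6 m + 1) * hk r (6 m + 5)` over `a ≤ m < a + n`; the first argument
bounds the depth of the recursion. -/
def prodI (r : ℕ) : ℕ → ℕ → ℕ → ℕ
  | 0, _, _ => 1
  | fuel + 1, a, n => bif Nat.ble n 1 then
      (bif Nat.beq n 0 then 1 else hk r (6 * a + 1) * hk r (6 * a + 5))
    else prodI r fuel a (n / 2) * prodI r fuel (a + n / 2) (n - n / 2)

/-- Product over the blocks `r / (j + 1) ≤ m ≤ r / j`, which contain the `m` with `⌊6r/k⌋ = j` for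
`k = 6 m + 1` or `k = 6 m + 5`; it is `0` if these blocks fail to be disjoint. -/
def blk (r : ℕ) : ℕ → List ℕ → ℕ
  | _, [] => 1
  | c, j :: js => bif Nat.ble c (r / (j + 1)) then
      prodI r 14 (r / (j + 1)) (r / j + 1 - r / (j + 1)) * blk r (r / j + 1) js else 0

/-- Pairs `(r, e)` with `2 ^ e ≤ G r`, for a sequence of indices `r` in which each one can be reached
from its predecessor by `step_num`. -/
def chain : List (ℕ × ℕ) :=
  [(145, 61), (154, 67), (165, 70), (176, 71), (186, 64), (191, 80), (203, 86), (210, 106), (232,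
   89), (236, 105), (253, 92), (261, 121), (282, 99), (290, 113), (304, 124), (320, 126), (333,
   136), (352, 138), (366, 149), (386, 157), (407, 158), (426, 177), (442, 199), (476, 179), (495,
   187), (513, 213), (540, 244), (576, 249), (612, 234), (638, 236), (660, 252), (688, 278), (722,
   285), (756, 303), (795, 325), (838, 327), (876, 376), (931, 399), (992, 393), (1041, 414),
   (1090, 477), (1166, 451), (1216, 513), (1276, 548), (1359, 594), (1446, 611), (1533, 602),
   (1600, 621), (1666, 651), (1743, 706), (1836, 732), (1928, 822), (2051, 836), (2163, 844),
   (2263, 950), (2390, 1028), (2542, 1082), (2703, 1049), (2814, 1141), (2965, 1235), (3140,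
   1306), (3306, 1387), (3505, 1430), (3692, 1514), (3897, 1557), (4075, 1625), (4268, 1773),
   (4516, 1798), (4741, 1922), (4992, 2064), (5275, 2182), (5577, 2273), (5877, 2352), (6176,
   2461), (6480, 2603), (6813, 2775), (7184, 2820), (7515, 3056), (7915, 3347), (8401, 3409),
   (8845, 3604), (9318, 3814), (9832, 3882), (10305, 4108), (10822, 4494), (11441, 4685), (12070,
   4896), (12702, 5095), (13312, 5600), (14123, 5742), (14886, 6061), (15675, 6311), (16473,
   6713), (17371, 7114), (18335, 7421), (19308, 7976), (20408, 8276), (21500, 8667), (22610,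
   9335), (23902, 9733), (25201, 10230), (26555, 10644), (27915, 11326), (29394, 12044), (31027,
   12631), (32706, 13296), (34466, 14052), (36348, 14807), (38325, 15634), (40422, 16412), (42588,
   17260), (44862, 18251), (47292, 19326), (49890, 20663), (52768, 21497), (55602, 22491), (58547,
   23470), (61545, 25091), (64904, 26564), (68497, 28106), (72320, 29265), (76161, 31064), (80304,
   32826), (84712, 34549), (89342, 36496), (94251, 38347), (99334, 40360), (104688, 42802)]

/-- The bounds `2 ^ e ≤ G r` along the chain, for the part of `G r` that `blk` computes. -/
lemma chain_blk : (chain.all fun a => Nat.ble (2 ^ a.2) (blk a.1 1 [29, 23, 17, 11, 5])) = true := by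
  decide +kernel

end Sextic

/-! ### The explicit chain of indices -/

namespace Sextic

open Finset
variable {t : ℤ}

lemma ble_false {a b : ℕ} (h : b < a) : Nat.ble a b = false := by
  rw [← Bool.not_eq_true, Nat.ble_eq]; omega

/-- The contribution of `k` to `G r` when only first powers of primes are counted. -/
def Hk (r k : ℕ) : ℕ := if k.Prime ∧ 5 ≤ k ∧ 6 * r / k % 6 = 5 then k else 1

lemma one_le_Hk (r k : ℕ) : 1 ≤ Hk r k := by
  unfold Hk; split_ifs with h
  · exact h.1.one_le
  · exact le_rfl

lemma one_le_gexp {r k : ℕ} (h : 6 * r / k % 6 = 5) : 1 ≤ gexp r k := by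
  unfold gexp
  apply Finset.card_pos.2
  refine ⟨1, ?_⟩
  rw [Finset.mem_filter, Finset.mem_Icc, pow_one]
  refine ⟨⟨le_rfl, ?_⟩, h⟩
  rcases Nat.eq_zero_or_pos r with h0 | h0
  · subst h0; simp at h
  · omega

lemma prod_Hk_le (r : ℕ) : ∏ k ∈ range (6 * r + 6), Hk r k ≤ G r := by
  have h1 : ∏ k ∈ range (6 * r + 6), Hk r k = ∏ k ∈ (range (6 * r + 6)).filter
      (fun k => k.Prime ∧ 5 ≤ k ∧ 6 * r / k % 6 = 5), k := by
    rw [Finset.prod_filter]; rfl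
  rw [h1]
  have hsub : (range (6 * r + 6)).filter (fun k => k.Prime ∧ 5 ≤ k ∧ 6 * r / k % 6 = 5) ⊆
      (range (6 * r + 1)).filter (fun p => p.Prime ∧ 5 ≤ p) := by
    intro k hk
    rw [Finset.mem_filter] at hk ⊢
    refine ⟨?_, hk.2.1, hk.2.2.1⟩
    rw [Finset.mem_range]
    by_contra hc
    have : 6 * r / k = 0 := Nat.div_eq_of_lt (by omega)
    have := hk.2.2.2
    simp_all
  calc _ ≤ ∏ k ∈ (range (6 * r + 6)).filter (fun k => k.Prime ∧ 5 ≤ k ∧ 6 * r / k % 6 = 5), k ^ gexp r k := by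
        apply Finset.prod_le_prod' 
        intro k hk
        rw [Finset.mem_filter] at hk
        exact Nat.le_self_pow (by have := one_le_gexp hk.2.2.2; omega) k
    _ ≤ _ := by
        unfold G
        refine Finset.prod_le_prod_of_subset_of_one_le' hsub ?_
        intro p hp _
        rw [Finset.mem_filter] at hp
        exact Nat.one_le_pow _ _ hp.2.1.pos

lemma prod_blocks_le (r n : ℕ) : ∏ m ∈ range n, Hk r (6 * m + 1) * Hk r (6 * m + 5) ≤
    ∏ k ∈ range (6 * n), Hk r k := by
  induction n with
  | zero => simp
  | succ n ih =>
    rw [Finset.prod_range_succ, show 6 * (n + 1) = 6 * n + 1 + 1 + 1 + 1 + 1 + 1 by ring]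
    simp only [Finset.prod_range_succ]
    have h := fun k => one_le_Hk r k
    calc _ ≤ (∏ k ∈ range (6 * n), Hk r k) * (1 * Hk r (6 * n + 1) * 1 * 1 * 1 * Hk r (6 * n + 5)) := by
          rw [one_mul, mul_one, mul_one, mul_one]; exact Nat.mul_le_mul_right _ ih
      _ ≤ (∏ k ∈ range (6 * n), Hk r k) * (Hk r (6 * n) * Hk r (6 * n + 1) * Hk r (6 * n + 1 + 1) *
          Hk r (6 * n + 1 + 1 + 1) * Hk r (6 * n + 1 + 1 + 1 + 1) * Hk r (6 * n + 5)) := by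
          gcongr <;> apply h
      _ = _ := by ring

/-- Trial division, in the form of a coprimality condition. -/
lemma prime_of_coprime {k P B : ℕ} (hP : ∀ p < B, p.Prime → p ∣ 6 * P) (hk : k < B * B) (h2 : 2 ≤ k)
    (h6 : Nat.Coprime k 6) (hc : Nat.Coprime k P) : k.Prime := by
  by_contra hn
  have hm := Nat.minFac_sq_le_self (by omega) hn
  have hlt : k.minFac < B := by nlinarith
  have hd := hP _ hlt (Nat.minFac_prime (by omega))
  have hc6 : Nat.Coprime k (6 * P) := Nat.Coprime.mul_right h6 hc
  have h1 := Nat.dvd_gcd (Nat.minFac_dvd k) hd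
  rw [hc6.gcd_eq_one] at h1
  exact (Nat.minFac_prime (by omega)).one_lt.ne' (Nat.dvd_one.1 h1)

lemma hk_le {r k : ℕ} (hr : r ≤ 105000) (h6 : Nat.Coprime k 6) (h5 : 5 ≤ k) : hk r k ≤ Hk r k := by
  have h0 := one_le_Hk r k
  unfold hk
  cases hc : ((Nat.beq (6 * r / k % 6) 5) &&
    (bif Nat.ble k 360 then Nat.beq (Nat.gcd k 85085) 1 else Nat.beq (Nat.gcd k primorial5) 1)) with
  | false => simpa using h0
  | true =>
    rw [Bool.and_eq_true, Nat.beq_eq] at hc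
    obtain ⟨hc1, hc2⟩ := hc
    have hk : k < 359 * 359 := by
      have h7 : 5 ≤ 6 * r / k := by
        have := Nat.mod_le (6 * r / k) 6
        omega
      have := (Nat.le_div_iff_mul_le (by omega)).1 h7
      omega
    have hp : k.Prime := by
      by_cases h360 : k ≤ 360
      · rw [show Nat.ble k 360 = true from Nat.ble_eq_true_of_le h360, cond_true, Nat.beq_eq] at hc2
        refine prime_of_coprime (B := 19) (P := 85085) ?_ (by omega) (by omega) h6 hc2
        decide +kernel
      · rw [show Nat.ble k 360 = false from ble_false (by omega), cond_false,
          Nat.beq_eq] at hc2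
        refine prime_of_coprime (B := 359) (P := primorial5) ?_ hk (by omega) h6 hc2
        decide +kernel
    rw [cond_true, Hk, if_pos ⟨hp, h5, hc1⟩]

lemma prodI_le {r : ℕ} (hr : r ≤ 105000) (fuel : ℕ) : ∀ a n : ℕ, 1 ≤ a →
    prodI r fuel a n ≤ ∏ m ∈ Ico a (a + n), Hk r (6 * m + 1) * Hk r (6 * m + 5) := by
  have hpos : ∀ a b, 1 ≤ ∏ m ∈ Ico a b, Hk r (6 * m + 1) * Hk r (6 * m + 5) := fun a b =>
    Finset.one_le_prod' fun m _ => Nat.mul_pos (one_le_Hk _ _) (one_le_Hk _ _)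
  induction fuel with
  | zero => intro a n _; exact hpos _ _
  | succ fuel ih =>
    intro a n ha
    rw [prodI]
    by_cases hn : n ≤ 1
    · rw [show Nat.ble n 1 = true from Nat.ble_eq_true_of_le hn, cond_true]
      interval_cases n
      · exact hpos _ _
      · simp only [Nat.Ico_succ_singleton, Finset.prod_singleton]
        refine Nat.mul_le_mul (hk_le hr ?_ (by omega)) (hk_le hr ?_ (by omega))
        · rw [Nat.Coprime, Nat.gcd_comm, Nat.gcd_rec, show (6 * a + 1) % 6 = 1 by omega]; rfl
        · rw [Nat.Coprime, Nat.gcd_comm, Nat.gcd_rec, show (6 * a + 5) % 6 = 5 by omega]; rfl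
    · rw [show Nat.ble n 1 = false from ble_false (by omega), cond_false]
      rw [← Finset.prod_Ico_consecutive _ (show a ≤ a + n / 2 by omega) (show a + n / 2 ≤ a + n by omega)]
      refine Nat.mul_le_mul (ih _ _ ha) ?_
      have := ih (a + n / 2) (n - n / 2) (by omega)
      rwa [show a + n / 2 + (n - n / 2) = a + n by omega] at this

lemma blk_le {r : ℕ} (hr : r ≤ 105000) (js : List ℕ) : ∀ c, 1 ≤ c → c ≤ r + 1 → (∀ j ∈ js, 1 ≤ j) →
    blk r c js ≤ ∏ m ∈ Ico c (r + 1), Hk r (6 * m + 1) * Hk r (6 * m + 5) := by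
  have hpos : ∀ a b, 1 ≤ ∏ m ∈ Ico a b, Hk r (6 * m + 1) * Hk r (6 * m + 5) := fun a b =>
    Finset.one_le_prod' fun m _ => Nat.mul_pos (one_le_Hk _ _) (one_le_Hk _ _)
  induction js with
  | nil => intro c _ _ _; exact hpos _ _
  | cons j js ih =>
    intro c hc hc' hj
    rw [blk]
    by_cases hb : c ≤ r / (j + 1)
    · rw [show Nat.ble c (r / (j + 1)) = true from Nat.ble_eq_true_of_le hb, cond_true]
      have hj1 : 1 ≤ j := hj j (by simp)
      have h1 : r / (j + 1) ≤ r / j := Nat.div_le_div_left (by omega) hj1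
      have h2 : r / j ≤ r := Nat.div_le_self _ _
      rw [← Finset.prod_Ico_consecutive _ (show c ≤ r / (j + 1) from hb) (by omega : r / (j + 1) ≤ r + 1),
        ← Finset.prod_Ico_consecutive _ (by omega : r / (j + 1) ≤ r / j + 1) (by omega : r / j + 1 ≤ r + 1)]
      have h3 := prodI_le hr 14 (r / (j + 1)) (r / j + 1 - r / (j + 1)) (by omega)
      rw [show r / (j + 1) + (r / j + 1 - r / (j + 1)) = r / j + 1 by omega] at h3
      have h4 := ih (r / j + 1) (by omega) (by omega) (fun i hi => hj i (by simp [hi]))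
      refine (Nat.mul_le_mul h3 h4).trans ?_
      exact Nat.le_mul_of_pos_left _ (hpos _ _)
    · rw [show Nat.ble c (r / (j + 1)) = false from ble_false (by omega),
        cond_false]
      exact Nat.zero_le _

lemma blk_le_G {r : ℕ} (hr : r ≤ 105000) : blk r 1 [29, 23, 17, 11, 5] ≤ G r := by
  refine (blk_le hr _ 1 le_rfl (by omega) (by decide)).trans ?_
  refine le_trans ?_ (prod_Hk_le r)
  refine le_trans ?_ (prod_blocks_le r (r + 1))
  rw [Finset.range_eq_Ico]
  refine Finset.prod_le_prod_of_subset_of_one_le' ?_ ?_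
  · exact Finset.Ico_subset_Ico_left (by omega)
  · intro m _ _
    exact Nat.mul_pos (one_le_Hk _ _) (one_le_Hk _ _)

/-- The hypotheses of `step_num` for consecutive pairs, with `g = 0.6931 e`, multiplied by `10 ^ 4`. -/
def chainOK : ℕ × ℕ → List (ℕ × ℕ) → Bool
  | _, [] => true
  | (r, e), (r', e') :: l => decide (r' ≤ 3 * r ∧
      72785 * r' ≤ 6931 * e' + 5 * (6931 * e + 12094 * r) + 138900 ∧
      6932 * (Nat.log2 (r' + 1) + 1) + 84884 * r' ≤ 6 * (6931 * e + 12094 * r) + 125700) &&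
      chainOK (r', e') l

lemma chain_ok : chainOK chain.head! chain.tail = true := by decide +kernel

lemma chain_sound (ht : 89 ≤ t) {X : ℝ} {η : ℂ} (h : Sol t X η) (l : List (ℕ × ℕ)) :
    ∀ a : ℕ × ℕ, (∀ b ∈ l, (2 : ℕ) ^ b.2 ≤ G b.1) → chainOK a l = true →
    lx t a.1 (0.6931 * a.2) < Real.log X → ∀ b ∈ a :: l, lx t b.1 (0.6931 * b.2) < Real.log X := by
  induction l with
  | nil => intro a _ _ h1 b hb; rw [List.mem_singleton] at hb; rw [hb]; exact h1
  | cons c l ih =>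
    intro a hG hok h1 b hb
    obtain ⟨r, e⟩ := a
    obtain ⟨r', e'⟩ := c
    rw [chainOK, Bool.and_eq_true, decide_eq_true_eq] at hok
    obtain ⟨⟨o1, o2, o3⟩, hok⟩ := hok
    rcases List.mem_cons.1 hb with rfl | hb
    · exact h1
    refine ih (r', e') (fun b hb => hG b (List.mem_cons_of_mem _ hb)) hok ?_ b hb
    have g := hG (r', e') (by simp)
    have o2' : (72785 : ℝ) * r' ≤ 6931 * e' + 5 * (6931 * e + 12094 * r) + 138900 := by exact_mod_cast o2
    have o3' : (6932 : ℝ) * (Nat.log2 (r' + 1) + 1) + 84884 * r' ≤ 6 * (6931 * e + 12094 * r) + 125700 := by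
      exact_mod_cast o3
    refine step_num ht h r r' o1 h1 ?_ ?_ ?_
    · have g' : ((2 : ℝ)) ^ e' ≤ G r' := by exact_mod_cast g
      have := Real.log_le_log (by positivity) g'
      rw [Real.log_pow] at this
      have h2 := Real.log_two_gt_d9
      refine le_trans ?_ this
      have : (0 : ℝ) ≤ e' := Nat.cast_nonneg _
      nlinarith
    · linarith
    · have h2 : ((r' : ℝ) + 1) ≤ 2 ^ (Nat.log2 (r' + 1) + 1) := by
        exact_mod_cast (Nat.lt_log2_self (n := r' + 1)).le
      have h3 := Real.log_le_log (by positivity) h2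
      rw [Real.log_pow] at h3
      have h4 := Real.log_two_lt_d9
      have h5 : (((Nat.log2 (r' + 1) + 1 : ℕ)) : ℝ) * Real.log 2 ≤ ((Nat.log2 (r' + 1) + 1 : ℕ)) * 0.6932 :=
        mul_le_mul_of_nonneg_left (by linarith) (Nat.cast_nonneg _)
      push_cast at h3 h5
      have : (0 : ℝ) ≤ r' := Nat.cast_nonneg _
      linarith

lemma lx_mono {r : ℕ} {g g' : ℝ} (h : g ≤ g') : lx t r g ≤ lx t r g' := by
  unfold lx; linarith

/-- The bound for `log X` at the end of the chain. -/
lemma Sol.lx_chain (ht : 89 ≤ t) (ht' : t < 140) {X : ℝ} {η : ℂ} (h : Sol t X η) :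
    lx t 104688 (0.6931 * 42802) < Real.log X := by
  have hG : ∀ b ∈ chain, (2 : ℕ) ^ b.2 ≤ G b.1 := by
    intro b hb
    have h1 := List.all_eq_true.1 chain_blk b hb
    have h2 : ∀ b ∈ chain, b.1 ≤ 105000 := by decide +kernel
    exact (Nat.le_of_ble_eq_true h1).trans (blk_le_G (h2 b hb))
  have e1 : chain = (145, 61) :: chain.tail := rfl
  have g := hG (145, 61) (by rw [e1]; simp)
  have := chain_sound ht h chain.tail (145, 61)
    (fun b hb => hG b (by rw [e1]; exact List.mem_cons_of_mem _ hb)) chain_ok (by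
      refine lt_of_le_of_lt (lx_mono ?_) (h.lx_start ht ht')
      have g' : ((2 : ℝ)) ^ 61 ≤ G 145 := by exact_mod_cast g
      have := Real.log_le_log (by positivity) g'
      rw [Real.log_pow] at this
      have h2 := Real.log_two_gt_d9
      push_cast at this ⊢
      linarith) (104688, 42802) (by rw [← e1]; decide +kernel)
  simpa using this

end Sextic

/-! ### Chebyshev and Stirling estimates -/

namespace Sextic

open Finset
local notation "Λ" => ArithmeticFunction.vonMangoldt

/-- `T n = log n!`. -/
noncomputable def T (n : ℕ) : ℝ := Real.log (n.factorial)

/-- Chebyshev's function at natural numbers. -/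
noncomputable def psiN (n : ℕ) : ℝ := ∑ k ∈ Icc 1 n, Λ k

lemma psiN_nonneg (n : ℕ) : 0 ≤ psiN n := Finset.sum_nonneg fun _ _ => ArithmeticFunction.vonMangoldt_nonneg

/-- The identity `log n! = ∑ Λ(k) ⌊n/k⌋`. -/
lemma T_eq (N n : ℕ) (h : n ≤ N) : T n = ∑ k ∈ Icc 1 N, Λ k * ((n / k : ℕ) : ℝ) := by
  induction n with
  | zero => simp [T]
  | succ n ih =>
    have h1 : T (n + 1) = Real.log ((n + 1 : ℕ) : ℝ) + T n := by
      unfold T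
      rw [Nat.factorial_succ, Nat.cast_mul, Real.log_mul (by positivity) (by positivity)]
    rw [h1, ih (by omega), ← ArithmeticFunction.vonMangoldt_sum (n := n + 1)]
    have h2 : (n + 1).divisors = (Icc 1 N).filter (fun k => k ∣ n + 1) := by
      ext k
      simp only [Nat.mem_divisors, Finset.mem_filter, Finset.mem_Icc]
      constructor
      · rintro ⟨a, _⟩
        exact ⟨⟨Nat.pos_of_dvd_of_pos a (by omega), (Nat.le_of_dvd (by omega) a).trans h⟩, a⟩
      · rintro ⟨_, a⟩; exact ⟨a, by omega⟩
    rw [h2, Finset.sum_filter, ← Finset.sum_add_distrib]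
    apply Finset.sum_congr rfl
    intro k _
    rw [Nat.succ_div]
    split_ifs <;> push_cast <;> ring

lemma T_div (N d : ℕ) : T (N / d) = ∑ n ∈ Icc 1 N, Λ n * ((N / n / d : ℕ) : ℝ) := by
  rw [T_eq N (N / d) (Nat.div_le_self _ _)]
  apply Finset.sum_congr rfl
  intro n _
  rw [Nat.div_div_eq_div_mul, Nat.div_div_eq_div_mul, mul_comm d n]

lemma sum_ge (N M : ℕ) (hM : 0 < M) :
    ∑ n ∈ Icc 1 N, Λ n * (if M ≤ N / n then 1 else 0) = psiN (N / M) := by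
  unfold psiN
  simp only [mul_ite, mul_one, mul_zero]
  rw [← Finset.sum_filter]
  apply Finset.sum_congr _ (fun _ _ => rfl)
  ext n
  simp only [Finset.mem_filter, Finset.mem_Icc]
  constructor
  · rintro ⟨⟨h1, h2⟩, h3⟩
    refine ⟨h1, ?_⟩
    rw [Nat.le_div_iff_mul_le hM]
    rw [Nat.le_div_iff_mul_le (by omega)] at h3
    linarith
  · rintro ⟨h1, h2⟩
    have h4 := h2.trans (Nat.div_le_self _ _)
    refine ⟨⟨h1, h4⟩, ?_⟩
    rw [Nat.le_div_iff_mul_le hM] at h2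
    rw [Nat.le_div_iff_mul_le (by omega)]
    linarith

/-- The logarithm of a bound for a central binomial coefficient. -/
lemma T_sub_le (n : ℕ) (hn : 1 ≤ n) : T n - 2 * T (n / 2) ≤ n * Real.log 2 + Real.log n := by
  have key : n.factorial ≤ 2 ^ n * n * ((n / 2).factorial) ^ 2 := by
    have hev : ∀ k : ℕ, (2 * k).factorial ≤ 2 ^ (2 * k) * (k.factorial) ^ 2 := by
      intro k
      have h1 := Nat.add_choose_mul_factorial_mul_factorial k k
      rw [← two_mul] at h1
      have h2 : (2 * k).choose k ≤ 2 ^ (2 * k) := Nat.choose_le_two_pow _ _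
      calc (2 * k).factorial = (2 * k).choose k * (k.factorial) ^ 2 := by rw [← h1]; ring
        _ ≤ _ := Nat.mul_le_mul_right _ h2
    rcases Nat.even_or_odd' n with ⟨k, rfl | rfl⟩
    · rw [show 2 * k / 2 = k by omega]
      refine (hev k).trans ?_
      apply Nat.mul_le_mul_right
      exact Nat.le_mul_of_pos_right _ (by omega)
    · rw [show (2 * k + 1) / 2 = k by omega, Nat.factorial_succ]
      calc (2 * k + 1) * (2 * k).factorial ≤ (2 * k + 1) * (2 ^ (2 * k) * (k.factorial) ^ 2) :=
            Nat.mul_le_mul_left _ (hev k)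
        _ ≤ (2 * k + 1) * (2 ^ (2 * k + 1) * (k.factorial) ^ 2) := by
            gcongr <;> omega
        _ = _ := by ring
  have key' : ((n.factorial : ℕ) : ℝ) ≤ 2 ^ n * n * ((n / 2).factorial) ^ 2 := by exact_mod_cast key
  have hn' : (0 : ℝ) < n := by exact_mod_cast hn
  have := Real.log_le_log (by positivity) key'
  rw [Real.log_mul (by positivity) (by positivity), Real.log_mul (by positivity) (by positivity),
    Real.log_pow, Real.log_pow] at this
  unfold T
  push_cast at this
  linarith

lemma psiN_sub_le (n : ℕ) (hn : 1 ≤ n) : psiN n - psiN (n / 2) ≤ n * Real.log 2 + Real.log n := by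
  refine le_trans ?_ (T_sub_le n hn)
  rw [T_div n 2, T_eq n n le_rfl, ← sum_ge n 2 (by norm_num), psiN, Finset.mul_sum, ← Finset.sum_sub_distrib,
    ← Finset.sum_sub_distrib]
  apply Finset.sum_le_sum
  intro k hk
  rw [Finset.mem_Icc] at hk
  have h0 : 0 ≤ Λ k := ArithmeticFunction.vonMangoldt_nonneg
  have h1 : 1 ≤ n / k := (Nat.one_le_div_iff (by omega)).2 hk.2
  have h2 : (1 : ℝ) - (if 2 ≤ n / k then 1 else 0) ≤ ((n / k : ℕ) : ℝ) - 2 * ((n / k / 2 : ℕ) : ℝ) := by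
    split_ifs with h
    · have : 2 * (n / k / 2) ≤ n / k := by omega
      have : ((2 * (n / k / 2) : ℕ) : ℝ) ≤ (n / k : ℕ) := by exact_mod_cast this
      push_cast at this ⊢
      linarith
    · have : n / k = 1 := by omega
      rw [this]; norm_num
  nlinarith

/-- Checks `lcm(1, …, m) ^ 10 ≤ 2 ^ (20 m)` for `m = n, n + 1, …`, where `L` is `lcm(1, …, n)` and the
first argument is the number of values to be checked. -/
def lcmCheck : ℕ → ℕ → ℕ → Bool
  | 0, _, _ => true
  | fuel + 1, n, L => Nat.ble (L ^ 10) (2 ^ (20 * n)) && lcmCheck fuel (n + 1) (Nat.lcm L (n + 1))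

lemma lcmCheck_sound (fuel : ℕ) : ∀ n, lcmCheck fuel n (Nat.lcmUpto n) = true → ∀ m, n ≤ m → m < n + fuel →
    (Nat.lcmUpto m) ^ 10 ≤ 2 ^ (20 * m) := by
  induction fuel with
  | zero => intro n _ m h1 h2; omega
  | succ fuel ih =>
    intro n h m h1 h2
    rw [lcmCheck, Bool.and_eq_true] at h
    rcases h1.eq_or_lt with rfl | h1
    · exact Nat.le_of_ble_eq_true h.1
    · refine ih (n + 1) ?_ m h1 (by omega)
      have e : Nat.lcm (Nat.lcmUpto n) (n + 1) = Nat.lcmUpto (n + 1) := by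
        unfold Nat.lcmUpto
        rw [← Finset.insert_Icc_right_eq_Icc_add_one (by omega), Finset.lcm_insert, Nat.lcm_comm]
        rfl
      rw [← e]
      exact h.2

lemma psiN_le_small (n : ℕ) (hn : n < 256) : psiN n ≤ 1.45 * n := by
  have h := lcmCheck_sound 256 0 (by rw [show Nat.lcmUpto 0 = 1 from rfl]; decide +kernel) n (by omega) (by omega)
  have h' : ((Nat.lcmUpto n : ℕ) : ℝ) ^ 10 ≤ 2 ^ (20 * n) := by exact_mod_cast h
  have hp : (0 : ℝ) < (Nat.lcmUpto n : ℕ) := by exact_mod_cast Nat.lcmUpto_pos n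
  have h2 := Real.log_le_log (by positivity) h'
  rw [Real.log_pow, Real.log_pow, ← Chebyshev.psi_eq_log_lcmUpto] at h2
  have h3 : psiN n = Chebyshev.psi n := by
    rw [Chebyshev.psi, psiN, Nat.floor_natCast]
    rfl
  rw [h3]
  have h4 := Real.log_two_lt_d9
  have h5 : (0 : ℝ) ≤ n := Nat.cast_nonneg _
  push_cast at h2
  nlinarith

/-- Chebyshev's upper bound, from `psiN_sub_le` by halving `n`. -/
lemma psiN_le (n : ℕ) : psiN n ≤ 1.45 * n := by
  induction n using Nat.strong_induction_on with
  | _ n ih =>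
    by_cases hn : n < 256
    · exact psiN_le_small n hn
    have h1 := psiN_sub_le n (by omega)
    have h2 := ih (n / 2) (by omega)
    have h3 : ((n / 2 : ℕ) : ℝ) ≤ n / 2 := Nat.cast_div_le
    have h4 := Real.log_two_lt_d9
    have hn' : (256 : ℝ) ≤ n := by exact_mod_cast (not_lt.1 hn)
    have h5 : Real.log n ≤ 8 * Real.log 2 + (n / 256 - 1) := by
      have := Real.log_le_sub_one_of_pos (show (0 : ℝ) < n / 256 by positivity)
      rw [Real.log_div (by positivity) (by norm_num), show (256 : ℝ) = 2 ^ 8 by norm_num, Real.log_pow] at this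
      push_cast at this
      norm_num at this ⊢
      linarith
    nlinarith

lemma card_le_log {p N : ℕ} (hp : 2 ≤ p) :
    ((Icc 1 N).filter (fun j => (N / p ^ j) % 6 = 5)).card ≤ Nat.log p N := by
  have : (Icc 1 N).filter (fun j => (N / p ^ j) % 6 = 5) ⊆ Icc 1 (Nat.log p N) := by
    intro j hj
    rw [Finset.mem_filter, Finset.mem_Icc] at hj
    rw [Finset.mem_Icc]
    refine ⟨hj.1.1, ?_⟩
    by_contra hc
    have := Nat.lt_pow_of_log_lt (by omega) (not_le.1 hc)
    rw [Nat.div_eq_of_lt this] at hj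
    simp at hj
  simpa using Finset.card_le_card this

/-- The sum on the left is `log (G r)` except for the powers of `2` and `3`, which contribute at most
`log (6 r)` each. -/
lemma sum_chi_le (r : ℕ) (hr : 1 ≤ r) :
    ∑ n ∈ Icc 1 (6 * r), Λ n * (if 6 * r / n % 6 = 5 then 1 else 0) ≤
      Real.log (G r) + 2 * Real.log ((6 * r : ℕ) : ℝ) := by
  set N := 6 * r with hN
  have hfib : ∑ n ∈ (Icc 1 N).filter (fun n => IsPrimePow n ∧ N / n % 6 = 5), Λ n ≤
      ∑ p ∈ (range (N + 1)).filter Nat.Prime, (gexp r p : ℝ) * Real.log p := by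
    rw [← Finset.sum_fiberwise_of_maps_to (g := Nat.minFac) (t := (range (N + 1)).filter Nat.Prime)]
    · apply Finset.sum_le_sum
      intro p hp
      rw [Finset.mem_filter] at hp
      have hsub : ((Icc 1 N).filter (fun n => IsPrimePow n ∧ N / n % 6 = 5)).filter (fun n => n.minFac = p) ⊆
          ((Icc 1 N).filter (fun j => (N / p ^ j) % 6 = 5)).image (fun j => p ^ j) := by
        intro n hn
        simp only [Finset.mem_filter, Finset.mem_Icc] at hn
        obtain ⟨⟨⟨h1, h2⟩, hpp, h3⟩, h4⟩ := hn
        rw [isPrimePow_nat_iff] at hpp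
        obtain ⟨q, k, hq, hk, rfl⟩ := hpp
        rw [hq.pow_minFac hk.ne'] at h4
        subst h4
        rw [Finset.mem_image]
        refine ⟨k, ?_, rfl⟩
        rw [Finset.mem_filter, Finset.mem_Icc]
        exact ⟨⟨hk, (Nat.lt_pow_self hq.one_lt).le.trans h2⟩, h3⟩
      calc _ ≤ ∑ n ∈ ((Icc 1 N).filter (fun n => IsPrimePow n ∧ N / n % 6 = 5)).filter (fun n => n.minFac = p),
            Real.log p := by
            apply Finset.sum_le_sum
            intro n hn
            simp only [Finset.mem_filter] at hn
            rw [ArithmeticFunction.vonMangoldt_apply, if_pos hn.1.2.1, hn.2]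
        _ ≤ _ := by
            rw [Finset.sum_const, nsmul_eq_mul]
            apply mul_le_mul_of_nonneg_right _ (Real.log_natCast_nonneg _)
            exact_mod_cast (Finset.card_le_card hsub).trans Finset.card_image_le
    · intro n hn
      simp only [Finset.mem_filter, Finset.mem_Icc] at hn
      obtain ⟨⟨h1, h2⟩, hpp, h3⟩ := hn
      rw [Finset.mem_filter, Finset.mem_range]
      refine ⟨?_, Nat.minFac_prime hpp.one_lt.ne'⟩
      have := Nat.minFac_le (n := n) (by omega)
      omega
  have hlhs : ∑ n ∈ Icc 1 N, Λ n * (if N / n % 6 = 5 then 1 else 0) =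
      ∑ n ∈ (Icc 1 N).filter (fun n => IsPrimePow n ∧ N / n % 6 = 5), Λ n := by
    rw [Finset.sum_filter]
    apply Finset.sum_congr rfl
    intro n _
    rw [ArithmeticFunction.vonMangoldt_apply]
    by_cases h1 : IsPrimePow n <;> by_cases h2 : N / n % 6 = 5 <;> simp [h1, h2]
  rw [hlhs]
  refine hfib.trans ?_
  have hG : Real.log (G r) = ∑ p ∈ (range (N + 1)).filter (fun p => p.Prime ∧ 5 ≤ p), (gexp r p : ℝ) * Real.log p := by
    unfold G
    rw [Nat.cast_prod, Real.log_prod]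
    · apply Finset.sum_congr rfl
      intro p _
      rw [Nat.cast_pow, Real.log_pow]
    · intro p hp
      rw [Finset.mem_filter] at hp
      have := hp.2.1.pos
      positivity
  have hsmall : ∀ p, 2 ≤ p → (gexp r p : ℝ) * Real.log p ≤ Real.log (N : ℝ) := by
    intro p hp
    have h1 : gexp r p ≤ Nat.log p N := card_le_log hp
    have h2 : p ^ gexp r p ≤ N :=
      (Nat.pow_le_pow_right (by omega) h1).trans (Nat.pow_log_le_self p (by omega))
    have h3 : ((p : ℝ)) ^ gexp r p ≤ N := by exact_mod_cast h2
    have hp' : (0 : ℝ) < p := by positivity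
    have := Real.log_le_log (by positivity) h3
    rwa [Real.log_pow] at this
  have hsplit : (range (N + 1)).filter Nat.Prime =
      insert 2 (insert 3 ((range (N + 1)).filter (fun p => p.Prime ∧ 5 ≤ p))) := by
    ext p
    simp only [Finset.mem_filter, Finset.mem_range, Finset.mem_insert]
    constructor
    · rintro ⟨h1, h2⟩
      have := h2.two_le
      by_cases h4 : p = 4
      · subst h4; exact absurd h2 (by norm_num)
      · by_cases p = 2
        · tauto
        · by_cases p = 3
          · tauto
          · right; right; exact ⟨h1, h2, by omega⟩
    · rintro (rfl | rfl | h)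
      · exact ⟨by omega, Nat.prime_two⟩
      · exact ⟨by omega, Nat.prime_three⟩
      · exact ⟨h.1, h.2.1⟩
  rw [hsplit, Finset.sum_insert (by simp), Finset.sum_insert (by simp), hG]
  have := hsmall 2 le_rfl
  have := hsmall 3 (by norm_num)
  linarith

lemma T_le (n : ℕ) (hn : 1 ≤ n) : T n ≤ n * Real.log n - n + 1 + Real.log n := by
  induction n, hn using Nat.le_induction with
  | base => simp [T]
  | succ n hn ih =>
    have h1 : T (n + 1) = Real.log ((n + 1 : ℕ) : ℝ) + T n := by
      unfold T
      rw [Nat.factorial_succ, Nat.cast_mul, Real.log_mul (by positivity) (by positivity)]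
    have hn' : (0 : ℝ) < n := by exact_mod_cast hn
    have h2 := Real.log_le_sub_one_of_pos (show (0 : ℝ) < n / (n + 1) by positivity)
    rw [Real.log_div hn'.ne' (by positivity)] at h2
    have h3 : (n : ℝ) / (n + 1) - 1 = -1 / (n + 1) := by field_simp; ring
    rw [h3] at h2
    have h4 : ((n : ℝ) + 1) * (Real.log n - Real.log (n + 1)) ≤ -1 := by
      have := mul_le_mul_of_nonneg_left h2 (show (0 : ℝ) ≤ n + 1 by positivity)
      rwa [mul_div_cancel₀ _ (by positivity)] at this
    rw [h1]
    push_cast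
    linarith

lemma le_T (n : ℕ) (hn : 1 ≤ n) : n * Real.log n - n ≤ T n := by
  have h := Real.pow_div_factorial_le_exp (n : ℝ) (Nat.cast_nonneg n) n
  have hn' : (0 : ℝ) < n := by exact_mod_cast hn
  have := Real.log_le_log (by positivity) h
  rw [Real.log_exp, Real.log_div (by positivity) (by positivity), Real.log_pow] at this
  unfold T; linarith

lemma xlogx_sub {a b : ℝ} (ha : 1 ≤ a) (hab : a ≤ b) :
    0 ≤ (b * Real.log b - b) - (a * Real.log a - a) ∧
    (b * Real.log b - b) - (a * Real.log a - a) ≤ (b - a) * Real.log b := by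
  have ha0 : 0 < a := by linarith
  have hb0 : 0 < b := by linarith
  have h1 := Real.log_le_sub_one_of_pos (show 0 < b / a by positivity)
  have h2 := Real.log_le_sub_one_of_pos (show 0 < a / b by positivity)
  rw [Real.log_div hb0.ne' ha0.ne'] at h1
  rw [Real.log_div ha0.ne' hb0.ne'] at h2
  have h3 : a * (Real.log b - Real.log a) ≤ b - a := by
    have := mul_le_mul_of_nonneg_left h1 ha0.le
    rwa [mul_sub a (b / a), mul_div_cancel₀ _ ha0.ne', mul_one] at this
  have h4 : b * (Real.log a - Real.log b) ≤ a - b := by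
    have := mul_le_mul_of_nonneg_left h2 hb0.le
    rwa [mul_sub b (a / b), mul_div_cancel₀ _ hb0.ne', mul_one] at this
  have h5 := Real.log_nonneg ha
  have h6 := Real.log_le_log ha0 hab
  constructor
  · nlinarith
  · nlinarith

/-- Stirling's formula for `log ⌊N/d⌋!` in terms of the real number `N / d`. -/
lemma T_approx (N d : ℕ) (hd : 1 ≤ d) (hN : d ≤ N) :
    |T (N / d) - ((N : ℝ) / d * Real.log ((N : ℝ) / d) - (N : ℝ) / d)| ≤ 1 + Real.log ((N : ℝ) / d) := by
  have hn : 1 ≤ N / d := (Nat.one_le_div_iff (by omega)).2 hN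
  have hd' : (0 : ℝ) < d := by exact_mod_cast hd
  have h1 : ((N / d : ℕ) : ℝ) ≤ (N : ℝ) / d := Nat.cast_div_le
  have h2 : (N : ℝ) / d ≤ ((N / d : ℕ) : ℝ) + 1 := by
    rw [div_le_iff₀ hd']
    have h := Nat.lt_mul_div_succ N (show 0 < d by omega)
    have : (N : ℝ) ≤ d * ((N / d : ℕ) + 1) := by exact_mod_cast h.le
    linarith
  have hn' : (1 : ℝ) ≤ ((N / d : ℕ) : ℝ) := by exact_mod_cast hn
  obtain ⟨a, b⟩ := xlogx_sub hn' h1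
  have c := T_le _ hn
  have e := le_T _ hn
  have h6 := Real.log_le_log (by linarith) h1
  have h7 := Real.log_nonneg (hn'.trans h1)
  rw [abs_le]
  constructor
  · nlinarith
  · nlinarith

end Sextic

/-! ### A combination of floor functions below the indicator of `m ≡ 5 (mod 6)` -/

namespace Sextic

open Finset

/-- The pairs `(d, c)` with `c > 0`, in units of `1/100`, of a combination `∑ c ⌊m/d⌋` lying below the
indicator of `m ≡ 5 (mod 6)` up to the steps in `stepL`. The coefficients come from linear
programming. -/
def posL : List (ℕ × ℕ) :=
  [(5, 100), (11, 100), (17, 100), (23, 100), (29, 100), (30, 100), (41, 100), (44, 1), (47,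
   100), (50, 100), (53, 53), (54, 13), (59, 98), (60, 2), (66, 100), (71, 55), (72, 45), (75,
   100), (80, 50), (84, 37), (86, 1), (89, 100), (101, 99), (102, 96), (103, 3), (104, 2), (107,
   29), (110, 88), (111, 3), (114, 89), (116, 28), (120, 3), (125, 100), (128, 3), (129, 1),
   (131, 41), (132, 9), (133, 33), (134, 11), (135, 6), (138, 91), (140, 4), (149, 100), (154,
   46), (156, 4), (158, 25), (165, 166), (166, 3), (170, 77), (173, 18), (174, 133), (176, 44),
   (180, 48), (184, 17), (186, 9), (189, 11), (191, 37), (193, 16), (198, 10), (201, 32), (203,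
   5), (204, 5), (215, 1), (216, 8), (220, 35), (221, 5), (222, 13), (223, 22), (227, 56), (230,
   52), (234, 49), (237, 24), (238, 5), (239, 44), (240, 1), (242, 103), (243, 5), (244, 6),
   (246, 130), (249, 19), (252, 10), (255, 95), (257, 100), (259, 2), (260, 20), (265, 50),
   (270, 44), (272, 14), (273, 5), (274, 46), (275, 78), (277, 24), (278, 3), (279, 23), (280,
   13), (281, 3), (282, 51), (285, 37), (288, 104), (290, 101), (294, 33), (297, 87)]

/-- The pairs `(d, -c)` with `c < 0`, in units of `1/100`, of the same combination as in `posL`. -/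
def negL : List (ℕ × ℕ) :=
  [(6, 100), (10, 100), (15, 100), (22, 100), (25, 100), (33, 100), (34, 100), (43, 1), (46,
   100), (51, 100), (55, 166), (58, 100), (69, 100), (77, 46), (78, 5), (79, 24), (81, 11), (82,
   100), (83, 6), (85, 95), (87, 100), (88, 1), (94, 100), (106, 53), (108, 66), (115, 18),
   (118, 98), (119, 5), (121, 100), (123, 100), (126, 3), (136, 1), (137, 46), (139, 3), (141,
   40), (142, 7), (143, 35), (144, 63), (145, 100), (150, 100), (159, 53), (160, 50), (162, 1),
   (168, 37), (171, 71), (175, 4), (177, 55), (178, 100), (181, 13), (185, 3), (187, 1), (188,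
   12), (192, 7), (194, 36), (199, 29), (200, 50), (202, 42), (205, 37), (206, 3), (208, 2),
   (213, 55), (214, 29), (228, 83), (229, 1), (231, 2), (232, 28), (235, 91), (241, 3), (245,
   30), (248, 12), (250, 100), (251, 32), (253, 113), (256, 3), (258, 61), (261, 41), (262, 31),
   (263, 11), (264, 55), (266, 33), (267, 129), (268, 11), (276, 8), (284, 74), (286, 4), (287,
   62), (289, 45), (291, 12), (293, 13), (295, 11), (296, 56), (298, 100), (299, 13), (300, 5)]

/-- The steps `(s, e)` of the error term in units of `1/100`: the combination may exceed the indicator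
at `m` by the sum of the `e` with `s ≤ m`. -/
def stepL : List (ℕ × ℕ) :=
  [(135, 3), (303, 64), (530, 70), (909, 36), (1537, 37), (2235, 76), (11635, 228), (22951,
   108), (32768, 3934)]

/-- The base of the packed representation. Packing makes it possible to compare sequences of length
`2 ^ 15` through arithmetic of large natural numbers. -/
def B : ℕ := 2 ^ 26

/-- The sequence `u a, u (a + 1), …, u (a + n - 1)` packed as digits in base `B`. -/
def pk (u : ℕ → ℕ) (a n : ℕ) : ℕ := ∑ i ∈ range n, u (a + i) * B ^ i

/-- Closed form of the packed sequence `m ↦ m / d` for `m ≤ n`. -/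
def pkF (n d : ℕ) : ℕ :=
  (n / d * B ^ (n + 1) - B ^ d * ((B ^ (d * (n / d)) - 1) / (B ^ d - 1))) / (B - 1)

/-- Closed form of the packed indicator of `s ≤ m`, for `m ≤ n`. -/
def pkS (n s : ℕ) : ℕ := B ^ s * ((B ^ (n + 1 - s) - 1) / (B - 1))

/-- Weighted sum of packed sequences. -/
def pkL (f : ℕ → ℕ) : List (ℕ × ℕ) → ℕ
  | [] => 0
  | a :: l => a.2 * f a.1 + pkL f l

/-- Digitwise comparison of the packed sequences `U` and `V` of length `2 ^ f`, with `100` added to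
the digits of `V` whose index is `5` modulo `6`. -/
def chk : ℕ → ℕ → ℕ → ℕ → Bool
  | 0, a, U, V => Nat.ble U (V + bif Nat.beq (a % 6) 5 then 100 else 0)
  | f + 1, a, U, V => chk f a (U % B ^ 2 ^ f) (V % B ^ 2 ^ f) &&
      chk f (a + 2 ^ f) (U / B ^ 2 ^ f) (V / B ^ 2 ^ f)

set_option maxRecDepth 100000 in
/-- The combination of floor functions satisfies the desired inequality for all `m < 2 ^ 15`. -/
lemma chk_true : chk 15 0 (pkL (pkF 32767) posL) (pkL (pkF 32767) negL + pkL (pkS 32767) stepL) = true := by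
  decide +kernel

end Sextic

/-! ### Soundness of the packed computation -/

namespace Sextic

open Finset

lemma two_le_B : 2 ≤ B := by norm_num [B]

lemma pk_add (u : ℕ → ℕ) (a m n : ℕ) : pk u a (m + n) = pk u a m + B ^ m * pk u (a + m) n := by
  unfold pk
  rw [Finset.sum_range_add, Finset.mul_sum]
  congr 1
  apply Finset.sum_congr rfl
  intro i _
  rw [add_assoc a m i, pow_add]; ring

lemma pk_lt (u : ℕ → ℕ) (a n : ℕ) (h : ∀ i < n, u (a + i) < B) : pk u a n < B ^ n := by
  induction n with
  | zero => simp [pk]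
  | succ n ih =>
    have h1 := ih fun i hi => h i (by omega)
    have h2 := h n (by omega)
    have h3 : pk u a (n + 1) = pk u a n + u (a + n) * B ^ n := by
      unfold pk; rw [Finset.sum_range_succ]
    rw [h3, pow_succ]
    have h4 : (u (a + n) + 1) * B ^ n ≤ B * B ^ n := Nat.mul_le_mul_right _ h2
    nlinarith

lemma chk_sound (u v : ℕ → ℕ) (f : ℕ) : ∀ a, (∀ i < 2 ^ f, u (a + i) < B) →
    (∀ i < 2 ^ f, v (a + i) < B) → chk f a (pk u a (2 ^ f)) (pk v a (2 ^ f)) = true →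
    ∀ i < 2 ^ f, u (a + i) ≤ v (a + i) + if (a + i) % 6 = 5 then 100 else 0 := by
  induction f with
  | zero =>
    intro a _ _ h i hi
    have hi0 : i = 0 := by simpa using hi
    subst hi0
    simp only [chk, pk, pow_zero, Finset.sum_range_one, mul_one, Nat.ble_eq] at h
    by_cases h6 : a % 6 = 5
    · simpa [h6] using h
    · have hb : Nat.beq (a % 6) 5 = false := by
        rw [← Bool.not_eq_true, Nat.beq_eq]; exact h6
      simpa [h6, hb] using h
  | succ f ih =>
    intro a hu hv h i hi
    have h2 : (2 : ℕ) ^ (f + 1) = 2 ^ f + 2 ^ f := by rw [pow_succ]; ring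
    rw [h2] at hu hv h hi
    have hu1 := pk_lt u a (2 ^ f) fun i hi => hu i (by omega)
    have hv1 := pk_lt v a (2 ^ f) fun i hi => hv i (by omega)
    have hB : 0 < B ^ 2 ^ f := Nat.pow_pos (by norm_num [B])
    simp only [chk, pk_add, Nat.add_mul_mod_self_left, Nat.add_mul_div_left _ _ hB,
      Nat.mod_eq_of_lt hu1, Nat.mod_eq_of_lt hv1, Nat.div_eq_of_lt hu1, Nat.div_eq_of_lt hv1,
      zero_add, Bool.and_eq_true] at h
    rcases lt_or_ge i (2 ^ f) with hi' | hi'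
    · exact ih a (fun i hi => hu i (by omega)) (fun i hi => hv i (by omega)) h.1 i hi'
    · have := ih (a + 2 ^ f)
        (fun i hi => by have := hu (2 ^ f + i) (by omega); rwa [← add_assoc] at this)
        (fun i hi => by have := hv (2 ^ f + i) (by omega); rwa [← add_assoc] at this)
        h.2 (i - 2 ^ f) (by omega)
      rwa [show a + 2 ^ f + (i - 2 ^ f) = a + i by omega] at this

/-- The sum of the powers `B ^ m` over the positive multiples `m ≤ n` of `d`, as a geometric series. -/
lemma geo_floor (d n : ℕ) (hd : 0 < d) :
    ∑ m ∈ range (n + 1), (if 0 < m ∧ d ∣ m then B ^ m else 0) =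
      B ^ d * ((B ^ (d * (n / d)) - 1) / (B ^ d - 1)) := by
  have hBd : 2 ≤ B ^ d := two_le_B.trans (Nat.le_self_pow hd.ne' B)
  rw [pow_mul, ← Nat.geomSum_eq hBd]
  induction n with
  | zero => simp
  | succ n ih =>
    rw [Finset.sum_range_succ, ih, Nat.succ_div]
    split_ifs with h1 h2 h2
    · rw [Finset.sum_range_succ, mul_add]
      congr 1
      have : n + 1 = d * (n / d + 1) := by
        have h3 := Nat.mul_div_cancel' h1.2
        rw [Nat.succ_div, if_pos h2] at h3
        exact h3.symm
      rw [← pow_mul, ← pow_add]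
      congr 1
      rw [this]; ring
    · exact absurd h1.2 h2
    · exact absurd ⟨by omega, h2⟩ h1
    · simp

lemma pkF_eq (d n : ℕ) (hd : 0 < d) : pkF n d = pk (fun m => m / d) 0 (n + 1) := by
  have key : (B - 1) * pk (fun m => m / d) 0 (n + 1) +
      ∑ m ∈ range (n + 1), (if 0 < m ∧ d ∣ m then B ^ m else 0) = n / d * B ^ (n + 1) := by
    obtain ⟨b, hb⟩ : ∃ b, B = b + 1 := ⟨B - 1, by norm_num [B]⟩
    unfold pk
    rw [hb]
    simp only [Nat.add_sub_cancel, zero_add]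
    induction n with
    | zero => simp
    | succ n ih =>
      rw [Finset.sum_range_succ, mul_add, Finset.sum_range_succ _ (n + 1)]
      have h1 : (n + 1) / d = n / d + if d ∣ n + 1 then 1 else 0 := Nat.succ_div
      have h2 : (if 0 < n + 1 ∧ d ∣ n + 1 then (b + 1) ^ (n + 1) else 0) =
          (if d ∣ n + 1 then 1 else 0) * (b + 1) ^ (n + 1) := by
        split_ifs <;> simp_all
      rw [h1, h2, pow_succ _ (n + 1)]
      nlinarith
  rw [geo_floor d n hd] at key
  unfold pkF
  rw [← key, Nat.add_sub_cancel, Nat.mul_div_cancel_left _ (by norm_num [B])]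

lemma pkS_eq (s n : ℕ) (hs : s ≤ n + 1) :
    pkS n s = pk (fun m => if s ≤ m then 1 else 0) 0 (n + 1) := by
  unfold pkS
  rw [← Nat.geomSum_eq two_le_B]
  conv_rhs => rw [show n + 1 = s + (n + 1 - s) by omega, pk_add]
  have h0 : pk (fun m => if s ≤ m then 1 else 0) 0 s = 0 := by
    unfold pk
    apply Finset.sum_eq_zero
    intro i hi
    rw [Finset.mem_range] at hi
    simp [hi]
  rw [h0, zero_add]
  congr 1
  unfold pk
  apply Finset.sum_congr rfl
  intro i _
  simp

/-- The weighted sum `∑ c * f d m` over the pairs `(d, c)` of a list. -/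
def wsum (f : ℕ → ℕ → ℕ) (L : List (ℕ × ℕ)) (m : ℕ) : ℕ := (L.map fun a => a.2 * f a.1 m).sum

lemma pkL_eq (g : ℕ → ℕ) (f : ℕ → ℕ → ℕ) (n : ℕ) (L : List (ℕ × ℕ))
    (h : ∀ a ∈ L, g a.1 = pk (f a.1) 0 n) : pkL g L = pk (wsum f L) 0 n := by
  induction L with
  | nil => simp [pkL, pk, wsum]
  | cons a l ih =>
    rw [pkL, ih fun b hb => h b (List.mem_cons_of_mem _ hb), h a List.mem_cons_self]
    unfold pk wsum
    rw [Finset.mul_sum, ← Finset.sum_add_distrib]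
    apply Finset.sum_congr rfl
    intro i _
    simp only [List.map_cons, List.sum_cons]
    ring

lemma wsum_le (f : ℕ → ℕ → ℕ) (L : List (ℕ × ℕ)) (m K : ℕ) (h : ∀ a ∈ L, f a.1 m ≤ K) :
    wsum f L m ≤ (L.map Prod.snd).sum * K := by
  induction L with
  | nil => simp [wsum]
  | cons a l ih =>
    have h1 := ih fun b hb => h b (List.mem_cons_of_mem _ hb)
    have h2 := Nat.mul_le_mul_left a.2 (h a List.mem_cons_self)
    unfold wsum at h1 ⊢
    simp only [List.map_cons, List.sum_cons]
    rw [add_mul]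
    omega

/-- `m ↦ m / d`. -/
abbrev flo (d m : ℕ) : ℕ := m / d

/-- The indicator of `s ≤ m`. -/
abbrev ind (s m : ℕ) : ℕ := if s ≤ m then 1 else 0

/-- The packed comparison implies the inequality of sequences, provided that no digit overflows
(`hps`, `hns`). -/
lemma packed_check (n f : ℕ) (hnf : n + 1 = 2 ^ f) (P Q S : List (ℕ × ℕ))
    (hp : ∀ a ∈ P, 5 ≤ a.1) (hn : ∀ a ∈ Q, 5 ≤ a.1) (hs : ∀ a ∈ S, a.1 ≤ n + 1)
    (hps : (P.map Prod.snd).sum * (n / 5) < B)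
    (hns : (Q.map Prod.snd).sum * (n / 5) + (S.map Prod.snd).sum < B)
    (hc : chk f 0 (pkL (pkF n) P) (pkL (pkF n) Q + pkL (pkS n) S) = true) (m : ℕ) (hm : m ≤ n) :
    wsum flo P m ≤ wsum flo Q m + wsum ind S m + if m % 6 = 5 then 100 else 0 := by
  have e1 := pkL_eq (pkF n) flo (n + 1) P fun a ha => pkF_eq _ _ (by have := hp a ha; omega)
  have e2 := pkL_eq (pkF n) flo (n + 1) Q fun a ha => pkF_eq _ _ (by have := hn a ha; omega)
  have e3 := pkL_eq (pkS n) ind (n + 1) S fun a ha => pkS_eq _ _ (hs a ha)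
  have e4 : pk (wsum flo Q) 0 (n + 1) + pk (wsum ind S) 0 (n + 1) =
      pk (fun m => wsum flo Q m + wsum ind S m) 0 (n + 1) := by
    unfold pk; rw [← Finset.sum_add_distrib]
    exact Finset.sum_congr rfl fun _ _ => by ring
  rw [e1, e2, e3, e4, hnf] at hc
  have hfl : ∀ L : List (ℕ × ℕ), (∀ a ∈ L, 5 ≤ a.1) → ∀ i < n + 1,
      wsum flo L i ≤ (L.map Prod.snd).sum * (n / 5) := by
    intro L hL i hi
    apply wsum_le
    intro a ha
    exact (Nat.div_le_div_left (hL a ha) (by norm_num)).trans (Nat.div_le_div_right (by omega))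
  have hin : ∀ i, wsum ind S i ≤ (S.map Prod.snd).sum := by
    intro i
    have := wsum_le ind S i 1 fun a _ => by unfold ind; split_ifs <;> simp
    simpa using this
  have := chk_sound _ _ f 0 ?_ ?_ hc m (by omega)
  · simpa using this
  · intro i hi
    rw [zero_add]
    exact (hfl P hp i (by omega)).trans_lt hps
  · intro i hi
    rw [zero_add]
    have h1 := hfl Q hn i (by omega)
    have h2 := hin i
    show wsum flo Q i + wsum ind S i < B
    omega

lemma small_m (m : ℕ) (hm : m ≤ 32767) :
    wsum flo posL m ≤ wsum flo negL m + wsum ind stepL m + if m % 6 = 5 then 100 else 0 :=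
  packed_check 32767 15 (by norm_num) posL negL stepL (by decide +kernel) (by decide +kernel)
    (by decide +kernel) (by decide +kernel) (by decide +kernel) chk_true m hm

end Sextic

/-! ### The pointwise inequality and its consequence for `log (G r)` -/

namespace Sextic

open Finset
local notation "Λ" => ArithmeticFunction.vonMangoldt

/-- The real weighted sum `∑ c * g d` over the pairs `(d, c)` of a list. -/
noncomputable def rs (L : List (ℕ × ℕ)) (g : ℕ → ℝ) : ℝ := (L.map fun a => (a.2 : ℝ) * g a.1).sum

lemma rs_nil (g : ℕ → ℝ) : rs [] g = 0 := rfl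

lemma rs_cons (a : ℕ × ℕ) (L : List (ℕ × ℕ)) (g : ℕ → ℝ) :
    rs (a :: L) g = a.2 * g a.1 + rs L g := by simp [rs]

lemma rs_le (L : List (ℕ × ℕ)) (g g' : ℕ → ℝ) (h : ∀ a ∈ L, g a.1 ≤ g' a.1) : rs L g ≤ rs L g' := by
  induction L with
  | nil => simp [rs_nil]
  | cons a l ih =>
    rw [rs_cons, rs_cons]
    have h1 := ih fun b hb => h b (List.mem_cons_of_mem _ hb)
    have h2 := mul_le_mul_of_nonneg_left (h a List.mem_cons_self) (Nat.cast_nonneg (α := ℝ) a.2)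
    linarith

lemma rs_congr (L : List (ℕ × ℕ)) (g g' : ℕ → ℝ) (h : ∀ a ∈ L, g a.1 = g' a.1) : rs L g = rs L g' :=
  le_antisymm (rs_le L g g' fun a ha => (h a ha).le) (rs_le L g' g fun a ha => (h a ha).ge)

lemma rs_lin (L : List (ℕ × ℕ)) (g g' : ℕ → ℝ) (u v : ℝ) :
    rs L (fun d => u * g d + v * g' d) = u * rs L g + v * rs L g' := by
  induction L with
  | nil => simp [rs_nil]
  | cons a l ih => simp only [rs_cons, ih]; ring

lemma rs_mul (L : List (ℕ × ℕ)) (g : ℕ → ℝ) (u : ℝ) : rs L (fun d => u * g d) = u * rs L g := by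
  have := rs_lin L g g u 0
  simpa using this

lemma rs_sum (L : List (ℕ × ℕ)) (s : Finset ℕ) (w : ℕ → ℝ) (F : ℕ → ℕ → ℝ) :
    rs L (fun d => ∑ n ∈ s, w n * F n d) = ∑ n ∈ s, w n * rs L (F n) := by
  induction L with
  | nil => simp [rs_nil]
  | cons a l ih =>
    simp only [rs_cons, ih]
    rw [Finset.mul_sum, ← Finset.sum_add_distrib]
    exact Finset.sum_congr rfl fun _ _ => by ring

lemma rs_cast (f : ℕ → ℕ → ℕ) (L : List (ℕ × ℕ)) (m : ℕ) :
    ((wsum f L m : ℕ) : ℝ) = rs L fun d => ((f d m : ℕ) : ℝ) := by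
  induction L with
  | nil => simp [rs_nil, wsum]
  | cons a l ih =>
    rw [rs_cons, ← ih]
    simp [wsum]

/-- The total weight of a list. -/
def wt (L : List (ℕ × ℕ)) : ℕ := (L.map Prod.snd).sum

lemma rs_one (L : List (ℕ × ℕ)) : rs L (fun _ => 1) = wt L := by
  induction L with
  | nil => simp [rs_nil, wt]
  | cons a l ih => rw [rs_cons, ih]; simp [wt]

lemma posL_ge : ∀ a ∈ posL, 5 ≤ a.1 ∧ a.1 ≤ 300 := by decide +kernel
lemma negL_ge : ∀ a ∈ negL, 5 ≤ a.1 ∧ a.1 ≤ 300 := by decide +kernel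
lemma stepL_ge : ∀ a ∈ stepL, 1 ≤ a.1 ∧ a.1 ≤ 32768 := by decide +kernel
lemma wt_pos : wt posL = 4621 := by decide +kernel
lemma wt_neg : wt negL = 4556 := by decide +kernel
lemma wt_step : wt stepL = 4556 := by decide +kernel

/-- The mean `∑ c / d` of the combination of floor functions; it is nonnegative and tiny. -/
noncomputable def zz : ℝ := rs posL (fun d => 1 / (d : ℝ)) - rs negL (fun d => 1 / (d : ℝ))

lemma rs_inv (M : ℕ) (L : List (ℕ × ℕ)) (h : ∀ a ∈ L, 0 < a.1 ∧ a.1 ∣ M) :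
    (M : ℝ) * rs L (fun d => 1 / (d : ℝ)) = ((wsum (fun d m => m / d) L M : ℕ) : ℝ) := by
  rw [rs_cast]
  rw [← rs_mul]
  apply rs_congr
  intro a ha
  have h1 := (h a ha).1
  rw [Nat.cast_div (h a ha).2 (by positivity)]
  ring

/-- Bounds for a sum of unit fractions by clearing the common denominator `M`. -/
lemma inv_sum_bounds (M : ℕ) (hM : 0 < M) (P Q : List (ℕ × ℕ)) (hP : ∀ a ∈ P, 0 < a.1 ∧ a.1 ∣ M)
    (hQ : ∀ a ∈ Q, 0 < a.1 ∧ a.1 ∣ M)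
    (h1 : wsum (fun d m => m / d) Q M ≤ wsum (fun d m => m / d) P M)
    (h2 : 1000 * wsum (fun d m => m / d) P M ≤ 1000 * wsum (fun d m => m / d) Q M + M) :
    0 ≤ rs P (fun d => 1 / (d : ℝ)) - rs Q (fun d => 1 / (d : ℝ)) ∧
      rs P (fun d => 1 / (d : ℝ)) - rs Q (fun d => 1 / (d : ℝ)) ≤ 0.001 := by
  have eP := rs_inv M P hP
  have eQ := rs_inv M Q hQ
  have h1' : ((wsum (fun d m => m / d) Q M : ℕ) : ℝ) ≤ ((wsum (fun d m => m / d) P M : ℕ) : ℝ) :=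
    Nat.cast_le.2 h1
  have h2' : 1000 * ((wsum (fun d m => m / d) P M : ℕ) : ℝ) ≤
      1000 * ((wsum (fun d m => m / d) Q M : ℕ) : ℝ) + (M : ℝ) := by
    exact_mod_cast h2
  rw [← eP, ← eQ] at h1' h2'
  have hM : (0 : ℝ) < M := Nat.cast_pos.2 hM
  constructor
  · have := le_of_mul_le_mul_left h1' hM
    linarith
  · have : (M : ℝ) * (1000 * rs P (fun d => 1 / (d : ℝ))) ≤
        M * (1000 * rs Q (fun d => 1 / (d : ℝ)) + 1) := by linarith
    have := le_of_mul_le_mul_left this hM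
    linarith

lemma zz_bounds : 0 ≤ zz ∧ zz ≤ 0.001 :=
  inv_sum_bounds (Nat.factorial 300) (Nat.factorial_pos _) posL negL
    (fun a ha => ⟨by have := posL_ge a ha; omega,
      Nat.dvd_factorial (by have := posL_ge a ha; omega) (posL_ge a ha).2⟩)
    (fun a ha => ⟨by have := negL_ge a ha; omega,
      Nat.dvd_factorial (by have := negL_ge a ha; omega) (negL_ge a ha).2⟩)
    (by decide +kernel) (by decide +kernel)

/-- The combination of floor functions, corrected by its mean slope `zz`, is at most the indicator of
`m ≡ 5 (mod 6)` plus the error steps, in units of `1/100`. For `m ≥ 2 ^ 15` the total of the steps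
is at least what the fractional parts can contribute. -/
lemma pointwise (m : ℕ) : rs posL (fun d => ((m / d : ℕ) : ℝ)) - rs negL (fun d => ((m / d : ℕ) : ℝ))
    - zz * m ≤ 100 * (if m % 6 = 5 then 1 else 0) + rs stepL (fun s => if s ≤ m then 1 else 0) := by
  rcases Nat.lt_or_ge m 32768 with hm | hm
  · have h := small_m m (by omega)
    have h' : ((wsum flo posL m : ℕ) : ℝ) ≤ (wsum flo negL m : ℕ) + (wsum ind stepL m : ℕ) +
        100 * (if m % 6 = 5 then 1 else 0) := by
      split_ifs at h ⊢ <;> · rw [mul_comm]; exact_mod_cast h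
    rw [rs_cast, rs_cast, rs_cast] at h'
    have h3 : rs stepL (fun d => ((ind d m : ℕ) : ℝ)) = rs stepL (fun s => if s ≤ m then 1 else 0) :=
      rs_congr _ _ _ fun a _ => by unfold ind; push_cast; rfl
    rw [h3] at h'
    have : 0 ≤ zz * m := mul_nonneg zz_bounds.1 (Nat.cast_nonneg _)
    simp only [flo] at h'
    linarith
  · have h3 : rs stepL (fun s => if s ≤ m then (1 : ℝ) else 0) = 4556 := by
      rw [rs_congr stepL _ (fun _ => 1), rs_one, wt_step]
      · norm_num
      · intro a ha
        rw [if_pos ((stepL_ge a ha).2.trans hm)]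
    have h1 : rs posL (fun d => ((m / d : ℕ) : ℝ)) ≤ m * rs posL (fun d => 1 / (d : ℝ)) := by
      rw [← rs_mul]
      apply rs_le
      intro a ha
      have := @Nat.cast_div_le ℝ _ _ _ m a.1
      calc _ ≤ _ := this
        _ = _ := by ring
    have h2 : m * rs negL (fun d => 1 / (d : ℝ)) - 4556 ≤ rs negL (fun d => ((m / d : ℕ) : ℝ)) := by
      have := rs_lin negL (fun d => 1 / (d : ℝ)) (fun _ => 1) m (-1)
      rw [rs_one, wt_neg] at this
      have h4 : rs negL (fun d => m * (1 / (d : ℝ)) + -1 * 1) ≤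
          rs negL (fun d => ((m / d : ℕ) : ℝ)) := by
        apply rs_le
        intro a ha
        have h5 := negL_ge a ha
        have h6 : (m : ℝ) / a.1 < ((m / a.1 : ℕ) : ℝ) + 1 := by
          rw [div_lt_iff₀ (by exact_mod_cast (by omega : 0 < a.1))]
          exact_mod_cast (Nat.lt_mul_of_div_lt (Nat.lt_succ_self _) (by omega) : m < (m / a.1 + 1) * a.1)
        rw [mul_one_div]; linarith
      rw [this] at h4
      push_cast at h4
      linarith
    rw [h3]
    have h5 : (0 : ℝ) ≤ 100 * (if m % 6 = 5 then 1 else 0) := by split_ifs <;> norm_num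
    unfold zz
    nlinarith

lemma sum_T (L : List (ℕ × ℕ)) (N : ℕ) : rs L (fun d => T (N / d)) =
    ∑ n ∈ Icc 1 N, Λ n * rs L (fun d => ((N / n / d : ℕ) : ℝ)) := by
  simp only [T_div]
  rw [rs_sum]

/-- `pointwise` for `m = ⌊6r/n⌋`, summed over `n` with weights `Λ(n)`. -/
lemma T_comb (r : ℕ) (hr : 1 ≤ r) :
    rs posL (fun d => T (6 * r / d)) - rs negL (fun d => T (6 * r / d)) - zz * T (6 * r) ≤
    100 * (Real.log (G r) + 2 * Real.log ((6 * r : ℕ) : ℝ)) + rs stepL (fun s => psiN (6 * r / s)) := by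
  have h1 := sum_chi_le r hr
  have h2 : rs stepL (fun s => psiN (6 * r / s)) =
      ∑ n ∈ Icc 1 (6 * r), Λ n * rs stepL (fun s => if s ≤ 6 * r / n then 1 else 0) := by
    rw [← rs_sum]
    exact rs_congr _ _ _ fun a ha => (sum_ge (6 * r) a.1 (stepL_ge a ha).1).symm
  have h3 := T_eq (6 * r) (6 * r) le_rfl
  rw [sum_T, sum_T, h2, h3]
  refine le_trans ?_ (add_le_add_left (mul_le_mul_of_nonneg_left h1 (by norm_num)) _)
  rw [Finset.mul_sum, Finset.mul_sum, ← Finset.sum_sub_distrib, ← Finset.sum_sub_distrib,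
    ← Finset.sum_add_distrib]
  apply Finset.sum_le_sum
  intro n _
  have h4 := mul_le_mul_of_nonneg_left (pointwise (6 * r / n))
    (ArithmeticFunction.vonMangoldt_nonneg (n := n))
  calc _ = Λ n * (rs posL (fun d => ((6 * r / n / d : ℕ) : ℝ)) -
        rs negL (fun d => ((6 * r / n / d : ℕ) : ℝ)) - zz * ((6 * r / n : ℕ) : ℝ)) := by ring
    _ ≤ _ := h4
    _ = _ := by ring

/-- Binary search for the integer `l'` with `2 ^ l' ≤ X < 2 ^ (l' + 1)`, knowing that
`2 ^ l ≤ X < 2 ^ (l + 2 ^ k)`. -/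
def lgS : ℕ → ℕ → ℕ → ℕ
  | 0, l, _ => l
  | k + 1, l, X => bif Nat.ble (2 ^ (l + 2 ^ k)) X then lgS k (l + 2 ^ k) X else lgS k l X

lemma lgS_spec (X k : ℕ) : ∀ l, 2 ^ l ≤ X → X < 2 ^ (l + 2 ^ k) →
    2 ^ lgS k l X ≤ X ∧ X < 2 ^ (lgS k l X + 1) := by
  induction k with
  | zero => intro l h1 h2; simpa [lgS] using ⟨h1, h2⟩
  | succ k ih =>
    intro l h1 h2
    rw [lgS]
    cases hb : Nat.ble (2 ^ (l + 2 ^ k)) X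
    · rw [cond_false]
      apply ih l h1
      by_contra hc
      rw [not_lt, ← Nat.ble_eq, hb] at hc
      simp at hc
    · rw [cond_true]
      rw [Nat.ble_eq] at hb
      apply ih _ hb
      rwa [add_assoc, ← two_mul, ← pow_succ']

/-- The exponent used to approximate logarithms: `⌊2 ^ 14 * log₂ d⌋`, for `1 ≤ d < 2 ^ 16`. -/
def lg (d : ℕ) : ℕ := lgS 18 0 (d ^ 2 ^ 14)

lemma lg_bounds (d : ℕ) (hd : 1 ≤ d) (hd2 : d < 2 ^ 16) : lg d * Real.log 2 ≤ 2 ^ 14 * Real.log d ∧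
    2 ^ 14 * Real.log d ≤ (lg d + 1) * Real.log 2 := by
  unfold lg
  have e : (2 : ℕ) ^ 18 = 16 * 2 ^ 14 := by norm_num
  have hE : (2 : ℕ) ^ 14 ≠ 0 := by norm_num
  have h3 : (2 : ℝ) ^ 14 = ((2 ^ 14 : ℕ) : ℝ) := by norm_num
  have hX := lgS_spec (d ^ 2 ^ 14) 18 0
  rw [zero_add, e, pow_mul] at hX
  rw [h3]
  generalize (2 : ℕ) ^ 14 = E at *
  obtain ⟨h1, h2⟩ := hX (by simpa using Nat.one_le_pow _ _ hd) (Nat.pow_lt_pow_left hd2 hE)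
  generalize lgS 18 0 (d ^ E) = l at *
  have hd' : (0 : ℝ) < d := by exact_mod_cast hd
  have h1' : (2 : ℝ) ^ l ≤ (d : ℝ) ^ E := by exact_mod_cast h1
  have h2' : (d : ℝ) ^ E ≤ (2 : ℝ) ^ (l + 1) := by exact_mod_cast h2.le
  have e1 := Real.log_le_log (by positivity) h1'
  have e2 := Real.log_le_log (by positivity) h2'
  rw [Real.log_pow, Real.log_pow] at e1 e2
  push_cast at e1 e2
  exact ⟨e1, e2⟩

/-- A lower bound for `∑ c (log₂ d) / d` over `negL` minus the same sum over `posL`, with the terms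
multiplied by `2 ^ 14 * 10 ^ 6` and rounded in the unfavourable direction. -/
lemma mainV_check : wsum (fun d m => m * (lg d + 1) / d + 1) posL (10 ^ 6) + 107590 * 10 ^ 6 ≤
    wsum (fun d m => m * lg d / d) negL (10 ^ 6) := by decide +kernel

end Sextic

/-! ### The asymptotic lower bound for `log (G r)` -/

namespace Sextic

open Finset

/-- The weight function `log d / d` of the main term. -/
noncomputable abbrev ld (d : ℕ) : ℝ := Real.log d / d

/-- The coefficient of the main term, in units of `1/100`. -/
lemma mainV : 4.551 ≤ rs negL ld - rs posL ld := by
  have hl := Real.log_two_gt_d9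
  have hl0 : 0 < Real.log 2 := by linarith
  have hc : ((wsum (fun d m => m * (lg d + 1) / d + 1) posL (10 ^ 6) : ℕ) : ℝ) + 107590 * 10 ^ 6 ≤
    ((wsum (fun d m => m * lg d / d) negL (10 ^ 6) : ℕ) : ℝ) := by exact_mod_cast mainV_check
  rw [rs_cast, rs_cast] at hc
  obtain ⟨M, hM⟩ : ∃ M : ℕ, M = 10 ^ 6 := ⟨_, rfl⟩
  rw [← hM] at hc
  have hP : (M : ℝ) * 2 ^ 14 * rs posL ld ≤
      Real.log 2 * rs posL (fun d => ((M * (lg d + 1) / d + 1 : ℕ) : ℝ)) := by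
    rw [← rs_mul, ← rs_mul]
    apply rs_le
    intro a ha
    have h1 := posL_ge a ha
    have hd : (0 : ℝ) < a.1 := by exact_mod_cast (by omega : 0 < a.1)
    have h2 := (lg_bounds a.1 (by omega) (by omega)).2
    have h3 : (M : ℝ) * (lg a.1 + 1) / a.1 ≤ ((M * (lg a.1 + 1) / a.1 + 1 : ℕ) : ℝ) := by
      rw [div_le_iff₀ hd]
      exact_mod_cast (Nat.lt_mul_of_div_lt (Nat.lt_succ_self (M * (lg a.1 + 1) / a.1)) (by omega)).le
    have h4 : (M : ℝ) * (2 ^ 14 * Real.log a.1) / a.1 ≤ M * ((lg a.1 + 1) * Real.log 2) / a.1 := by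
      gcongr
    calc (M : ℝ) * 2 ^ 14 * ld a.1 = (M : ℝ) * (2 ^ 14 * Real.log a.1) / a.1 := by unfold ld; ring
      _ ≤ _ := h4
      _ = Real.log 2 * ((M : ℝ) * (lg a.1 + 1) / a.1) := by ring
      _ ≤ _ := mul_le_mul_of_nonneg_left h3 hl0.le
  have hQ : Real.log 2 * rs negL (fun d => ((M * lg d / d : ℕ) : ℝ)) ≤
      (M : ℝ) * 2 ^ 14 * rs negL ld := by
    rw [← rs_mul, ← rs_mul]
    apply rs_le
    intro a ha
    have h1 := negL_ge a ha
    have hd : (0 : ℝ) < a.1 := by exact_mod_cast (by omega : 0 < a.1)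
    have h2 := (lg_bounds a.1 (by omega) (by omega)).1
    have h3 : ((M * lg a.1 / a.1 : ℕ) : ℝ) ≤ ((M * lg a.1 : ℕ) : ℝ) / a.1 := Nat.cast_div_le
    have h4 : M * (lg a.1 * Real.log 2) / a.1 ≤ (M : ℝ) * (2 ^ 14 * Real.log a.1) / a.1 := by
      gcongr
    push_cast at h3
    calc _ ≤ Real.log 2 * ((M : ℝ) * lg a.1 / a.1) := mul_le_mul_of_nonneg_left h3 hl0.le
      _ = M * (lg a.1 * Real.log 2) / a.1 := by ring
      _ ≤ _ := h4
      _ = (M : ℝ) * 2 ^ 14 * ld a.1 := by unfold ld; ring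
  have h5 := mul_le_mul_of_nonneg_left hc hl0.le
  have hM' : (M : ℝ) = 10 ^ 6 := by rw [hM]; norm_num
  rw [hM'] at hP hQ
  nlinarith

/-- Stirling's formula summed over a list. -/
lemma T_main (N : ℕ) (hN : 300 ≤ N) (L : List (ℕ × ℕ)) (hL : ∀ a ∈ L, 5 ≤ a.1 ∧ a.1 ≤ 300) :
    |rs L (fun d => T (N / d)) - (N * (Real.log N - 1) * rs L (fun d => 1 / (d : ℝ)) - N * rs L ld)|
      ≤ wt L * (1 + Real.log N) := by
  have hN' : (0 : ℝ) < N := by exact_mod_cast (by omega : 0 < N)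
  have e1 : (N * (Real.log N - 1) * rs L (fun d => 1 / (d : ℝ)) - N * rs L ld) =
      rs L (fun d => N * (Real.log N - 1) * (1 / (d : ℝ)) + (-N) * ld d) := by
    rw [rs_lin]; ring
  have hpt : ∀ a ∈ L, |T (N / a.1) - (N * (Real.log N - 1) * (1 / (a.1 : ℝ)) + (-N) * ld a.1)| ≤
      1 + Real.log N := by
    intro a ha
    have h1 := hL a ha
    have hd : (1 : ℝ) ≤ a.1 := by exact_mod_cast (by omega : 1 ≤ a.1)
    have h2 := T_approx N a.1 (by omega) (by omega)
    rw [Real.log_div (by positivity) (by positivity)] at h2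
    have h3 := Real.log_nonneg hd
    calc _ = |T (N / a.1) - ((N : ℝ) / a.1 * (Real.log N - Real.log a.1) - (N : ℝ) / a.1)| := by
          congr 2; unfold ld; ring
      _ ≤ _ := h2
      _ ≤ _ := by linarith
  rw [e1, abs_le]
  have e2 : rs L (fun _ => 1 + Real.log N) = wt L * (1 + Real.log N) := by
    have := rs_mul L (fun _ => 1) (1 + Real.log N)
    rw [rs_one] at this
    simp only [mul_one] at this
    rw [this]; ring
  rw [← e2]
  have s1 := rs_lin L (fun d => N * (Real.log N - 1) * (1 / (d : ℝ)) + (-N) * ld d)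
    (fun _ => 1 + Real.log N) 1 1
  have s2 := rs_lin L (fun d => T (N / d)) (fun _ => 1 + Real.log N) 1 1
  have b1 : rs L (fun d => T (N / d)) ≤ _ := rs_le L _ (fun d => 1 * (N * (Real.log N - 1) * (1 / (d : ℝ)) + (-N) * ld d)
    + 1 * (1 + Real.log N)) fun a ha => by have := (abs_le.1 (hpt a ha)).2; linarith
  have b2 := rs_le L (fun d => N * (Real.log N - 1) * (1 / (d : ℝ)) + (-N) * ld d)
    (fun d => 1 * T (N / d) + 1 * (1 + Real.log N)) fun a ha => by
      have := (abs_le.1 (hpt a ha)).1; linarith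
  rw [s1] at b1
  rw [s2] at b2
  constructor <;> linarith

lemma step_inv : rs stepL (fun s => 1 / (s : ℝ)) ≤ 0.6076 := by
  simp only [stepL, rs_cons, rs_nil]; norm_num

/-- A lower bound of Chebyshev type for `G r`: the main term is `6 * 0.04551 r`, from which the error
steps, bounded by `psiN_le`, are subtracted. -/
lemma log_G_ge (r : ℕ) (hr : 104688 ≤ r) : 0.2055 * r ≤ Real.log (G r) := by
  have h := T_comb r (by omega)
  have hP := (abs_le.1 (T_main (6 * r) (by omega) posL posL_ge)).1
  have hQ := (abs_le.1 (T_main (6 * r) (by omega) negL negL_ge)).2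
  have hT := T_le (6 * r) (by omega)
  have hz := zz_bounds
  have hS : rs stepL (fun s => psiN (6 * r / s)) ≤ 1.45 * ((6 * r : ℕ) : ℝ) * 0.6076 := by
    refine le_trans ?_ (mul_le_mul_of_nonneg_left step_inv (by positivity))
    rw [← rs_mul]
    apply rs_le
    intro a ha
    have h1 := psiN_le (6 * r / a.1)
    have h2 : ((6 * r / a.1 : ℕ) : ℝ) ≤ ((6 * r : ℕ) : ℝ) / a.1 := Nat.cast_div_le
    rw [mul_one_div, mul_div_assoc]
    linarith
  rw [wt_pos] at hP
  rw [wt_neg] at hQ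
  have hlog : Real.log ((6 * r : ℕ) : ℝ) ≤ 12.8632 + ((6 * r : ℕ) : ℝ) / 628128 + 0.0001 := by
    have hr' : (0 : ℝ) < ((6 * r : ℕ) : ℝ) := by exact_mod_cast (by omega : 0 < 6 * r)
    have h1 := Real.log_le_sub_one_of_pos (x := ((6 * r : ℕ) : ℝ) / 628128) (by positivity)
    rw [Real.log_div (by positivity) (by norm_num)] at h1
    have h2 : Real.log 628128 ≤ Real.log (2 ^ 20) := Real.log_le_log (by norm_num) (by norm_num)
    rw [Real.log_pow] at h2
    have h3 := Real.log_two_lt_d9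
    push_cast at h1 h2 ⊢
    linarith
  have hv := mainV
  have hN : (628128 : ℝ) ≤ ((6 * r : ℕ) : ℝ) := by exact_mod_cast (by omega : 628128 ≤ 6 * r)
  have hNr : ((6 * r : ℕ) : ℝ) = 6 * r := by push_cast; ring
  generalize ((6 * r : ℕ) : ℝ) = N at *
  have hl0 : 0 ≤ Real.log N := Real.log_nonneg (by linarith)
  have hzT : zz * T (6 * r) ≤ zz * (N * Real.log N - N) + 0.001 * (1 + Real.log N) := by
    have := mul_le_mul_of_nonneg_left hT hz.1
    have := mul_le_mul_of_nonneg_right hz.2 (by linarith : 0 ≤ 1 + Real.log N)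
    nlinarith
  have hNv := mul_le_mul_of_nonneg_left hv (by linarith : 0 ≤ N)
  push_cast at hP hQ
  have ez : zz = rs posL (fun d => 1 / (d : ℝ)) - rs negL (fun d => 1 / (d : ℝ)) := rfl
  rw [ez] at h hzT
  nlinarith

end Sextic

/-! ### Conclusion -/

namespace Sextic

open Finset
variable {t : ℤ}

/-- For `t < 140` and `r ≥ 104688` the bound `log_G_ge` allows every step from `r` to `r + 1`. -/
lemma no_sol (ht : 89 ≤ t) {X : ℝ} {η : ℂ} (h : Sol t X η) : False := by
  rcases lt_or_ge t 140 with ht' | ht'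
  swap
  · exact no_sol_large ht' h
  have key : ∀ r : ℕ, 104688 ≤ r → lx t r (0.2055 * r) < Real.log X := by
    intro r hr
    induction r, hr using Nat.le_induction with
    | base => exact (lx_mono (by norm_num)).trans_lt (h.lx_chain ht ht')
    | succ r hr ih =>
      have hr' : (104688 : ℝ) ≤ r := by exact_mod_cast hr
      have hlog : Real.log ((r + 1 : ℕ) + 1) ≤ ((r : ℝ) + 2) / 2 ^ 17 + 17 * Real.log 2 - 1 := by
        have h1 := Real.log_le_sub_one_of_pos (x := ((r : ℝ) + 2) / 2 ^ 17) (by positivity)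
        rw [Real.log_div (by positivity) (by norm_num), Real.log_pow] at h1
        push_cast at h1 ⊢
        rw [show (r : ℝ) + 1 + 1 = r + 2 by ring]
        linarith
      have hl := Real.log_two_lt_d9
      refine step_num ht h r (r + 1) (by omega) ih (log_G_ge (r + 1) (by omega)) ?_ ?_
      · push_cast; linarith
      · push_cast at hlog ⊢; linarith
  obtain ⟨c1, -, -, c4, -, -⟩ := log_consts
  have hL := log_sh_ge ht
  obtain ⟨n, hn⟩ := exists_nat_gt (Real.log X)
  have hk := key (n + 104688) (by omega)
  have hn0 : (0 : ℝ) ≤ n := Nat.cast_nonneg n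
  unfold lx at hk
  push_cast at hk
  have : ((n : ℝ) + 104688) * 1.2 ≤ (n + 104688) * (Real.log (sh t) - Real.log 27) := by
    gcongr; linarith
  linarith

lemma small_norm (x y : ℤ) (hg : Int.gcd x y = 1) (hy : 0 < y) (h1 : -y < 2 * x) (h2 : x ≤ y)
    (h : x ^ 2 + x * y + y ^ 2 < 13) :
    (x, y) = (0, 1) ∨ (x, y) = (1, 1) ∨ (x, y) = (1, 2) ∨ (x, y) = (-1, 3) := by
  have hy4 : y < 5 := by nlinarith [sq_nonneg (2 * x + y)]
  have hx1 : -2 ≤ x := by omega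
  have hx2 : x ≤ 4 := by omega
  interval_cases y <;> interval_cases x <;> simp_all

end Sextic

/-- For `t ≥ 89`, every primitive solution of `|F_t^{(6)}(x,y)| ≤ 120t+323` with `y > 0`,
`-y/2 < x ≤ y` is one of `(0,1), (1,1), (1,2), (-1,3)`; moreover the solution set is
stable under the orbit map `(x,y) ↦ (-y,x+y), (-x-y,x), (-x,-y), (y,-x-y), (x+y,-x)`. -/
theorem simplest_sextic_thue_inequality_primitive (t : ℤ) (ht : 89 ≤ t) :
    (∀ x y : ℤ, |F6 t x y| ≤ 120 * t + 323 → Int.gcd x y = 1 → 0 < y → -y < 2 * x → x ≤ y →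
      ((x, y) = (0, 1) ∨ (x, y) = (1, 1) ∨ (x, y) = (1, 2) ∨ (x, y) = (-1, 3))) ∧
    (∀ x y : ℤ, |F6 t x y| ≤ 120 * t + 323 →
      (|F6 t (-y) (x + y)| ≤ 120 * t + 323 ∧ |F6 t (-x - y) x| ≤ 120 * t + 323 ∧
        |F6 t (-x) (-y)| ≤ 120 * t + 323 ∧ |F6 t y (-x - y)| ≤ 120 * t + 323 ∧
        |F6 t (x + y) (-x)| ≤ 120 * t + 323)) := by
  constructor
  · intro x y hF hg hy h1 h2
    rcases lt_or_ge (x ^ 2 + x * y + y ^ 2) 13 with h | h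
    · exact Sextic.small_norm x y hg hy h1 h2 h
    · obtain ⟨X, η, hs⟩ := Sextic.exists_sol ht x y hF hg h
      exact (Sextic.no_sol ht hs).elim
  · intro x y hF
    have e1 : F6 t (-y) (x + y) = F6 t x y := by unfold F6; ring
    have e2 : F6 t (-x - y) x = F6 t x y := by unfold F6; ring
    have e3 : F6 t (-x) (-y) = F6 t x y := by unfold F6; ring
    have e4 : F6 t y (-x - y) = F6 t x y := by unfold F6; ring
    have e5 : F6 t (x + y) (-x) = F6 t x y := by unfold F6; ring
    rw [e1, e2, e3, e4, e5]
    exact ⟨hF, hF, hF, hF, hF⟩
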